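/- arXiv:1810.00915 — 2 statements merged into one kernel-verified Lean document; each statement's English description precedes it below -/
import Mathlib

section
/- Let n and k be integers with k ≥ 30 and n ≥ 2k+5. Then any non-trivial intersecting family F of k-element subsets of [n] satisfies δ_1(F) ≤ C(n-2, k-2) - C(n-k-2, k-2). -/
namespace HMdeg
open Finset

/-- the k-subsets of `Fin n` -/
def P (n k : ℕ) : Finset (Finset (Fin n)) := (univ : Finset (Fin n)).powersetCard k

variable {n : ℕ}

lemma mem_P {k : ℕ} {A : Finset (Fin n)} : A ∈ P n k ↔ A.card = k := by
  simp [P, mem_powersetCard]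

def Dn (f : Finset (Fin n) → ℝ) (B : Finset (Fin n)) : ℝ := ∑ x ∈ Bᶜ, f (insert x B)
def Up (f : Finset (Fin n) → ℝ) (A : Finset (Fin n)) : ℝ := ∑ x ∈ A, f (A.erase x)
def ip (k : ℕ) (f g : Finset (Fin n) → ℝ) : ℝ := ∑ A ∈ P n k, f A * g A
def Kb (k : ℕ) (f g : Finset (Fin n) → ℝ) : ℝ :=
  ∑ A ∈ P n k, ∑ B ∈ P n k, if Disjoint A B then f A * g B else 0

lemma pair_sum (k : ℕ) (φ : Finset (Fin n) → Fin n → ℝ) :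
    ∑ A ∈ P n (k+1), ∑ x ∈ A, φ A x = ∑ B ∈ P n k, ∑ x ∈ Bᶜ, φ (insert x B) x := by
  rw [sum_sigma', sum_sigma']
  refine sum_bij' (fun z _ => ⟨z.1.erase z.2, z.2⟩) (fun z _ => ⟨insert z.2 z.1, z.2⟩) ?_ ?_ ?_ ?_ ?_
  · rintro ⟨A, x⟩ h
    simp only [mem_sigma, mem_P, mem_compl] at h ⊢
    exact ⟨by rw [card_erase_of_mem h.2]; omega, by simp⟩
  · rintro ⟨A, x⟩ h
    simp only [mem_sigma, mem_P, mem_compl] at h ⊢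
    exact ⟨by rw [card_insert_of_notMem h.2]; omega, by simp⟩
  · rintro ⟨A, x⟩ h
    simp only [mem_sigma, mem_P, mem_compl] at h ⊢
    rw [insert_erase h.2]
  · rintro ⟨A, x⟩ h
    simp only [mem_sigma, mem_P, mem_compl] at h ⊢
    rw [erase_insert h.2]
  · rintro ⟨A, x⟩ h
    simp only [mem_sigma, mem_P, mem_compl] at h ⊢
    rw [insert_erase h.2]

lemma adj (k : ℕ) (g h : Finset (Fin n) → ℝ) : ip (k+1) (Up g) h = ip k g (Dn h) := by
  unfold ip Up Dn
  simp only [sum_mul, mul_sum]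
  rw [pair_sum k (fun A x => g (A.erase x) * h A)]
  refine sum_congr rfl fun B _ => sum_congr rfl fun x hx => ?_
  rw [erase_insert (by simpa using hx)]

lemma ip_comm (k : ℕ) (f g : Finset (Fin n) → ℝ) : ip k f g = ip k g f := by
  unfold ip; exact sum_congr rfl fun _ _ => mul_comm _ _

lemma ip_congr (k : ℕ) {f f' g g' : Finset (Fin n) → ℝ} (h : ∀ A ∈ P n k, f A = f' A)
    (h' : ∀ A ∈ P n k, g A = g' A) : ip k f g = ip k f' g' := by
  unfold ip; exact sum_congr rfl fun A hA => by rw [h A hA, h' A hA]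

lemma Kb_congr (k : ℕ) {f f' g g' : Finset (Fin n) → ℝ} (h : ∀ A ∈ P n k, f A = f' A)
    (h' : ∀ A ∈ P n k, g A = g' A) : Kb k f g = Kb k f' g' := by
  unfold Kb
  exact sum_congr rfl fun A hA => sum_congr rfl fun B hB => by rw [h A hA, h' B hB]

lemma Kb_comm (k : ℕ) (f g : Finset (Fin n) → ℝ) : Kb k f g = Kb k g f := by
  unfold Kb
  rw [sum_comm]
  refine sum_congr rfl fun A _ => sum_congr rfl fun B _ => ?_
  simp only [disjoint_comm, mul_comm]

lemma comm_rel (k : ℕ) (f : Finset (Fin n) → ℝ) (A : Finset (Fin n)) (hA : A.card = k) :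
    Dn (Up f) A = Up (Dn f) A + ((n:ℝ) - 2 * k) * f A := by
  have h1 : Dn (Up f) A = ∑ x ∈ Aᶜ, (f A + ∑ y ∈ A, f (insert x (A.erase y))) := by
    unfold Dn Up
    refine sum_congr rfl fun x hx => ?_
    have hx' : x ∉ A := by simpa using hx
    rw [sum_insert hx', erase_insert hx']
    congr 1
    refine sum_congr rfl fun y hy => ?_
    rw [erase_insert_of_ne (by rintro rfl; exact hx' hy)]
  have h2 : Up (Dn f) A = ∑ y ∈ A, (f A + ∑ x ∈ Aᶜ, f (insert x (A.erase y))) := by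
    unfold Dn Up
    refine sum_congr rfl fun y hy => ?_
    show ∑ x ∈ (A.erase y)ᶜ, f (insert x (A.erase y)) = _
    rw [compl_erase, sum_insert (by simpa using hy), insert_erase hy]
  rw [h1, h2, sum_add_distrib, sum_add_distrib, sum_comm (s := A)]
  simp only [sum_const, card_compl, Fintype.card_fin, nsmul_eq_mul, hA]
  have : k ≤ n := by rw [← hA]; simpa using card_le_univ A
  rw [Nat.cast_sub this]; ring

lemma Kb_Up (k : ℕ) (hk : 2 * k + 1 ≤ n) (f g : Finset (Fin n) → ℝ) :
    Kb (k+1) (Up f) (Up g) = ((n:ℝ) - 2*k - 1) * (n - 2*k) * Kb k f g := by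
  have e1 : Kb (k+1) (Up f) (Up g) = ∑ A ∈ P n k, ∑ B ∈ P n k, ∑ x ∈ Aᶜ, ∑ y ∈ Bᶜ,
      if Disjoint (insert x A) (insert y B) then f A * g B else 0 := by
    unfold Kb
    have : ∀ A : Finset (Fin n), ∑ B ∈ P n (k+1), (if Disjoint A B then Up f A * Up g B else 0)
        = ∑ x ∈ A, ∑ B ∈ P n k, ∑ y ∈ Bᶜ,
          if Disjoint A (insert y B) then f (A.erase x) * g B else 0 := by
      intro A
      have h : ∀ x, ∑ B ∈ P n k, ∑ y ∈ Bᶜ,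
          (if Disjoint A (insert y B) then f (A.erase x) * g B else 0) = 
          ∑ B ∈ P n (k+1), ∑ y ∈ B, if Disjoint A B then f (A.erase x) * g (B.erase y) else 0 := by
        intro x
        rw [pair_sum k (fun B y => if Disjoint A B then f (A.erase x) * g (B.erase y) else 0)]
        refine sum_congr rfl fun B _ => sum_congr rfl fun y hy => ?_
        rw [erase_insert (by simpa using hy)]
      simp only [h]
      rw [sum_comm]
      refine sum_congr rfl fun B _ => ?_
      by_cases hd : Disjoint A B
      · simp only [hd, if_true]
        unfold Up
        rw [sum_mul_sum]
      · simp [hd]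
    simp only [this]
    rw [pair_sum k (fun A x => ∑ B ∈ P n k, ∑ y ∈ Bᶜ,
          if Disjoint A (insert y B) then f (A.erase x) * g B else 0)]
    refine sum_congr rfl fun A _ => ?_
    rw [sum_comm]
    refine sum_congr rfl fun B _ => sum_congr rfl fun x hx => sum_congr rfl fun y hy => ?_
    rw [erase_insert (by simpa using hx)]
  rw [e1]
  unfold Kb
  rw [mul_sum]
  refine sum_congr rfl fun A hA => ?_
  rw [mul_sum]
  refine sum_congr rfl fun B hB => ?_
  rw [mem_P] at hA hB
  by_cases hd : Disjoint A B
  · simp only [hd, if_true]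
    have hc : (A ∪ B)ᶜ.card = n - 2 * k := by
      rw [card_compl, card_union_of_disjoint hd, Fintype.card_fin]; omega
    have e2 : ∀ x ∈ Aᶜ, (∑ y ∈ Bᶜ, if Disjoint (insert x A) (insert y B) then f A * g B else 0)
        = if x ∈ (A ∪ B)ᶜ then ((n:ℝ) - 2*k - 1) * (f A * g B) else 0 := by
      intro x hx
      by_cases hxB : x ∈ B
      · simp [hxB]
      · have hx' : x ∈ (A ∪ B)ᶜ := by simp at hx; simp [hx, hxB]
        rw [if_pos hx', ← sum_filter]
        have : (Bᶜ.filter fun y => Disjoint (insert x A) (insert y B)) = ((A ∪ B)ᶜ).erase x := by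
          ext y
          simp only [mem_filter, mem_compl, disjoint_insert_left, disjoint_insert_right, mem_insert,
            mem_erase, mem_union]
          grind
        rw [this, sum_const, card_erase_of_mem hx', hc, nsmul_eq_mul,
          Nat.cast_sub (by omega), Nat.cast_sub (by omega)]
        push_cast; ring
    rw [sum_congr rfl e2, ← sum_filter]
    have : (Aᶜ.filter fun x => x ∈ (A ∪ B)ᶜ) = (A ∪ B)ᶜ := by
      ext x; simp
    rw [this, sum_const, hc, nsmul_eq_mul, Nat.cast_sub (by omega)]
    push_cast; ring
  · simp only [hd, if_false, mul_zero]
    refine sum_eq_zero fun x _ => sum_eq_zero fun y _ => ?_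
    rw [if_neg]
    intro h
    exact hd (h.mono (subset_insert _ _) (subset_insert _ _))

/-- orthogonal decomposition -/
lemma decomp (k : ℕ) (f : Finset (Fin n) → ℝ) : ∃ g h : Finset (Fin n) → ℝ,
    (∀ A, f A = h A + Up g A) ∧ ∀ B ∈ P n k, Dn h B = 0 := by
  classical
  let T : ((Finset (Fin n)) → ℝ) →ₗ[ℝ] EuclideanSpace ℝ (P n (k+1)) :=
    { toFun := fun g => WithLp.toLp 2 fun A => Up g A.1
      map_add' := by
        intro a b; ext A; simp [Up, sum_add_distrib]
      map_smul' := by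
        intro c a; ext A; simp [Up, mul_sum] }
  obtain ⟨y, hy, z, hz, hyz⟩ := (LinearMap.range T).exists_add_mem_mem_orthogonal
    (WithLp.toLp 2 fun A => f A.1 : EuclideanSpace ℝ (P n (k+1)))
  obtain ⟨g, rfl⟩ := hy
  refine ⟨g, fun A => f A - Up g A, fun A => by ring, fun B hB => ?_⟩
  have hz' : ∀ A : P n (k+1), z A = f A.1 - Up g A.1 := by
    intro A
    have := congrArg (fun v : EuclideanSpace ℝ (P n (k+1)) => v A) hyz
    simp [T] at this
    linarith
  let e : Finset (Fin n) → ℝ := fun C => if C = B then 1 else 0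
  have h0 := hz (T e) ⟨e, rfl⟩
  have h1 : ip (k+1) (Up e) (fun A => f A - Up g A) = 0 := by
    rw [← h0]
    unfold ip
    rw [← sum_coe_sort]
    simp only [PiLp.inner_apply, RCLike.inner_apply, conj_trivial]
    refine sum_congr rfl fun A _ => ?_
    rw [hz' A]
    simp [T, mul_comm]
  rw [adj] at h1
  unfold ip at h1
  simpa [e, hB] using h1

/-- weights -/
def Wt (k : ℕ) (h : Finset (Fin n) → ℝ) (S : Finset (Fin n)) : ℝ :=
  ∑ A ∈ P n k, if S ⊆ A then h A else 0

lemma Wt_rec (k : ℕ) (h : Finset (Fin n) → ℝ) (S : Finset (Fin n)) :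
    ∑ x ∈ Sᶜ, Wt k h (insert x S) = ((k:ℝ) - S.card) * Wt k h S := by
  unfold Wt
  rw [sum_comm, mul_sum]
  refine sum_congr rfl fun A hA => ?_
  rw [mem_P] at hA
  by_cases hS : S ⊆ A
  · rw [if_pos hS, ← sum_filter]
    have : (Sᶜ.filter fun x => insert x S ⊆ A) = A \ S := by
      ext x; simp only [mem_filter, mem_compl, insert_subset_iff, mem_sdiff]; tauto
    rw [this, sum_const, nsmul_eq_mul, card_sdiff_of_subset hS, Nat.cast_sub (card_le_card hS), hA]
  · rw [if_neg hS, mul_zero]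
    refine sum_eq_zero fun x _ => ?_
    rw [if_neg]; intro h'; exact hS ((subset_insert _ _).trans h')

lemma Wt_top (k : ℕ) (h : Finset (Fin n) → ℝ) (S : Finset (Fin n)) (hS : S.card = k) :
    Wt k h S = h S := by
  unfold Wt
  rw [sum_eq_single S]
  · simp
  · intro A hA hne
    rw [mem_P] at hA
    rw [if_neg]; intro hs
    exact hne (eq_of_subset_of_card_le hs (by omega)).symm
  · intro h'; exact absurd (mem_P.2 hS) h'

lemma Wt_zero (k : ℕ) (h : Finset (Fin n) → ℝ) (hD : ∀ B ∈ P n k, Dn h B = 0) :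
    ∀ (m : ℕ) (S : Finset (Fin n)), S.card + m = k → Wt (k+1) h S = 0 := by
  intro m
  induction m with
  | zero =>
    intro S hS
    have h1 := Wt_rec (k+1) h S
    have h2 : ∑ x ∈ Sᶜ, Wt (k+1) h (insert x S) = Dn h S := by
      unfold Dn
      refine sum_congr rfl fun x hx => Wt_top _ _ _ ?_
      rw [card_insert_of_notMem (by simpa using hx)]; omega
    rw [h2, hD S (mem_P.2 (by omega))] at h1
    have : ((k + 1 : ℕ):ℝ) - S.card = 1 := by
      have : S.card = k := by omega
      rw [this]; push_cast; ring
    rw [this] at h1; linarith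
  | succ m ih =>
    intro S hS
    have h1 := Wt_rec (k+1) h S
    have h2 : ∑ x ∈ Sᶜ, Wt (k+1) h (insert x S) = 0 := by
      refine sum_eq_zero fun x hx => ih _ ?_
      rw [card_insert_of_notMem (by simpa using hx)]; omega
    rw [h2] at h1
    have : ((k + 1 : ℕ):ℝ) - S.card ≠ 0 := by
      have : (k:ℝ) = S.card + (m + 1) := by exact_mod_cast hS.symm
      push_cast; rw [this]
      have : (0:ℝ) ≤ m := Nat.cast_nonneg m
      intro h; linarith
    rcases mul_eq_zero.1 h1.symm with h | h
    · exact absurd h this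
    · exact h

lemma Kb_ker (k : ℕ) (h f : Finset (Fin n) → ℝ) (hD : ∀ B ∈ P n k, Dn h B = 0) :
    Kb (k+1) f h = (-1)^(k+1) * ip (k+1) f h := by
  unfold Kb ip
  rw [mul_sum]
  refine sum_congr rfl fun B hB => ?_
  rw [mem_P] at hB
  have key : ∑ A ∈ P n (k+1), (if Disjoint B A then h A else 0) = (-1)^(k+1) * h B := by
    have h1 : ∀ A : Finset (Fin n), (if Disjoint B A then h A else 0) =
        ∑ S ∈ B.powerset, (-1:ℝ)^S.card * if S ⊆ A then h A else 0 := by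
      intro A
      have h2 : ∑ S ∈ B.powerset, (-1:ℝ)^S.card * (if S ⊆ A then h A else 0) =
          ∑ S ∈ (B ∩ A).powerset, (-1:ℝ)^S.card * h A := by
        rw [← sum_subset (powerset_mono.2 (inter_subset_left : B ∩ A ⊆ B))]
        · refine sum_congr rfl fun S hS => ?_
          rw [if_pos ((mem_powerset.1 hS).trans inter_subset_right)]
        · intro S hS hS'
          rw [if_neg, mul_zero]
          intro h; exact hS' (mem_powerset.2 (subset_inter (mem_powerset.1 hS) h))
      rw [h2, ← sum_mul]
      have h3 : ∑ S ∈ (B ∩ A).powerset, (-1:ℝ)^S.card = if B ∩ A = ∅ then 1 else 0 := by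
        have := Finset.sum_powerset_neg_one_pow_card (x := B ∩ A)
        have h4 := congrArg (fun z : ℤ => (z : ℝ)) this
        push_cast at h4
        exact h4
      rw [h3]
      simp only [disjoint_iff_inter_eq_empty]
      split_ifs <;> simp
    simp only [h1]
    rw [sum_comm, sum_eq_single B]
    · rw [← mul_sum]
      have := Wt_top (k+1) h B hB
      unfold Wt at this
      rw [this, hB]
    · intro S hS hne
      rw [← mul_sum]
      have hlt : S.card < B.card := card_lt_card (lt_of_le_of_ne (mem_powerset.1 hS) hne)
      have := Wt_zero k h hD (k - S.card) S (by omega)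
      unfold Wt at this
      rw [this, mul_zero]
    · intro h'; exact absurd (mem_powerset.2 subset_rfl) h'
  have : ∀ A, (if Disjoint B A then f B * h A else 0) = f B * if Disjoint B A then h A else 0 := by
    intro A; split_ifs <;> simp
  simp only [this]
  rw [← mul_sum, key]; ring

end HMdeg


namespace HMdeg
open Finset
variable {n : ℕ}

structure Dec (n k : ℕ) (f : Finset (Fin n) → ℝ) (F : ℕ → Finset (Fin n) → ℝ) : Prop where
  hsum : ∀ A ∈ P n k, f A = ∑ j ∈ range (k+1), F j A
  eig : ∀ j ≤ k, ∀ A ∈ P n k, Dn (Up (F j)) A = ((k:ℝ)+1-j)*(n-k-j) * F j A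
  orth : ∀ i ≤ k, ∀ j ≤ k, i ≠ j → ip k (F i) (F j) = 0
  Korth : ∀ i ≤ k, ∀ j ≤ k, i ≠ j → Kb k (F i) (F j) = 0
  Kdiag : ∀ j ≤ k, Kb k (F j) (F j) = (-1)^j * ((n-k-j).choose (k-j) : ℝ) * ip k (F j) (F j)
  const : ∃ c, ∀ A ∈ P n k, F 0 A = c
  zsum : ∀ j, 1 ≤ j → j ≤ k → Wt k (F j) ∅ = 0
  deg1 : 1 ≤ k → ∑ i, (Wt k (F 1) {i})^2 = ((n-2).choose (k-1) : ℝ) * ip k (F 1) (F 1)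
  deg2 : ∀ j, 2 ≤ j → j ≤ k → ∀ i, Wt k (F j) {i} = 0

lemma P_zero : P n 0 = {∅} := by ext A; simp [mem_P]

lemma Up_congr (k : ℕ) {f g : Finset (Fin n) → ℝ} (h : ∀ A ∈ P n k, f A = g A) :
    ∀ A ∈ P n (k+1), Up f A = Up g A := by
  intro A hA
  unfold Up
  refine sum_congr rfl fun x hx => h _ ?_
  rw [mem_P] at *
  rw [card_erase_of_mem hx]; omega

lemma Up_smul (c : ℝ) (f : Finset (Fin n) → ℝ) (A) : Up (fun B => c * f B) A = c * Up f A := by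
  unfold Up; rw [mul_sum]

lemma Wt_Up_empty (k : ℕ) (hk : k ≤ n) (g : Finset (Fin n) → ℝ) :
    Wt (k+1) (Up g) ∅ = ((n:ℝ)-k) * Wt k g ∅ := by
  unfold Wt Up
  simp only [empty_subset, if_true]
  rw [pair_sum k (fun A x => g (A.erase x)), mul_sum]
  refine sum_congr rfl fun B hB => ?_
  rw [mem_P] at hB
  have : ∀ x ∈ Bᶜ, g ((insert x B).erase x) = g B := fun x hx => by
    rw [erase_insert (by simpa using hx)]
  rw [sum_congr rfl this, sum_const, card_compl, hB, Fintype.card_fin, nsmul_eq_mul,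
    Nat.cast_sub hk]

lemma Wt_Up_single (k : ℕ) (hk : k ≤ n) (g : Finset (Fin n) → ℝ) (i : Fin n) :
    Wt (k+1) (Up g) {i} = ((n:ℝ)-k-1) * Wt k g {i} + Wt k g ∅ := by
  unfold Wt Up
  simp only [empty_subset, if_true, singleton_subset_iff]
  have h0 : ∀ A : Finset (Fin n), (if i ∈ A then ∑ x ∈ A, g (A.erase x) else 0) =
     ∑ x ∈ A, if i ∈ A then g (A.erase x) else 0 := by
    intro A; split_ifs <;> simp
  simp only [h0]
  rw [pair_sum k (fun A x => if i ∈ A then g (A.erase x) else 0), mul_sum, ← sum_add_distrib]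
  refine sum_congr rfl fun B hB => ?_
  rw [mem_P] at hB
  have : ∀ x ∈ Bᶜ, (if i ∈ insert x B then g ((insert x B).erase x) else 0) =
      if i ∈ insert x B then g B else 0 := fun x hx => by
    rw [erase_insert (by simpa using hx)]
  rw [sum_congr rfl this]
  by_cases hi : i ∈ B
  · simp only [hi, mem_insert, or_true, if_true]
    rw [sum_const, card_compl, hB, Fintype.card_fin, nsmul_eq_mul, Nat.cast_sub hk]; ring
  · simp only [hi, mem_insert, or_false, if_false, mul_zero, zero_add]
    rw [sum_ite_eq]; simp [hi]

lemma choose_id1 (n k j : ℕ) (hk : 2*(k+1) ≤ n) (hj : j ≤ k) :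
    ((n:ℝ) - 2*k - 1) * (n - 2*k) * ((n-k-j).choose (k-j) : ℝ) =
    ((n-(k+1)-j).choose (k+1-j) : ℝ) * (((k:ℝ)+1-j)*(n-k-j)) := by
  obtain ⟨r, rfl⟩ := Nat.exists_eq_add_of_le hj
  obtain ⟨m, rfl⟩ := Nat.exists_eq_add_of_le hk
  -- N = n-k-j = r + j + 2 + m - j...
  have e1 : 2*(j+r+1)+m-(j+r)-j = (r+m+1)+1 := by omega
  have e2 : 2*(j+r+1)+m-(j+r+1)-j = r+m+1 := by omega
  have e3 : j+r-j = r := by omega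
  have e4 : j+r+1-j = r+1 := by omega
  rw [e1, e2, e3, e4]
  have a1 : (((r+m+1)+1).choose r : ℝ) * (m+2) = ((r+m+1).choose r) * (r+m+2) := by
    have := Nat.choose_mul_succ_eq (r+m+1) r
    have e : r+m+1+1-r = m+2 := by omega
    rw [e] at this
    have h : (((r+m+1).choose r * (r+m+1+1) : ℕ):ℝ) = (((r+m+1+1).choose r * (m+2) : ℕ):ℝ) := by
      rw [this]
    push_cast at h ⊢
    linarith
  have a2 : ((r+m+1).choose (r+1) : ℝ) * (r+1) = ((r+m+1).choose r) * (m+1) := by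
    have := Nat.choose_succ_right_eq (r+m+1) r
    have e : r+m+1-r = m+1 := by omega
    rw [e] at this
    exact_mod_cast this
  push_cast
  linear_combination (m+1:ℝ) * a1 - (r+m+2:ℝ) * a2

lemma choose_id2 (n k : ℕ) (hk : 2*(k+1) ≤ n) (h1 : 1 ≤ k) :
    ((n:ℝ)-k-1)^2 * ((n-2).choose (k-1) : ℝ) = ((n-2).choose k : ℝ) * (k*(n-k-1)) := by
  obtain ⟨r, rfl⟩ := Nat.exists_eq_add_of_le h1
  obtain ⟨m, rfl⟩ := Nat.exists_eq_add_of_le hk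
  have := Nat.choose_succ_right_eq (2*(1+r+1)+m-2) r
  have e : 2*(1+r+1)+m-2-r = r+m+2 := by omega
  rw [e] at this
  have e' : 1 + r - 1 = r := by omega
  have h : (((2*(1+r+1)+m-2).choose (r+1) : ℕ):ℝ) * (r+1) = ((2*(1+r+1)+m-2).choose r) * (r+m+2) := by
    exact_mod_cast this
  rw [e', show 1 + r = r + 1 by ring] at *
  push_cast
  linear_combination -(r+m+2:ℝ) * h

theorem exists_dec (k : ℕ) (hk : 2 * k ≤ n) (f : Finset (Fin n) → ℝ) : ∃ F, Dec n k f F := by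
  induction k generalizing f with
  | zero =>
    refine ⟨fun _ => f, ?_, ?_, ?_, ?_, ?_, ?_, ?_, ?_, ?_⟩
    · intro A _; simp
    · intro j hj A hA
      obtain rfl : j = 0 := by omega
      rw [comm_rel 0 f A (mem_P.1 hA)]
      have : A = ∅ := by simpa [mem_P] using hA
      subst this
      simp [Up]
    · intro i hi j hj h; omega
    · intro i hi j hj h; omega
    · intro j hj
      obtain rfl : j = 0 := by omega
      simp [Kb, ip, P_zero]
    · exact ⟨f ∅, by simp [P_zero]⟩
    · intro j h1 h2; omega
    · intro h; omega
    · intro j h1 h2; omega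
  | succ k ih =>
    obtain ⟨g, h, hf, hD⟩ := decomp k f
    obtain ⟨G, hG⟩ := ih (by omega) g
    have hUG : ∀ j ≤ k, ∀ i ≤ k, ip (k+1) (Up (G i)) (Up (G j)) =
        ((k:ℝ)+1-j)*(n-k-j) * ip k (G i) (G j) := by
      intro j hj i hi
      rw [adj, ip_congr k (fun _ _ => rfl) (hG.eig j hj)]
      unfold ip
      rw [mul_sum]
      exact sum_congr rfl fun A _ => by ring
    have hh : ∀ u, ip (k+1) (Up u) h = 0 := by
      intro u
      rw [adj, ip_congr k (fun _ _ => rfl) (g' := fun _ => 0) hD]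
      simp [ip]
    have hKh : ∀ u, Kb (k+1) (Up u) h = 0 := by
      intro u
      rw [Kb_ker k h _ hD, hh, mul_zero]
    let F : ℕ → Finset (Fin n) → ℝ := fun j => if j = k+1 then h else Up (G j)
    have F1 : F (k+1) = h := by simp [F]
    have F2 : ∀ j ≤ k, F j = Up (G j) := fun j hj => by
      have : j ≠ k+1 := by omega
      simp [F, this]
    refine ⟨F, ?_, ?_, ?_, ?_, ?_, ?_, ?_, ?_, ?_⟩
    · intro A hA
      rw [sum_range_succ, F1, hf A, Up_congr k hG.hsum A hA, add_comm]
      congr 1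
      unfold Up
      rw [sum_comm]
      refine sum_congr rfl fun j hj => ?_
      rw [F2 j (by simp at hj; omega)]
      rfl
    · intro j hj A hA
      rcases Nat.lt_or_ge j (k+1) with hlt | hge
      · rw [F2 j (by omega), comm_rel (k+1) _ A (mem_P.1 hA),
          Up_congr k (hG.eig j (by omega)) A hA, Up_smul]
        push_cast; ring
      · obtain rfl : j = k+1 := by omega
        rw [F1, comm_rel (k+1) _ A (mem_P.1 hA), Up_congr k (g := fun _ => 0) hD A hA]
        simp only [Up, sum_const_zero]
        push_cast; ring
    · intro i hi j hj hij
      rcases Nat.lt_or_ge j (k+1) with hlt | hge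
      · rcases Nat.lt_or_ge i (k+1) with hlt' | hge'
        · rw [F2 j (by omega), F2 i (by omega), hUG j (by omega) i (by omega),
            hG.orth i (by omega) j (by omega) hij, mul_zero]
        · obtain rfl : i = k+1 := by omega
          rw [F1, F2 j (by omega), ip_comm, hh]
      · obtain rfl : j = k+1 := by omega
        rw [F1, F2 i (by omega), hh]
    · intro i hi j hj hij
      rcases Nat.lt_or_ge j (k+1) with hlt | hge
      · rcases Nat.lt_or_ge i (k+1) with hlt' | hge'
        · rw [F2 j (by omega), F2 i (by omega), Kb_Up k (by omega),
            hG.Korth i (by omega) j (by omega) hij, mul_zero]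
        · obtain rfl : i = k+1 := by omega
          rw [F1, F2 j (by omega), Kb_comm, hKh]
      · obtain rfl : j = k+1 := by omega
        rw [F1, F2 i (by omega), hKh]
    · intro j hj
      rcases Nat.lt_or_ge j (k+1) with hlt | hge
      · rw [F2 j (by omega), Kb_Up k (by omega), hG.Kdiag j (by omega),
          hUG j (by omega) j (by omega)]
        have := choose_id1 n k j hk (by omega)
        linear_combination (-1)^j * ip k (G j) (G j) * this
      · obtain rfl : j = k+1 := by omega
        rw [F1, Kb_ker k h h hD]
        simp
    · obtain ⟨c, hc⟩ := hG.const
      refine ⟨(k+1) * c, fun A hA => ?_⟩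
      rw [F2 0 (by omega), Up_congr k (g := fun _ => c) hc A hA]
      simp [Up, mem_P.1 hA]
    · intro j h1 h2
      rcases Nat.lt_or_ge j (k+1) with hlt | hge
      · rw [F2 j (by omega), Wt_Up_empty k (by omega), hG.zsum j h1 (by omega), mul_zero]
      · obtain rfl : j = k+1 := by omega
        rw [F1, Wt_zero k h hD k ∅ (by simp)]
    · intro _
      rcases Nat.eq_zero_or_pos k with h0 | hpos
      · subst h0
        have F1' : F 1 = h := F1
        rw [F1']
        have : ∀ i, Wt (0+1) h {i} = h {i} := fun i => Wt_top _ _ _ (by simp)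
        simp only [this]
        simp only [zero_add, Nat.sub_self, Nat.choose_zero_right, Nat.cast_one, one_mul]
        unfold ip
        have hP : P n 1 = univ.image (fun i : Fin n => ({i} : Finset (Fin n))) := by
          ext A; simp [mem_P, card_eq_one, eq_comm]
        rw [hP, sum_image (by intro a _ b _ h; simpa using h)]
        exact sum_congr rfl fun i _ => by ring
      · rw [F2 1 hpos, hUG 1 hpos 1 hpos]
        have : ∀ i, (Wt (k+1) (Up (G 1)) {i})^2 = ((n:ℝ)-k-1)^2 * (Wt k (G 1) {i})^2 := by
          intro i
          rw [Wt_Up_single k (by omega), hG.zsum 1 le_rfl hpos]; ring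
        simp only [this]
        rw [← mul_sum, hG.deg1 hpos]
        have := choose_id2 n k hk hpos
        simp only [Nat.add_sub_cancel]
        push_cast
        linear_combination ip k (G 1) (G 1) * this
    · intro j h1 h2 i
      rcases Nat.lt_or_ge j (k+1) with hlt | hge
      · rw [F2 j (by omega), Wt_Up_single k (by omega), hG.zsum j (by omega) (by omega),
          hG.deg2 j h1 (by omega)]; ring
      · obtain rfl : j = k+1 := by omega
        rw [F1, Wt_zero k h hD (k-1) {i} (by simp; omega)]

lemma ip_sum_left {ι : Type*} (k : ℕ) (s : Finset ι) (F : ι → Finset (Fin n) → ℝ)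
    (g : Finset (Fin n) → ℝ) :
    ip k (fun A => ∑ j ∈ s, F j A) g = ∑ j ∈ s, ip k (F j) g := by
  unfold ip
  symm
  rw [sum_comm]
  exact sum_congr rfl fun A _ => by rw [sum_mul]

lemma Kb_sum_left {ι : Type*} (k : ℕ) (s : Finset ι) (F : ι → Finset (Fin n) → ℝ)
    (g : Finset (Fin n) → ℝ) :
    Kb k (fun A => ∑ j ∈ s, F j A) g = ∑ j ∈ s, Kb k (F j) g := by
  unfold Kb
  symm
  rw [sum_comm]
  refine sum_congr rfl fun A _ => ?_
  rw [sum_comm]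
  refine sum_congr rfl fun B _ => ?_
  split_ifs
  · rw [sum_mul]
  · simp

lemma ip_self_nonneg (k : ℕ) (f : Finset (Fin n) → ℝ) : 0 ≤ ip k f f :=
  sum_nonneg fun A _ => mul_self_nonneg _

/-- The refined ratio bound. -/
theorem spectral (k : ℕ) (hk2 : 3 ≤ k) (hk : 2 * k ≤ n) (f : Finset (Fin n) → ℝ)
    (hK : Kb k f f = 0) : ∃ a0 a1 : ℝ, a0 * (n.choose k : ℝ) = (Wt k f ∅)^2 ∧
      ∑ i, (Wt k f {i} - k * Wt k f ∅ / n)^2 = ((n-2).choose (k-1) : ℝ) * a1 ∧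
      ((n-k).choose k : ℝ) * a0 - ((n-k-1).choose (k-1) : ℝ) * a1
        - ((n-k-3).choose (k-3) : ℝ) * (ip k f f - a0 - a1) ≤ 0 := by
  obtain ⟨F, hF⟩ := exists_dec k hk f
  have hn : 0 < n := by omega
  refine ⟨ip k (F 0) (F 0), ip k (F 1) (F 1), ?_, ?_, ?_⟩
  · obtain ⟨c, hc⟩ := hF.const
    have h1 : Wt k f ∅ = (n.choose k : ℝ) * c := by
      have : Wt k f ∅ = ∑ j ∈ range (k+1), Wt k (F j) ∅ := by
        unfold Wt
        simp only [empty_subset, if_true]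
        rw [sum_comm]; exact sum_congr rfl hF.hsum
      rw [this, sum_range_succ', sum_eq_zero, zero_add]
      · unfold Wt
        simp only [empty_subset, if_true]
        rw [sum_congr rfl hc]
        simp [P]
      · intro j hj; exact hF.zsum _ (by omega) (by simp at hj; omega)
    rw [h1, ip_congr k hc hc]
    simp [ip, P]; ring
  · have hW : ∀ i, Wt k f {i} - k * Wt k f ∅ / n = Wt k (F 1) {i} := by
      intro i
      have h1 : ∀ S, Wt k f S = ∑ j ∈ range (k+1), Wt k (F j) S := by
        intro S
        unfold Wt
        rw [sum_comm]
        refine sum_congr rfl fun A hA => ?_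
        rw [hF.hsum A hA]
        split_ifs <;> simp
      have h2 : Wt k f ∅ = Wt k (F 0) ∅ := by
        rw [h1, sum_range_succ', sum_eq_zero, zero_add]
        intro j hj; exact hF.zsum _ (by omega) (by simp at hj; omega)
      have h3 : Wt k f {i} = Wt k (F 0) {i} + Wt k (F 1) {i} := by
        rw [h1, show k + 1 = (k - 1) + 1 + 1 by omega, sum_range_succ', sum_range_succ',
          sum_eq_zero, zero_add]
        · ring
        · intro j hj; exact hF.deg2 _ (by omega) (by simp at hj; omega) i
      have h4 : Wt k (F 0) {i} = k * Wt k (F 0) ∅ / n := by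
        obtain ⟨c, hc⟩ := hF.const
        have h5 : ∀ i : Fin n, Wt k (F 0) {i} = ((n-1).choose (k-1) : ℝ) * c := by
          intro i
          unfold Wt
          rw [← sum_filter, sum_congr rfl (fun A hA => hc A (mem_filter.1 hA).1), sum_const,
            nsmul_eq_mul]
          congr 2
          have : (P n k).filter (fun A => {i} ⊆ A) = (powersetCard (k-1) (univ.erase i)).image
              (insert i) := by
            ext A
            simp only [mem_filter, mem_P, singleton_subset_iff, mem_image, mem_powersetCard]
            constructor
            · rintro ⟨h1, h2⟩
              refine ⟨A.erase i, ⟨erase_subset_erase _ (subset_univ _), ?_⟩, insert_erase h2⟩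
              rw [card_erase_of_mem h2, h1]
            · rintro ⟨B, ⟨h1, h2⟩, rfl⟩
              have : i ∉ B := fun h => by simpa using h1 h
              rw [card_insert_of_notMem this]
              exact ⟨by omega, mem_insert_self _ _⟩
          rw [this, card_image_of_injOn, card_powersetCard, card_erase_of_mem (mem_univ _)]
          · simp
          · intro A hA B hB hAB
            have hA' : i ∉ A := fun h => by simpa using (mem_powersetCard.1 hA).1 h
            have hB' : i ∉ B := fun h => by simpa using (mem_powersetCard.1 hB).1 h
            rw [← erase_insert hA', ← erase_insert hB', hAB]
        have h6 : Wt k (F 0) ∅ = (n.choose k : ℝ) * c := by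
          unfold Wt
          simp only [empty_subset, if_true]
          rw [sum_congr rfl hc]
          simp [P]
        rw [h5, h6]
        have h7 := Nat.add_one_mul_choose_eq (n-1) (k-1)
        rw [show n-1+1 = n by omega, show k-1+1 = k by omega] at h7
        have h8 : (n:ℝ) * ((n-1).choose (k-1)) = (n.choose k) * k := by exact_mod_cast h7
        have : (n:ℝ) ≠ 0 := by positivity
        field_simp
        linear_combination c * h8
      rw [h3, h2, h4]; ring
    simp only [hW]
    exact hF.deg1 (by omega)
  · have e1 : ip k f f = ∑ j ∈ range (k+1), ip k (F j) (F j) := by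
      rw [ip_congr k hF.hsum (fun _ _ => rfl), ip_sum_left]
      refine sum_congr rfl fun j hj => ?_
      rw [ip_comm, ip_congr k hF.hsum (fun _ _ => rfl), ip_sum_left]
      rw [sum_eq_single j]
      · intro i hi hne; simp at hi hj; exact hF.orth i (by omega) j (by omega) hne
      · intro h; exact absurd hj h
    have e2 : Kb k f f = ∑ j ∈ range (k+1), Kb k (F j) (F j) := by
      rw [Kb_congr k hF.hsum (fun _ _ => rfl), Kb_sum_left]
      refine sum_congr rfl fun j hj => ?_
      rw [Kb_comm, Kb_congr k hF.hsum (fun _ _ => rfl), Kb_sum_left]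
      rw [sum_eq_single j]
      · intro i hi hne; simp at hi hj; exact hF.Korth i (by omega) j (by omega) hne
      · intro h; exact absurd hj h
    rw [e1]
    rw [hK] at e2
    rw [show k + 1 = (k - 1) + 1 + 1 by omega, sum_range_succ', sum_range_succ'] at e1 e2 ⊢
    rw [hF.Kdiag 0 (by omega), hF.Kdiag 1 (by omega)] at e2
    have e3 : -((n-k-3).choose (k-3) : ℝ) * ∑ j ∈ range (k-1), ip k (F (j+1+1)) (F (j+1+1)) ≤
        ∑ j ∈ range (k-1), Kb k (F (j+1+1)) (F (j+1+1)) := by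
      rw [mul_sum]
      refine sum_le_sum fun j hj => ?_
      simp only [mem_range] at hj
      rw [hF.Kdiag (j+1+1) (by omega)]
      refine mul_le_mul_of_nonneg_right ?_ (ip_self_nonneg _ _)
      rcases Nat.even_or_odd (j+1+1) with he | ho
      · rw [he.neg_one_pow, one_mul]
        have : (0:ℝ) ≤ ((n-k-3).choose (k-3) : ℝ) := Nat.cast_nonneg _
        exact le_trans (neg_nonpos.2 this) (Nat.cast_nonneg _)
      · rw [ho.neg_one_pow, neg_one_mul, neg_le_neg_iff]
        have hj3 : 1 ≤ j := by
          rcases Nat.eq_zero_or_pos j with h | h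
          · subst h; exact absurd ho (by decide)
          · exact h
        obtain ⟨t, rfl⟩ := Nat.exists_eq_add_of_le hj3
        norm_cast
        -- C(N-t, r-t) ≤ C(N, r)
        have : ∀ (t N r : ℕ), t ≤ r → r ≤ N → (N-t).choose (r-t) ≤ N.choose r := by
          intro t N r h1 h2
          rw [← Nat.choose_symm (show r - t ≤ N - t by omega), ← Nat.choose_symm h2,
            show N - t - (r-t) = N - r by omega]
          exact Nat.choose_le_choose _ (by omega)
        have := this t (n-k-3) (k-3) (by omega) (by omega)
        rwa [show n-k-3-t = n-k-(1+t+1+1) by omega, show k-3-t = k-(1+t+1+1) by omega] at this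
    simp only [pow_zero, Nat.sub_zero, one_mul, pow_one, zero_add] at e2 ⊢
    linarith

end HMdeg

namespace HMdeg
open Finset
variable {n : ℕ}
open scoped FinsetFamily

lemma exists_initSeg (r m : ℕ) (hm : m ≤ n.choose r) :
    ∃ C : Finset (Finset (Fin n)), Finset.Colex.IsInitSeg C r ∧ #C = m := by
  induction m with
  | zero => exact ⟨∅, Finset.Colex.isInitSeg_empty, rfl⟩
  | succ m ih =>
    obtain ⟨C, hC, hCm⟩ := ih (by omega)
    have hne : (powersetCard r (univ : Finset (Fin n)) \ C).Nonempty := by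
      rw [← card_pos]
      have := le_card_sdiff C (powersetCard r (univ : Finset (Fin n)))
      rw [card_powersetCard, card_univ, Fintype.card_fin] at this
      omega
    obtain ⟨s, hs, hmin⟩ := exists_min_image _ (fun s => toColex s) hne
    rw [mem_sdiff, mem_powersetCard] at hs
    refine ⟨insert s C, ⟨?_, ?_⟩, ?_⟩
    · intro A hA
      rw [mem_coe, mem_insert] at hA
      rcases hA with rfl | hA
      · exact hs.1.2
      · exact hC.1 hA
    · intro A B hA hB
      rw [mem_insert] at hA ⊢
      rcases hA with rfl | hA
      · right
        by_contra hBC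
        have := hmin B (by rw [mem_sdiff, mem_powersetCard]; exact ⟨⟨subset_univ _, hB.2⟩, hBC⟩)
        exact absurd hB.1 (not_lt.2 this)
      · exact Or.inr (hC.2 hA hB)
    · rw [card_insert_of_notMem hs.2, hCm]

lemma initSeg_pow (r y : ℕ) (hy : y ≤ n) :
    ∃ Y : Finset (Fin n), #Y = y ∧ Finset.Colex.IsInitSeg (powersetCard r Y) r := by
  refine ⟨attachFin (range y) fun m => by rw [mem_range]; omega, by simp, ?_, ?_⟩
  · exact Set.sized_powersetCard _ _
  · simp_rw [mem_powersetCard]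
    rintro A B hA ⟨HB₁, HB₂⟩
    refine ⟨fun t ht ↦ ?_, ‹_›⟩
    rw [mem_attachFin, mem_range]
    have : toColex (image Fin.val B) < toColex (image Fin.val A) := by
      rwa [Finset.Colex.toColex_image_lt_toColex_image Fin.val_strictMono]
    apply Finset.Colex.forall_lt_mono this.le _ t (mem_image.2 ⟨t, ht, rfl⟩)
    simp_rw [mem_image]
    rintro _ ⟨a, ha, hab⟩
    simpa [hab] using hA.1 ha

/-- Shadow ratio bound. -/
lemma kk_ratio (𝒜 : Finset (Finset (Fin n))) (a i y : ℕ) (hi : i ≤ a) (hay : a ≤ y) (hy : y ≤ n)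
    (hA : (𝒜 : Set (Finset (Fin n))).Sized a) (hc : #𝒜 ≤ y.choose a) :
    #𝒜 * y.choose (a - i) ≤ #(∂^[i] 𝒜) * y.choose a := by
  obtain ⟨C, hC, hCc⟩ := exists_initSeg (n := n) a #𝒜 (hc.trans (Nat.choose_le_choose _ hy))
  obtain ⟨Y, hYc, hY⟩ := initSeg_pow (n := n) a y hy
  have hsub : C ⊆ powersetCard a Y := by
    rcases hC.total hY with h | h
    · exact h
    · rw [eq_of_subset_of_card_le h (by rw [card_powersetCard, hYc, hCc]; exact hc)]
  have h1 : #(∂^[i] C) ≤ #(∂^[i] 𝒜) := iterated_kk hA hCc.le hC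
  have h2 : #C * a.choose (a - i) ≤ #(∂^[i] C) * (y - (a - i)).choose i := by
    refine card_mul_le_card_mul (fun A B => B ⊆ A) ?_ ?_
    · intro A hAC
      have hAa : #A = a := hC.1 hAC
      rw [← hAa, ← card_powersetCard, hAa]
      refine card_le_card fun B hB => ?_
      rw [mem_powersetCard] at hB
      rw [mem_bipartiteAbove]
      refine ⟨?_, hB.1⟩
      rw [mem_shadow_iterate_iff_exists_sdiff]
      refine ⟨A, hAC, hB.1, ?_⟩
      rw [card_sdiff_of_subset hB.1]; omega
    · intro B hB
      rw [mem_shadow_iterate_iff_exists_sdiff] at hB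
      obtain ⟨A0, hA0, hBA0, hi0⟩ := hB
      have hA0a : #A0 = a := hC.1 hA0
      have hBY : B ⊆ Y := hBA0.trans (mem_powersetCard.1 (hsub hA0)).1
      rw [card_sdiff_of_subset hBA0] at hi0
      have hle := card_le_card hBA0
      have hBc : #B = a - i := by omega
      have : #(powersetCard i (Y \ B)) = (y - (a-i)).choose i := by
        rw [card_powersetCard, card_sdiff_of_subset hBY, hYc, hBc]
      rw [← this]
      refine card_le_card_of_injOn (fun A => A \ B) ?_ ?_
      · intro A hA
        rw [mem_coe, mem_bipartiteBelow] at hA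
        have h3 := mem_powersetCard.1 (hsub hA.1)
        rw [mem_coe, mem_powersetCard, card_sdiff_of_subset hA.2]
        exact ⟨sdiff_subset_sdiff h3.1 le_rfl, by omega⟩
      · intro A hA A' hA' h
        rw [mem_coe, mem_bipartiteBelow] at hA hA'
        simp only at h
        rw [← sdiff_union_of_subset hA.2, h, sdiff_union_of_subset hA'.2]
  have h3 := Nat.choose_mul (n := y) (k := a) (s := a - i) (by omega)
  rw [show a - (a - i) = i by omega] at h3
  have hpos : 0 < (y - (a-i)).choose i := Nat.choose_pos (by omega)
  rw [← hCc]
  refine Nat.le_of_mul_le_mul_right ?_ hpos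
  calc #C * y.choose (a-i) * (y - (a-i)).choose i = y.choose a * (#C * a.choose (a-i)) := by
        rw [mul_assoc, ← h3]; ring
    _ ≤ y.choose a * (#(∂^[i] C) * (y - (a - i)).choose i) := Nat.mul_le_mul_left _ h2
    _ ≤ y.choose a * (#(∂^[i] 𝒜) * (y - (a - i)).choose i) := by gcongr
    _ = _ := by ring

end HMdeg

namespace HMdeg
open Finset
variable {n : ℕ}
open scoped FinsetFamily

/-- degree -/
def dg (F : Finset (Finset (Fin n))) (i : Fin n) : ℕ := #(F.filter (fun A => i ∈ A))

lemma sum_dg (F : Finset (Finset (Fin n))) (k : ℕ) (hF : ∀ A ∈ F, #A = k) :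
    ∑ i, dg F i = k * #F := by
  unfold dg
  simp only [card_filter]
  rw [sum_comm]
  have : ∀ A ∈ F, ∑ i : Fin n, (if i ∈ A then 1 else 0) = k := by
    intro A hA; rw [← card_filter, ← hF A hA]; congr 1; ext; simp
  rw [sum_congr rfl this, sum_const, smul_eq_mul, mul_comm]

lemma shadow_bound (F : Finset (Finset (Fin n))) (k : ℕ) (hk : 1 ≤ k) (hn : 2 * k ≤ n)
    (hF : ∀ A ∈ F, #A = k) (hint : ∀ A ∈ F, ∀ B ∈ F, (A ∩ B).Nonempty) (v : Fin n) :
    ∃ S : ℕ, dg F v + S ≤ (n-1).choose (k-1) ∧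
      (∀ y, n - k - 1 ≤ y → y ≤ n → y.choose (n-k-1) ≤ #(F.filter (fun A => v ∉ A)) →
        y.choose (k-1) ≤ S) ∧
      (∀ y, n - k - 1 ≤ y → y ≤ n → #(F.filter (fun A => v ∉ A)) ≤ y.choose (n-k-1) →
        #(F.filter (fun A => v ∉ A)) * y.choose (k-1) ≤ S * y.choose (n-k-1)) := by
  set G := F.filter (fun A => v ∉ A) with hG
  set 𝒜 : Finset (Finset (Fin n)) := G.image (fun A => (insert v A)ᶜ) with h𝒜
  have hGm : ∀ A ∈ G, A ∈ F ∧ v ∉ A := fun A hA => by simpa [hG] using hA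
  have hcard : #𝒜 = #G := by
    refine card_image_of_injOn ?_
    intro A hA B hB h
    have h1 := hGm A hA
    have h2 := hGm B hB
    simp only [compl_inj_iff] at h
    rw [← erase_insert h1.2, h, erase_insert h2.2]
  have hsized : (𝒜 : Set (Finset (Fin n))).Sized (n-k-1) := by
    intro A hA
    rw [mem_coe, h𝒜, mem_image] at hA
    obtain ⟨B, hB, rfl⟩ := hA
    rw [card_compl, card_insert_of_notMem (hGm B hB).2, hF B (hGm B hB).1, Fintype.card_fin]
    omega
  have hsub : n - k - 1 - (n - 2 * k) = k - 1 := by omega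
  refine ⟨#(∂^[n - 2*k] 𝒜), ?_, ?_, ?_⟩
  · have h1 : #((F.filter (fun A => v ∈ A)).image (fun A => A.erase v)) = dg F v := by
      refine card_image_of_injOn ?_
      intro A hA B hB h
      have h1 : v ∈ A := by simp at hA; exact hA.2
      have h2 : v ∈ B := by simp at hB; exact hB.2
      simp only at h
      rw [← insert_erase h1, h, insert_erase h2]
    have hsh : ∀ B ∈ ∂^[n - 2*k] 𝒜, #B = k - 1 ∧ v ∉ B ∧ insert v B ∉ F := by
      intro B hB
      have hBc : #B = k - 1 := by
        have := (hsized.shadow_iterate (k := n - 2*k)) hB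
        omega
      rw [mem_shadow_iterate_iff_exists_sdiff] at hB
      obtain ⟨A', hA', hBA, -⟩ := hB
      rw [h𝒜, mem_image] at hA'
      obtain ⟨A, hA, rfl⟩ := hA'
      refine ⟨hBc, fun hv => by simpa using hBA hv, fun hmem => ?_⟩
      obtain ⟨x, hx⟩ := hint _ hmem A (hGm A hA).1
      rw [mem_inter, mem_insert] at hx
      rcases hx with ⟨rfl | hx, hxA⟩
      · exact (hGm A hA).2 hxA
      · have := hBA hx
        simp [hxA] at this
    have hdis : Disjoint ((F.filter (fun A => v ∈ A)).image (fun A => A.erase v))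
        (∂^[n - 2*k] 𝒜) := by
      rw [disjoint_left]
      intro B hB hB'
      rw [mem_image] at hB
      obtain ⟨A, hA, rfl⟩ := hB
      rw [mem_filter] at hA
      apply (hsh _ hB').2.2
      rw [insert_erase hA.2]; exact hA.1
    rw [← h1, ← card_union_of_disjoint hdis]
    have : #(powersetCard (k-1) (univ.erase v)) = (n-1).choose (k-1) := by
      rw [card_powersetCard, card_erase_of_mem (mem_univ _), card_univ, Fintype.card_fin]
    rw [← this]
    refine card_le_card fun B hB => ?_
    rw [mem_union, mem_image] at hB
    rw [mem_powersetCard]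
    rcases hB with ⟨A, hA, rfl⟩ | hB
    · rw [mem_filter] at hA
      exact ⟨erase_subset_erase _ (subset_univ _), by rw [card_erase_of_mem hA.2, hF A hA.1]⟩
    · obtain ⟨h1, h2, -⟩ := hsh B hB
      refine ⟨fun x hx => ?_, h1⟩
      rw [mem_erase]
      exact ⟨fun h => h2 (h ▸ hx), mem_univ _⟩
  · intro y hy hyn hc
    have := kruskal_katona_lovasz_form (i := n - 2*k) (by omega) hy hyn hsized (by rwa [hcard])
    rwa [hsub] at this
  · intro y hy hyn hc
    have := kk_ratio 𝒜 (n-k-1) (n-2*k) y (by omega) hy hyn hsized (by rwa [hcard])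
    rwa [hsub, hcard] at this

lemma link_card (F : Finset (Finset (Fin n))) (v i : Fin n) (hvi : i ≠ v) :
    #((F.filter (fun A => v ∈ A ∧ i ∈ A)).image (fun A => A \ {v, i})) =
      #(F.filter (fun A => v ∈ A ∧ i ∈ A)) := by
  refine card_image_of_injOn ?_
  intro A hA B hB h
  rw [mem_coe, mem_filter] at hA hB
  have h1 : {v, i} ⊆ A := by intro x; simp; rintro (rfl | rfl); exacts [hA.2.1, hA.2.2]
  have h2 : {v, i} ⊆ B := by intro x; simp; rintro (rfl | rfl); exacts [hB.2.1, hB.2.2]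
  simp only at h
  rw [← sdiff_union_of_subset h1, h, sdiff_union_of_subset h2]

lemma dg_split (F : Finset (Finset (Fin n))) (v i : Fin n) :
    dg F i = #(F.filter (fun A => v ∈ A ∧ i ∈ A)) + dg (F.filter (fun A => v ∉ A)) i := by
  unfold dg
  rw [filter_filter, ← card_filter_add_card_filter_not (s := F.filter (fun A => i ∈ A)) (fun A => v ∈ A),
    filter_filter, filter_filter]
  congr 2 <;> (ext A; simp; tauto)

lemma pt1 (F : Finset (Finset (Fin n))) (k : ℕ) (hk : 2 ≤ k)
    (hF : ∀ A ∈ F, #A = k) (hint : ∀ A ∈ F, ∀ B ∈ F, (A ∩ B).Nonempty) (v i : Fin n)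
    (hvi : i ≠ v) (B : Finset (Fin n)) (hB : B ∈ F) (hvB : v ∉ B) (hiB : i ∉ B) :
    #(F.filter (fun A => v ∈ A ∧ i ∈ A)) + (n-k-2).choose (k-2) ≤ (n-2).choose (k-2) := by
  have e1 : #(powersetCard (k-2) (univ \ {v,i})) = (n-2).choose (k-2) := by
    rw [card_powersetCard, card_sdiff_of_subset (subset_univ _), card_univ, Fintype.card_fin,
      card_pair hvi.symm]
  have e2 : #(powersetCard (k-2) ((univ \ {v,i}) \ B)) = (n-k-2).choose (k-2) := by
    rw [card_powersetCard, card_sdiff_of_subset, card_sdiff_of_subset (subset_univ _), card_univ,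
      Fintype.card_fin, card_pair hvi.symm, hF B hB]
    · congr 1; omega
    · intro x hx; simp; exact ⟨fun h => hvB (h ▸ hx), fun h => hiB (h ▸ hx)⟩
  rw [← e1, ← e2, ← link_card F v i hvi, ← card_union_of_disjoint]
  · refine card_le_card (union_subset ?_ ?_)
    · intro C hC
      rw [mem_image] at hC
      obtain ⟨A, hA, rfl⟩ := hC
      rw [mem_filter] at hA
      have h1 : {v, i} ⊆ A := by intro x; simp; rintro (rfl | rfl); exacts [hA.2.1, hA.2.2]
      rw [mem_powersetCard, card_sdiff_of_subset h1, card_pair hvi.symm, hF A hA.1]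
      exact ⟨sdiff_subset_sdiff (subset_univ _) le_rfl, rfl⟩
    · exact powersetCard_mono sdiff_subset
  · rw [disjoint_left]
    intro C hC hC'
    rw [mem_image] at hC
    obtain ⟨A, hA, rfl⟩ := hC
    rw [mem_filter] at hA
    obtain ⟨x, hx⟩ := hint A hA.1 B hB
    rw [mem_inter] at hx
    have : x ∈ A \ {v, i} := by
      simp; exact ⟨hx.1, fun h => hvB (h ▸ hx.2), fun h => hiB (h ▸ hx.2)⟩
    have := (mem_powersetCard.1 hC').1 this
    rw [mem_sdiff] at this
    exact this.2 hx.2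

lemma pt2 (F : Finset (Finset (Fin n))) (k : ℕ) (hk : 3 ≤ k)
    (hF : ∀ A ∈ F, #A = k) (hint : ∀ A ∈ F, ∀ B ∈ F, (A ∩ B).Nonempty) (v i : Fin n)
    (hvi : i ≠ v) (B B' : Finset (Fin n)) (hB : B ∈ F) (hvB : v ∉ B) (hiB : i ∉ B)
    (hB' : B' ∈ F) (hvB' : v ∉ B') (hiB' : i ∉ B') (hne : B ≠ B') :
    #(F.filter (fun A => v ∈ A ∧ i ∈ A)) + (n-k-2).choose (k-2) + (n-k-3).choose (k-3)
      ≤ (n-2).choose (k-2) := by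
  have : ∃ b, b ∈ B ∧ b ∉ B' := by
    by_contra! h
    exact hne (eq_of_subset_of_card_le h (by rw [hF B hB, hF B' hB']))
  obtain ⟨b, hbB, hbB'⟩ := this
  have hbv : b ≠ v := fun h => hvB (h ▸ hbB)
  have hbi : b ≠ i := fun h => hiB (h ▸ hbB)
  have e1 : #(powersetCard (k-2) (univ \ {v,i})) = (n-2).choose (k-2) := by
    rw [card_powersetCard, card_sdiff_of_subset (subset_univ _), card_univ, Fintype.card_fin,
      card_pair hvi.symm]
  have e2 : #(powersetCard (k-2) ((univ \ {v,i}) \ B)) = (n-k-2).choose (k-2) := by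
    rw [card_powersetCard, card_sdiff_of_subset, card_sdiff_of_subset (subset_univ _), card_univ,
      Fintype.card_fin, card_pair hvi.symm, hF B hB]
    · congr 1; omega
    · intro x hx; simp; exact ⟨fun h => hvB (h ▸ hx), fun h => hiB (h ▸ hx)⟩
  have hsub : insert b B' ⊆ univ \ {v, i} := by
    intro x hx; simp at hx ⊢
    rcases hx with rfl | hx
    · exact ⟨hbv, hbi⟩
    · exact ⟨fun h => hvB' (h ▸ hx), fun h => hiB' (h ▸ hx)⟩
  have e3 : #((powersetCard (k-3) ((univ \ {v,i}) \ (insert b B'))).image (insert b))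
      = (n-k-3).choose (k-3) := by
    rw [card_image_of_injOn, card_powersetCard, card_sdiff_of_subset hsub,
      card_sdiff_of_subset (subset_univ _), card_univ,
      Fintype.card_fin, card_pair hvi.symm, card_insert_of_notMem hbB', hF B' hB']
    · congr 1; omega
    · intro A hA A' hA' h
      have h1 : b ∉ A := fun hb => by
        have := (mem_powersetCard.1 hA).1 hb
        simp at this
      have h2 : b ∉ A' := fun hb => by
        have := (mem_powersetCard.1 hA').1 hb
        simp at this
      rw [← erase_insert h1, h, erase_insert h2]
  rw [← e1, ← e2, ← e3, ← link_card F v i hvi, ← card_union_of_disjoint, ← card_union_of_disjoint]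
  · refine card_le_card (union_subset (union_subset ?_ ?_) ?_)
    · intro C hC
      rw [mem_image] at hC
      obtain ⟨A, hA, rfl⟩ := hC
      rw [mem_filter] at hA
      have h1 : {v, i} ⊆ A := by intro x; simp; rintro (rfl | rfl); exacts [hA.2.1, hA.2.2]
      rw [mem_powersetCard, card_sdiff_of_subset h1, card_pair hvi.symm, hF A hA.1]
      exact ⟨sdiff_subset_sdiff (subset_univ _) le_rfl, rfl⟩
    · exact powersetCard_mono sdiff_subset
    · intro C hC
      rw [mem_image] at hC
      obtain ⟨A, hA, rfl⟩ := hC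
      rw [mem_powersetCard] at hA ⊢
      have h1 : b ∉ A := fun hb => by
        have := hA.1 hb
        simp at this
      refine ⟨?_, by rw [card_insert_of_notMem h1]; omega⟩
      rw [insert_subset_iff]
      exact ⟨hsub (mem_insert_self _ _), hA.1.trans sdiff_subset⟩
  · rw [disjoint_union_left]
    constructor
    · rw [disjoint_left]
      intro C hC hC'
      rw [mem_image] at hC
      obtain ⟨A, hA, rfl⟩ := hC
      rw [mem_filter] at hA
      rw [mem_image] at hC'
      obtain ⟨A', hA', hAA'⟩ := hC'
      obtain ⟨x, hx⟩ := hint A hA.1 B' hB'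
      rw [mem_inter] at hx
      have : x ∈ A \ {v, i} := by
        simp; exact ⟨hx.1, fun h => hvB' (h ▸ hx.2), fun h => hiB' (h ▸ hx.2)⟩
      rw [← hAA', mem_insert] at this
      rcases this with rfl | h
      · exact hbB' hx.2
      · have := (mem_powersetCard.1 hA').1 h
        rw [mem_sdiff, mem_insert] at this
        exact this.2 (Or.inr hx.2)
    · rw [disjoint_left]
      intro C hC hC'
      rw [mem_image] at hC'
      obtain ⟨A', hA', rfl⟩ := hC'
      have := (mem_powersetCard.1 hC).1 (mem_insert_self _ _)
      rw [mem_sdiff] at this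
      exact this.2 hbB
  · rw [disjoint_left]
    intro C hC hC'
    rw [mem_image] at hC
    obtain ⟨A, hA, rfl⟩ := hC
    rw [mem_filter] at hA
    obtain ⟨x, hx⟩ := hint A hA.1 B hB
    rw [mem_inter] at hx
    have : x ∈ A \ {v, i} := by
      simp; exact ⟨hx.1, fun h => hvB (h ▸ hx.2), fun h => hiB (h ▸ hx.2)⟩
    have := (mem_powersetCard.1 hC').1 this
    rw [mem_sdiff] at this
    exact this.2 hx.2

end HMdeg

namespace HMdeg
open Finset
variable {n : ℕ}

lemma combi (k : ℕ) (hk : 3 ≤ k) (hn : 2 * k + 5 ≤ n) (F : Finset (Finset (Fin n)))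
    (hF : ∀ A ∈ F, #A = k) (hint : ∀ A ∈ F, ∀ B ∈ F, (A ∩ B).Nonempty)
    (hnt : ¬ ∃ i : Fin n, ∀ A ∈ F, i ∈ A)
    (hd : ∀ i, (n-2).choose (k-2) < dg F i + (n-k-2).choose (k-2)) :
    ∃ (v : Fin n) (S γ : ℕ), (∀ i, dg F i ≤ dg F v) ∧ dg F v + S ≤ (n-1).choose (k-1) ∧
      (∀ y, n - k - 1 ≤ y → y ≤ n → y.choose (n-k-1) ≤ γ → y.choose (k-1) ≤ S) ∧
      (∀ y, n - k - 1 ≤ y → y ≤ n → γ ≤ y.choose (n-k-1) →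
        γ * y.choose (k-1) ≤ S * y.choose (n-k-1)) ∧
      (k-1) * S < k * γ + (n-1) * (n-k-2).choose (k-2) ∧
      (n-k-3).choose (k-3) < γ ∧ (n-1-2*k) * (n-k-3).choose (k-3) ≤ k * γ := by
  have : NeZero n := ⟨by omega⟩
  obtain ⟨v, -, hv⟩ := exists_max_image univ (dg F) ⟨(0 : Fin n), mem_univ _⟩
  obtain ⟨S, h1, h2, h3⟩ := shadow_bound F k (by omega) (by omega) hF hint v
  set G := F.filter (fun A => v ∉ A) with hG
  have hGm : ∀ A ∈ G, A ∈ F ∧ v ∉ A := fun A hA => by simpa [hG] using hA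
  have hcard : dg F v + #G = #F := card_filter_add_card_filter_not _
  refine ⟨v, S, #G, fun i => hv i (mem_univ _), h1, h2, h3, ?_, ?_⟩
  · have hs := sum_dg F k hF
    rw [← add_sum_erase _ _ (mem_univ v)] at hs
    have hlow : (n-1) * ((n-2).choose (k-2) + 1) ≤
        ∑ i ∈ univ.erase v, (dg F i + (n-k-2).choose (k-2)) := by
      have := card_nsmul_le_sum (univ.erase v) (fun i => dg F i + (n-k-2).choose (k-2))
        ((n-2).choose (k-2) + 1) (fun i _ => hd i)
      rwa [card_erase_of_mem (mem_univ _), card_univ, Fintype.card_fin, smul_eq_mul] at this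
    rw [sum_add_distrib, sum_const, card_erase_of_mem (mem_univ _), card_univ, Fintype.card_fin,
      smul_eq_mul] at hlow
    have hE : (n-1) * (n-2).choose (k-2) = (n-1).choose (k-1) * (k-1) := by
      have := Nat.add_one_mul_choose_eq (n-2) (k-2)
      rwa [show n-2+1 = n-1 by omega, show k-2+1=k-1 by omega] at this
    have hE2 := Nat.mul_le_mul_left (k-1) h1
    obtain ⟨k', rfl⟩ : ∃ k', k = k'+1 := ⟨k-1, by omega⟩
    obtain ⟨n', rfl⟩ : ∃ n', n = n'+1 := ⟨n-1, by omega⟩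
    simp only [Nat.add_sub_cancel] at *
    rw [← hcard] at hs
    nlinarith
  · have hne : ∃ B, B ∈ G := by
      by_contra! h
      apply hnt
      refine ⟨v, fun A hA => ?_⟩
      by_contra hvA
      exact h A (by simp [hG, hA, hvA])
    obtain ⟨B, hB⟩ := hne
    have hBc := hF B (hGm B hB).1
    have hex : ∃ B' ∈ G, B' ≠ B := by
      by_contra! h
      have : ∃ i, i ∉ insert v B := by
        by_contra! h'
        have := card_le_card (fun i _ => h' i : (univ : Finset (Fin n)) ⊆ insert v B)
        rw [card_univ, Fintype.card_fin, card_insert_of_notMem (hGm B hB).2] at this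
        omega
      obtain ⟨i, hi⟩ := this
      rw [mem_insert, not_or] at hi
      have h4 := pt1 F k (by omega) hF hint v i hi.1 B (hGm B hB).1 (hGm B hB).2 hi.2
      have h5 := dg_split F v i
      have h6 : dg (F.filter (fun A => v ∉ A)) i = 0 := by
        unfold dg
        rw [card_eq_zero, filter_eq_empty_iff]
        intro A hA
        rw [h A hA]; exact hi.2
      have := hd i
      omega
    obtain ⟨B', hB', hBB'⟩ := hex
    have hB'c := hF B' (hGm B' hB').1
    have hT : ∀ i ∈ univ \ (insert v (B ∪ B')), (n-k-3).choose (k-3) < dg G i := by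
      intro i hi
      simp only [mem_sdiff, mem_univ, true_and, mem_insert, mem_union, not_or] at hi
      have h4 := pt2 F k hk hF hint v i hi.1 B B' (hGm B hB).1 (hGm B hB).2 hi.2.1
        (hGm B' hB').1 (hGm B' hB').2 hi.2.2 (Ne.symm hBB')
      have h5 := dg_split F v i
      rw [← hG] at h5
      have := hd i
      omega
    have hTc : n - 1 - 2 * k ≤ #(univ \ (insert v (B ∪ B'))) := by
      rw [card_sdiff_of_subset (subset_univ _), card_univ, Fintype.card_fin]
      have a1 := card_insert_le v (B ∪ B')
      have a2 := card_union_le B B'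
      omega
    constructor
    · obtain ⟨i, hi⟩ := card_pos.1 (show 0 < #(univ \ (insert v (B ∪ B'))) by omega)
      exact (hT i hi).trans_le (card_filter_le _ _)
    · calc (n-1-2*k) * (n-k-3).choose (k-3)
          ≤ #(univ \ (insert v (B ∪ B'))) * (n-k-3).choose (k-3) := by gcongr
        _ ≤ ∑ i ∈ univ \ (insert v (B ∪ B')), dg G i := by
          have := card_nsmul_le_sum _ (dg G) _ (fun i hi => (hT i hi).le)
          simpa using this
        _ ≤ ∑ i, dg G i := sum_le_sum_of_subset (subset_univ _)
        _ = k * #G := sum_dg G k fun A hA => hF A (hGm A hA).1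

end HMdeg

namespace HMdeg
open Finset

lemma cst {a b m : ℕ} (h : a + b = m) : (a : ℝ) = m - b := by
  rw [← h]; push_cast; ring

lemma ch_up {N r s : ℕ} {x y : ℝ} (h1 : s = r + 1) (hle : r ≤ N) (hx : (s : ℝ) = x)
    (hy : (N : ℝ) - r = y) : (N.choose s : ℝ) * x = N.choose r * y := by
  subst h1
  have := Nat.choose_succ_right_eq N r
  rw [← hx, ← hy, ← Nat.cast_sub hle]
  exact_mod_cast this

/-- `C(N,r) (N+1) = C(N+1,r) (N+1-r)` -/
lemma ch_top {N M r : ℕ} {x y : ℝ} (h1 : M = N + 1) (hle : r ≤ M) (hx : (M : ℝ) = x)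
    (hy : (M : ℝ) - r = y) : (N.choose r : ℝ) * x = M.choose r * y := by
  subst h1
  have := Nat.choose_mul_succ_eq N r
  rw [← hx, ← hy, ← Nat.cast_sub hle]
  exact_mod_cast this

/-- `(N+1) C(N,r) = C(N+1,r+1) (r+1)` -/
lemma ch_diag {N M r s : ℕ} {x y : ℝ} (h1 : M = N + 1) (h2 : s = r + 1) (hx : (M : ℝ) = x)
    (hy : (s : ℝ) = y) : (N.choose r : ℝ) * x = M.choose s * y := by
  subst h1 h2
  have := Nat.add_one_mul_choose_eq N r
  rw [← hx, ← hy, mul_comm]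
  exact_mod_cast this

lemma gpow (N t r : ℕ) : N.choose r * (N + t)^r ≤ (N+t).choose r * N^r := by
  induction r with
  | zero => simp
  | succ r ih =>
    refine Nat.le_of_mul_le_mul_right (c := r + 1) ?_ (by omega)
    have h1 := Nat.choose_succ_right_eq N r
    have h2 := Nat.choose_succ_right_eq (N+t) r
    have h3 : (N - r) * (N + t) ≤ (N + t - r) * N := by
      rcases Nat.lt_or_ge N r with h | h
      · rw [Nat.sub_eq_zero_of_le h.le]; simp
      · obtain ⟨m, rfl⟩ := Nat.exists_eq_add_of_le h
        rw [show r + m - r = m by omega, show r + m + t - r = m + t by omega]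
        nlinarith
    calc N.choose (r+1) * (N+t)^(r+1) * (r+1)
        = (N.choose (r+1) * (r+1)) * (N+t)^(r+1) := by ring
      _ = (N.choose r * (N+t)^r) * ((N-r) * (N+t)) := by rw [h1]; ring
      _ ≤ ((N+t).choose r * N^r) * ((N+t-r) * N) := Nat.mul_le_mul ih h3
      _ = ((N+t).choose (r+1) * (r+1)) * N^(r+1) := by rw [h2]; ring
      _ = _ := by ring

lemma bern (N t r : ℕ) (hN : 0 < N) :
    (N.choose r : ℝ) * (N + r * t) ≤ (N+t).choose r * N := by
  have h : (N.choose r : ℝ) * (N + t)^r ≤ (N+t).choose r * N^r := by exact_mod_cast gpow N t r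
  have hN' : (0:ℝ) < N := by exact_mod_cast hN
  have hb := one_add_mul_le_pow (show (-2:ℝ) ≤ t / N by
    have : (0:ℝ) ≤ t / N := by positivity
    linarith) r
  have h1 : (N + t : ℝ)^r = (1 + t / N)^r * N^r := by
    rw [← mul_pow]; congr 1; field_simp
  rw [h1] at h
  have h2 : (N.choose r : ℝ) * (1 + t / N)^r ≤ (N+t).choose r := by
    have : (0:ℝ) < (N:ℝ)^r := by positivity
    nlinarith
  calc (N.choose r : ℝ) * (N + r * t) = N.choose r * (1 + r * (t / N)) * N := by field_simp
    _ ≤ N.choose r * (1 + t/N)^r * N := by gcongr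
    _ ≤ _ := by gcongr

lemma ratio_num {γ S X Y p q : ℝ} (hY : 0 < Y) (hp : 0 ≤ p) (h : γ * X ≤ S * Y)
    (e : X * p = Y * q) : γ * q ≤ S * p := by
  have := mul_le_mul_of_nonneg_right h hp
  have h2 : γ * q * Y ≤ S * p * Y := by
    calc γ * q * Y = γ * X * p := by linear_combination (-γ) * e
      _ ≤ S * Y * p := this
      _ = _ := by ring
  exact le_of_mul_le_mul_right h2 hY

/-- Case `4 * k ≤ n`, small `γ`. -/
lemma poly1 (n k : ℕ) (hk : 30 ≤ k) (hn : 4 * k ≤ n) :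
    (k:ℝ) * (n-1) * (n-k-2) ≤ ((n:ℝ)-1-2*k)*((n-k-1)*(n-k-2)-k*(k-2)) := by
  obtain ⟨j, rfl⟩ := Nat.exists_eq_add_of_le hk
  obtain ⟨e, rfl⟩ := Nat.exists_eq_add_of_le hn
  push_cast
  rw [← sub_nonneg]
  ring_nf
  positivity

lemma poly2 (n k : ℕ) (hk : 30 ≤ k) (hn : 4 * k ≤ n) :
    ((n:ℝ)-1)*(n-k-2)*((n-2)*(n-3)) ≤
      ((n:ℝ)-k)*((n-k-1)*(n-k-2)-k*(n-3))*((n-k-2)+k*(k-2)) := by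
  obtain ⟨j, rfl⟩ := Nat.exists_eq_add_of_le hk
  obtain ⟨e, rfl⟩ := Nat.exists_eq_add_of_le hn
  push_cast
  rw [← sub_nonneg]
  ring_nf
  positivity

set_option maxHeartbeats 800000 in
lemma big_n (n k S γ : ℕ) (hk : 30 ≤ k) (hn : 4 * k ≤ n)
    (K1 : ∀ y, n - k - 1 ≤ y → y ≤ n → y.choose (n-k-1) ≤ γ → y.choose (k-1) ≤ S)
    (K2 : ∀ y, n - k - 1 ≤ y → y ≤ n → γ ≤ y.choose (n-k-1) →
        γ * y.choose (k-1) ≤ S * y.choose (n-k-1))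
    (hs : (k-1) * S < k * γ + (n-1) * (n-k-2).choose (k-2))
    (hc : (n-k-3).choose (k-3) < γ) (hc2 : (n-1-2*k) * (n-k-3).choose (k-3) ≤ k * γ)
    (hlt : γ < (n-3).choose (k-2)) : False := by
  have ck1 := cst (show (k-1) + 1 = k by omega)
  have ck2 := cst (show (k-2) + 2 = k by omega)
  have ck3 := cst (show (k-3) + 3 = k by omega)
  have cn1 := cst (show (n-1) + 1 = n by omega)
  have cn2 := cst (show (n-2) + 2 = n by omega)
  have cn3 := cst (show (n-3) + 3 = n by omega)
  have cn4 := cst (show (n-4) + 4 = n by omega)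
  have cN := cst (show (n-k-2) + (k+2) = n by omega)
  have cd := cst (show (n-1-2*k) + (2*k+1) = n by omega)
  push_cast at ck1 ck2 ck3 cn1 cn2 cn3 cn4 cN cd
  have hk' : (30:ℝ) ≤ k := by exact_mod_cast hk
  have hn' : 4 * (k:ℝ) ≤ n := by exact_mod_cast hn
  have hs' : ((k:ℝ)-1) * S < k * γ + (n-1) * (n-k-2).choose (k-2) := by
    rw [← ck1, ← cn1]; exact_mod_cast hs
  have hRc : ((n-k-3).choose (k-3) : ℝ) * (n-k-2) = (n-k-2).choose (k-2) * (k-2) :=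
    ch_diag (by omega) (by omega) (by rw [cN]; ring) ck2
  have hγ : (0:ℝ) < γ := by
    have : 0 < γ := by omega
    exact_mod_cast this
  rcases le_total γ ((n-4).choose (n-k-1)) with h | h
  · have r := K2 (n-4) (by omega) (by omega) h
    have hsym : (n-4).choose (n-k-1) = (n-4).choose (k-3) :=
      Nat.choose_symm_of_eq_add (by omega)
    rw [hsym] at r
    have e1 : ((n-4).choose (k-2) : ℝ) * (k-2) = (n-4).choose (k-3) * (n-k-1) :=
      ch_up (by omega) (by omega) ck2 (by rw [cn4, ck3]; ring)
    have e2 : ((n-4).choose (k-1) : ℝ) * (k-1) = (n-4).choose (k-2) * (n-k-2) :=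
      ch_up (by omega) (by omega) ck1 (by rw [cn4, ck2]; ring)
    have hpos : (0:ℝ) < (n-4).choose (k-3) := by
      exact_mod_cast Nat.choose_pos (by omega)
    have r' : (γ:ℝ) * (n-4).choose (k-1) ≤ S * (n-4).choose (k-3) := by exact_mod_cast r
    have r2 : (γ:ℝ) * ((n-k-1)*(n-k-2)) ≤ S * ((k-1)*(k-2)) := by
      refine ratio_num hpos (by nlinarith) r' ?_
      linear_combination (k-2:ℝ) * e2 + (n-k-2:ℝ) * e1
    have hc2' : ((n:ℝ)-1-2*k) * (n-k-3).choose (k-3) ≤ k * γ := by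
      rw [show (n:ℝ)-1-2*k = n - (2*k+1) by ring, ← cd]; exact_mod_cast hc2
    have p1 := poly1 n k hk hn
    set c : ℝ := ((n-k-3).choose (k-3) : ℝ)
    set R : ℝ := ((n-k-2).choose (k-2) : ℝ)
    have s1 : γ * (((n:ℝ)-k-1)*(n-k-2) - k*(k-2)) < (n-1)*(n-k-2)*c := by
      have := mul_lt_mul_of_pos_right hs' (show (0:ℝ) < k-2 by linarith)
      have e3 : (n-1)*R*(k-2) = (n-1)*(n-k-2)*c := by linear_combination (1-n:ℝ)*hRc
      linarith
    have s2 := mul_lt_mul_of_pos_left s1 (show (0:ℝ) < n-1-2*k by linarith)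
    have s3 := mul_le_mul_of_nonneg_left hc2' (show (0:ℝ) ≤ (n-1)*(n-k-2) by
      apply mul_nonneg <;> linarith)
    have s4 := mul_le_mul_of_nonneg_left p1 hγ.le
    linarith
  · have r := K1 (n-4) (by omega) (by omega) h
    have eY : ((n-3).choose (k-2) : ℝ) * (n-2) = (n-2).choose (k-2) * (n-k) :=
      ch_top (by omega) (by omega) cn2 (by rw [cn2, ck2]; ring)
    have eZ : ((n-4).choose (k-2) : ℝ) * (n-3) = (n-3).choose (k-2) * (n-k-1) :=
      ch_top (by omega) (by omega) cn3 (by rw [cn3, ck2]; ring)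
    have eW : ((n-4).choose (k-1) : ℝ) * (k-1) = (n-4).choose (k-2) * (n-k-2) :=
      ch_up (by omega) (by omega) ck1 (by rw [cn4, ck2]; ring)
    have hb := bern (n-k-2) k (k-2) (by omega)
    rw [show n-k-2+k = n-2 by omega, cN, ck2] at hb
    have p2 := poly2 n k hk hn
    have r' : ((n-4).choose (k-1) : ℝ) ≤ S := by exact_mod_cast r
    have hlt' : (γ:ℝ) < (n-3).choose (k-2) := by exact_mod_cast hlt
    have hP : (0:ℝ) < (n-2).choose (k-2) := by exact_mod_cast Nat.choose_pos (by omega)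
    set P : ℝ := ((n-2).choose (k-2) : ℝ)
    set Y : ℝ := ((n-3).choose (k-2) : ℝ)
    set Z : ℝ := ((n-4).choose (k-2) : ℝ)
    set W : ℝ := ((n-4).choose (k-1) : ℝ)
    set R : ℝ := ((n-k-2).choose (k-2) : ℝ)
    have s1 : W * (k-1) < k * Y + (n-1) * R := by
      have t1 := mul_le_mul_of_nonneg_right r' (show (0:ℝ) ≤ k-1 by linarith)
      have t2 := mul_lt_mul_of_pos_left hlt' (show (0:ℝ) < k by linarith)
      linarith
    have hQ : (0:ℝ) < (n-2)*(n-3) := by apply mul_pos <;> linarith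
    have s2 := mul_lt_mul_of_pos_right s1 hQ
    have e1 : W * (k-1) * ((n-2)*(n-3)) = P * (n-k) * (n-k-1) * (n-k-2) := by
      linear_combination ((n-2)*(n-3):ℝ) * eW + ((n-k-2)*(n-2):ℝ) * eZ
        + ((n-k-2)*(n-k-1):ℝ) * eY
    have e2 : Y * ((n-2)*(n-3)) = P * (n-k) * (n-3) := by
      linear_combination (n-3:ℝ) * eY
    have s3 : P * ((n-k)*((n-k-1)*(n-k-2)-k*(n-3))) < (n-1)*((n-2)*(n-3))*R := by
      have e3 : k * (Y * ((n-2)*(n-3))) = k * (P * (n-k) * (n-3)) := by rw [e2]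
      linarith
    have hU : (0:ℝ) < (n-k-2)+k*(k-2) := by nlinarith
    have s4 := mul_lt_mul_of_pos_right s3 hU
    have s5 := mul_le_mul_of_nonneg_left hb (show (0:ℝ) ≤ (n-1)*((n-2)*(n-3)) by
      apply mul_nonneg _ hQ.le; linarith)
    have s6 := mul_le_mul_of_nonneg_left p2 hP.le
    linarith

end HMdeg

namespace HMdeg
open Finset

/-- Consequence of the ratio bound with `y = n - 3`. -/
lemma c4_aux (n k S γ : ℕ) (hk : 30 ≤ k) (hn : 2 * k + 5 ≤ n)
    (K2 : ∀ y, n - k - 1 ≤ y → y ≤ n → γ ≤ y.choose (n-k-1) →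
        γ * y.choose (k-1) ≤ S * y.choose (n-k-1))
    (hs : (k-1) * S < k * γ + (n-1) * (n-k-2).choose (k-2))
    (hlt : γ < (n-3).choose (k-2)) :
    (γ:ℝ) * (n - 2*k - 1) < (n-1) * (n-k-2).choose (k-2) := by
  have ck1 := cst (show (k-1) + 1 = k by omega)
  have ck2 := cst (show (k-2) + 2 = k by omega)
  have cn1 := cst (show (n-1) + 1 = n by omega)
  have cn3 := cst (show (n-3) + 3 = n by omega)
  push_cast at ck1 ck2 cn1 cn3
  have hs' : ((k:ℝ)-1) * S < k * γ + (n-1) * (n-k-2).choose (k-2) := by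
    rw [← ck1, ← cn1]; exact_mod_cast hs
  have hk' : (30:ℝ) ≤ k := by exact_mod_cast hk
  have hsym : (n-3).choose (n-k-1) = (n-3).choose (k-2) :=
    Nat.choose_symm_of_eq_add (by omega)
  have r := K2 (n-3) (by omega) (by omega) (by rw [hsym]; exact hlt.le)
  rw [hsym] at r
  have r' : (γ:ℝ) * (n-3).choose (k-1) ≤ S * (n-3).choose (k-2) := by exact_mod_cast r
  have e2 : ((n-3).choose (k-1) : ℝ) * (k-1) = (n-3).choose (k-2) * (n-k-1) :=
    ch_up (by omega) (by omega) ck1 (by rw [cn3, ck2]; ring)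
  have hpos : (0:ℝ) < (n-3).choose (k-2) := by exact_mod_cast Nat.choose_pos (by omega)
  have r2 := ratio_num hpos (show (0:ℝ) ≤ k-1 by linarith) r' e2
  linarith

/-- Consequence of a lower bound on `S` of the form `ρ γ ≤ S`. -/
lemma c3_aux (n k S γ : ℕ) (hk : 30 ≤ k) (hn : 2 * k + 5 ≤ n)
    (hs : (k-1) * S < k * γ + (n-1) * (n-k-2).choose (k-2))
    (hc : (n-k-3).choose (k-3) < γ) :
    ((k:ℝ)-1) * (k-2) * S < (k * (k-2) + (n-1)*(n-k-2)) * γ := by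
  have ck1 := cst (show (k-1) + 1 = k by omega)
  have ck2 := cst (show (k-2) + 2 = k by omega)
  have cn1 := cst (show (n-1) + 1 = n by omega)
  have cN := cst (show (n-k-2) + (k+2) = n by omega)
  push_cast at ck1 ck2 cn1 cN
  have hs' : ((k:ℝ)-1) * S < k * γ + (n-1) * (n-k-2).choose (k-2) := by
    rw [← ck1, ← cn1]; exact_mod_cast hs
  have hk' : (30:ℝ) ≤ k := by exact_mod_cast hk
  have hn' : 2 * (k:ℝ) + 5 ≤ n := by exact_mod_cast hn
  have hc' : ((n-k-3).choose (k-3) : ℝ) ≤ γ := by exact_mod_cast hc.le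
  have hRc : ((n-k-3).choose (k-3) : ℝ) * (n-k-2) = (n-k-2).choose (k-2) * (k-2) :=
    ch_diag (by omega) (by omega) (by rw [cN]; ring) ck2
  set c : ℝ := ((n-k-3).choose (k-3) : ℝ)
  set R : ℝ := ((n-k-2).choose (k-2) : ℝ)
  have h1 := mul_lt_mul_of_pos_right hs' (show (0:ℝ) < k-2 by linarith)
  have e3 : (n-1)*R*(k-2) = (n-1)*(n-k-2)*c := by linear_combination (1-n:ℝ)*hRc
  have h2 := mul_le_mul_of_nonneg_left hc' (show (0:ℝ) ≤ (n-1)*(n-k-2) by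
      apply mul_nonneg <;> linarith)
  linarith

lemma pow5 {γ S K M : ℝ} {a b : Fin 5 → ℝ} (hK : 0 < K) (hM : 0 < M) (hγ : 0 ≤ γ)
    (ha : ∀ i, 0 < a i) (hb : ∀ i, b i * M ≤ a i * K) (hb0 : ∀ i, 0 < b i)
    (h : γ * ∏ i, a i ≤ S * ∏ i, b i) : γ * M^5 ≤ S * K^5 := by
  have h1 : (∏ i, b i) * M^5 ≤ (∏ i, a i) * K^5 := by
    have := Finset.prod_le_prod (s := univ) (fun i _ => (mul_pos (hb0 i) hM).le) (fun i _ => hb i)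
    simpa [Finset.prod_mul_distrib] using this
  have hB : 0 < ∏ i, b i := Finset.prod_pos fun i _ => hb0 i
  have h2 : γ * M^5 * (∏ i, b i) ≤ S * K^5 * ∏ i, b i := by
    calc γ * M^5 * (∏ i, b i) = γ * ((∏ i, b i) * M^5) := by ring
      _ ≤ γ * ((∏ i, a i) * K^5) := by gcongr
      _ = (γ * ∏ i, a i) * K^5 := by ring
      _ ≤ (S * ∏ i, b i) * K^5 := by gcongr
      _ = _ := by ring
  exact le_of_mul_le_mul_right h2 hB

lemma poly3 (n k : ℕ) (hk : 30 ≤ k) (hn : 12 * k ≤ 5 * n) :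
    (k:ℝ)^2 * (k * (k-2) + (n-1)*(n-k-2)) ≤ 343/125 * (n-k)^2 * ((k-1)*(k-2)) := by
  have hk' : (30:ℝ) ≤ k := by exact_mod_cast hk
  have hn' : 12 * (k:ℝ) ≤ 5 * n := by exact_mod_cast hn
  obtain ⟨j, hj⟩ : ∃ j : ℝ, (k:ℝ) = 30 + j := ⟨k - 30, by ring⟩
  obtain ⟨e, he⟩ : ∃ e : ℝ, (n:ℝ) = 12/5 * k + e := ⟨n - 12/5*k, by ring⟩
  have hj0 : 0 ≤ j := by linarith
  have he0 : 0 ≤ e := by linarith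
  rw [he, hj, ← sub_nonneg]
  ring_nf
  positivity

lemma mid_n_c3 (n k S γ : ℕ) (hk : 30 ≤ k) (hn : 2 * k + 5 ≤ n) (hn2 : 12 * k ≤ 5 * n)
    (K2 : ∀ y, n - k - 1 ≤ y → y ≤ n → γ ≤ y.choose (n-k-1) →
        γ * y.choose (k-1) ≤ S * y.choose (n-k-1))
    (hs : (k-1) * S < k * γ + (n-1) * (n-k-2).choose (k-2))
    (hc : (n-k-3).choose (k-3) < γ) (h : γ ≤ (n-7).choose (n-k-1)) : False := by
  have hs' := c3_aux n k S γ hk hn hs hc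
  have hk' : (30:ℝ) ≤ k := by exact_mod_cast hk
  have hn' : 2 * (k:ℝ) + 5 ≤ n := by exact_mod_cast hn
  have hn2' : 12 * (k:ℝ) ≤ 5 * n := by exact_mod_cast hn2
  have hγ : (0:ℝ) < γ := by
    have : 0 < γ := by omega
    exact_mod_cast this
  have ck1 := cst (show (k-1) + 1 = k by omega)
  have ck2 := cst (show (k-2) + 2 = k by omega)
  have ck3 := cst (show (k-3) + 3 = k by omega)
  have ck4 := cst (show (k-4) + 4 = k by omega)
  have ck5 := cst (show (k-5) + 5 = k by omega)
  have ck6 := cst (show (k-6) + 6 = k by omega)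
  have cn7 := cst (show (n-7) + 7 = n by omega)
  push_cast at ck1 ck2 ck3 ck4 ck5 ck6 cn7
  have hsym : (n-7).choose (n-k-1) = (n-7).choose (k-6) :=
    Nat.choose_symm_of_eq_add (by omega)
  have r := K2 (n-7) (by omega) (by omega) h
  rw [hsym] at r
  have r' : (γ:ℝ) * (n-7).choose (k-1) ≤ S * (n-7).choose (k-6) := by exact_mod_cast r
  have e1 : ((n-7).choose (k-1) : ℝ) * (k-1) = (n-7).choose (k-2) * (n-k-5) :=
    ch_up (by omega) (by omega) ck1 (by rw [cn7, ck2]; ring)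
  have e2 : ((n-7).choose (k-2) : ℝ) * (k-2) = (n-7).choose (k-3) * (n-k-4) :=
    ch_up (by omega) (by omega) ck2 (by rw [cn7, ck3]; ring)
  have e3 : ((n-7).choose (k-3) : ℝ) * (k-3) = (n-7).choose (k-4) * (n-k-3) :=
    ch_up (by omega) (by omega) ck3 (by rw [cn7, ck4]; ring)
  have e4 : ((n-7).choose (k-4) : ℝ) * (k-4) = (n-7).choose (k-5) * (n-k-2) :=
    ch_up (by omega) (by omega) ck4 (by rw [cn7, ck5]; ring)
  have e5 : ((n-7).choose (k-5) : ℝ) * (k-5) = (n-7).choose (k-6) * (n-k-1) :=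
    ch_up (by omega) (by omega) ck5 (by rw [cn7, ck6]; ring)
  have hpos : (0:ℝ) < (n-7).choose (k-6) := by exact_mod_cast Nat.choose_pos (by omega)
  have hcast : ∀ i : Fin 5, 0 ≤ ((i:ℕ):ℝ) ∧ ((i:ℕ):ℝ) ≤ 4 := by
    intro i
    refine ⟨by positivity, ?_⟩
    have : (i:ℕ) ≤ 4 := by omega
    exact_mod_cast this
  have hm : (γ:ℝ) * ((n:ℝ)-k)^5 ≤ S * (k:ℝ)^5 := by
    refine pow5 (a := fun i : Fin 5 => (n:ℝ)-k-1-(i:ℕ)) (b := fun i : Fin 5 => (k:ℝ)-1-(i:ℕ))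
      (by linarith) (by linarith) hγ.le ?_ ?_ ?_ ?_
    · intro i; have := hcast i; linarith
    · intro i; have := hcast i
      nlinarith
    · intro i; have := hcast i; linarith
    · refine ratio_num hpos (Finset.prod_nonneg fun i _ => ?_) r' ?_
      · have := hcast i; linarith
      · simp only [Fin.prod_univ_five]
        norm_num
        linear_combination ((k-2)*(k-3)*(k-4)*(k-5):ℝ) * e1 + ((n-k-5)*(k-3)*(k-4)*(k-5):ℝ) * e2
          + ((n-k-5)*(n-k-4)*(k-4)*(k-5):ℝ) * e3 + ((n-k-5)*(n-k-4)*(n-k-3)*(k-5):ℝ) * e4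
          + ((n-k-5)*(n-k-4)*(n-k-3)*(n-k-2):ℝ) * e5
  have h3 : 343/125 * (k:ℝ)^3 ≤ ((n:ℝ)-k)^3 := by
    have : (7/5 * (k:ℝ))^3 ≤ ((n:ℝ)-k)^3 := by
      gcongr; linarith
    linarith [this, show (7/5 * (k:ℝ))^3 = 343/125 * (k:ℝ)^3 by ring]
  have hm2 : (γ:ℝ) * (343/125 * ((n:ℝ)-k)^2) ≤ S * (k:ℝ)^2 := by
    have hk3 : (0:ℝ) < (k:ℝ)^3 := by positivity
    refine le_of_mul_le_mul_right ?_ hk3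
    have := mul_le_mul_of_nonneg_left h3 (show (0:ℝ) ≤ γ * ((n:ℝ)-k)^2 by positivity)
    calc (γ:ℝ) * (343/125 * ((n:ℝ)-k)^2) * (k:ℝ)^3 = γ * ((n:ℝ)-k)^2 * (343/125 * (k:ℝ)^3) := by ring
      _ ≤ γ * ((n:ℝ)-k)^2 * ((n:ℝ)-k)^3 := this
      _ = γ * ((n:ℝ)-k)^5 := by ring
      _ ≤ S * (k:ℝ)^5 := hm
      _ = _ := by ring
  have p3 := poly3 n k hk hn2
  have q1 := mul_le_mul_of_nonneg_left p3 hγ.le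
  have q2 := mul_le_mul_of_nonneg_right hm2 (show (0:ℝ) ≤ (k-1)*(k-2) by
    apply mul_nonneg <;> linarith)
  have q3 := mul_lt_mul_of_pos_left hs' (show (0:ℝ) < (k:ℝ)^2 by positivity)
  linarith

end HMdeg

namespace HMdeg
open Finset

lemma mid_n_c4 (n k S γ : ℕ) (hk : 30 ≤ k) (hn : 2 * k + 5 ≤ n) (hn2 : 12 * k ≤ 5 * n)
    (hn4 : n ≤ 4 * k)
    (K2 : ∀ y, n - k - 1 ≤ y → y ≤ n → γ ≤ y.choose (n-k-1) →
        γ * y.choose (k-1) ≤ S * y.choose (n-k-1))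
    (hs : (k-1) * S < k * γ + (n-1) * (n-k-2).choose (k-2))
    (hlt : γ < (n-3).choose (k-2)) (h : (n-7).choose (n-k-1) ≤ γ) : False := by
  have hs' := c4_aux n k S γ hk hn K2 hs hlt
  have hk' : (30:ℝ) ≤ k := by exact_mod_cast hk
  have hn' : 2 * (k:ℝ) + 5 ≤ n := by exact_mod_cast hn
  have hn2' : 12 * (k:ℝ) ≤ 5 * n := by exact_mod_cast hn2
  have hn4' : (n:ℝ) ≤ 4 * k := by exact_mod_cast hn4
  have ck2 := cst (show (k-2) + 2 = k by omega)
  have ck3 := cst (show (k-3) + 3 = k by omega)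
  have ck4 := cst (show (k-4) + 4 = k by omega)
  have ck5 := cst (show (k-5) + 5 = k by omega)
  have ck6 := cst (show (k-6) + 6 = k by omega)
  have cN := cst (show (n-k-2) + (k+2) = n by omega)
  have cn7 := cst (show (n-7) + 7 = n by omega)
  push_cast at ck2 ck3 ck4 ck5 ck6 cN cn7
  have hsym : (n-7).choose (n-k-1) = (n-7).choose (k-6) :=
    Nat.choose_symm_of_eq_add (by omega)
  rw [hsym] at h
  have h' : ((n-7).choose (k-6) : ℝ) ≤ γ := by exact_mod_cast h
  have e2 : ((n-k-2).choose (k-2) : ℝ) * (k-2) = (n-k-2).choose (k-3) * (n-2*k+1) :=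
    ch_up (by omega) (by omega) ck2 (by rw [cN, ck3]; ring)
  have e3 : ((n-k-2).choose (k-3) : ℝ) * (k-3) = (n-k-2).choose (k-4) * (n-2*k+2) :=
    ch_up (by omega) (by omega) ck3 (by rw [cN, ck4]; ring)
  have e4 : ((n-k-2).choose (k-4) : ℝ) * (k-4) = (n-k-2).choose (k-5) * (n-2*k+3) :=
    ch_up (by omega) (by omega) ck4 (by rw [cN, ck5]; ring)
  have e5 : ((n-k-2).choose (k-5) : ℝ) * (k-5) = (n-k-2).choose (k-6) * (n-2*k+4) :=
    ch_up (by omega) (by omega) ck5 (by rw [cN, ck6]; ring)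
  have hg : ((n-k-2).choose (k-6) : ℝ) * ((n:ℝ)-7)^(k-6) ≤ (n-7).choose (k-6) * ((n:ℝ)-k-2)^(k-6) := by
    have := gpow (n-k-2) (k-5) (k-6)
    rw [show n-k-2+(k-5) = n-7 by omega] at this
    have t : (((n-k-2).choose (k-6) * (n-7)^(k-6) : ℕ) : ℝ) ≤ ((n-7).choose (k-6) * (n-k-2)^(k-6) : ℕ) := by
      exact_mod_cast this
    push_cast at t
    rw [cn7, cN] at t
    rwa [show (n:ℝ)-k-2 = n - (k+2) by ring]
  have step : ∀ (X Y p q : ℝ), 0 < p → X * p = Y * q → 0 ≤ Y → 25 * q ≤ 64 * p → X ≤ 64/25 * Y := by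
    intro X Y p q hp e hY hq
    have : X * p ≤ 64/25 * Y * p := by rw [e]; nlinarith
    exact le_of_mul_le_mul_right this hp
  have s2 := step _ _ _ _ (by linarith) e2 (by positivity) (by linarith)
  have s3 := step _ _ _ _ (by linarith) e3 (by positivity) (by linarith)
  have s4 := step _ _ _ _ (by linarith) e4 (by positivity) (by linarith)
  have s5 := step _ _ _ _ (by linarith) e5 (by positivity) (by linarith)
  have hN : (0:ℝ) < (n:ℝ)-k-2 := by linarith
  have hr : (113/88:ℝ) ≤ ((n:ℝ)-7)/(n-k-2) := by
    rw [le_div_iff₀ hN]; linarith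
  have hp : (113/88:ℝ)^24 ≤ (((n:ℝ)-7)/(n-k-2))^(k-6) :=
    calc (113/88:ℝ)^24 ≤ (113/88:ℝ)^(k-6) := pow_le_pow_right₀ (by norm_num) (by omega)
      _ ≤ _ := by gcongr
  rw [div_pow ((n:ℝ)-7)] at hp
  have hp2 : (113/88:ℝ)^24 * ((n-k-2).choose (k-6) : ℝ) ≤ (n-7).choose (k-6) := by
    have hNp : (0:ℝ) < ((n:ℝ)-k-2)^(k-6) := by positivity
    rw [le_div_iff₀ hNp] at hp
    refine le_of_mul_le_mul_right ?_ hNp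
    calc _ = ((n-k-2).choose (k-6) : ℝ) * ((113/88:ℝ)^24 * ((n:ℝ)-k-2)^(k-6)) := by ring
      _ ≤ ((n-k-2).choose (k-6) : ℝ) * ((n:ℝ)-7)^(k-6) := by gcongr
      _ ≤ _ := hg
  have hX : (0:ℝ) ≤ ((n-k-2).choose (k-6) : ℝ) := by positivity
  have hR : 7 * ((n-k-2).choose (k-2) : ℝ) ≤ γ := by
    have : 7 * ((64/25:ℝ)^4 * ((n-k-2).choose (k-6) : ℝ)) ≤ (113/88:ℝ)^24 * ((n-k-2).choose (k-6) : ℝ) := by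
      rw [← mul_assoc]
      apply mul_le_mul_of_nonneg_right _ hX
      norm_num
    linarith
  have hR0 : (0:ℝ) ≤ ((n-k-2).choose (k-2) : ℝ) := by positivity
  have : ((n:ℝ)-1) * (n-k-2).choose (k-2) ≤ 7 * (n-2*k-1) * (n-k-2).choose (k-2) := by
    apply mul_le_mul_of_nonneg_right _ hR0
    linarith
  have t := mul_le_mul_of_nonneg_right hR (show (0:ℝ) ≤ n-2*k-1 by linarith)
  linarith

lemma ch_anti (y b m : ℕ) (h : y ≤ 2 * b + 1) : y.choose (b + m) ≤ y.choose b := by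
  induction m with
  | zero => simp
  | succ m ih =>
    refine le_trans ?_ ih
    have := Nat.choose_succ_right_eq y (b+m)
    rw [← add_assoc]
    by_contra! hlt
    have h1 : y - (b+m) ≤ b + m + 1 := by omega
    have h2 := Nat.mul_le_mul_left (y.choose (b+m)) h1
    have h3 := Nat.mul_lt_mul_of_pos_right hlt (show 0 < b+m+1 by omega)
    omega

lemma ch_mono (y b m : ℕ) (h : 2 * (b + m) ≤ y + 1) : y.choose b ≤ y.choose (b+m) := by
  induction m with
  | zero => simp
  | succ m ih =>
    refine le_trans (ih (by omega)) ?_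
    have := Nat.choose_succ_right_eq y (b+m)
    rw [← add_assoc]
    by_contra! hlt
    have h1 : b + m + 1 ≤ y - (b+m) := by omega
    have h2 := Nat.mul_le_mul_left (y.choose (b+m)) h1
    have h3 := Nat.mul_lt_mul_of_pos_right hlt (show 0 < b+m+1 by omega)
    omega

lemma small_n_c3 (n k S γ u : ℕ) (hk : 30 ≤ k) (hn : 2 * k + 5 ≤ n) (hn2 : 5 * n < 12 * k)
    (hu : u = k / 2)
    (K2 : ∀ y, n - k - 1 ≤ y → y ≤ n → γ ≤ y.choose (n-k-1) →
        γ * y.choose (k-1) ≤ S * y.choose (n-k-1))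
    (hs : (k-1) * S < k * γ + (n-1) * (n-k-2).choose (k-2))
    (hc : (n-k-3).choose (k-3) < γ) (h : γ ≤ (n-1-u).choose (n-k-1)) : False := by
  have hs' := c3_aux n k S γ hk hn hs hc
  have hk' : (30:ℝ) ≤ k := by exact_mod_cast hk
  have hn' : 2 * (k:ℝ) + 5 ≤ n := by exact_mod_cast hn
  have hn2' : 5 * (n:ℝ) ≤ 12 * k := by exact_mod_cast hn2.le
  have hγ : (0:ℝ) < γ := by
    have : 0 < γ := by omega
    exact_mod_cast this
  have r := K2 (n-1-u) (by omega) (by omega) h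
  have step : ∀ r, n - k - 6 ≤ r → 7 * (n-1-u).choose (r+1) ≤ 5 * (n-1-u).choose r := by
    intro r hr
    have e := Nat.choose_succ_right_eq (n-1-u) r
    have h1 : 7 * (n-1-u-r) ≤ 5 * (r+1) := by omega
    have h2 := Nat.mul_le_mul_left ((n-1-u).choose r) h1
    refine Nat.le_of_mul_le_mul_right (c := r+1) ?_ (by omega)
    calc 7 * (n-1-u).choose (r+1) * (r+1) = 7 * ((n-1-u).choose (r+1) * (r+1)) := by ring
      _ = (n-1-u).choose r * (7 * (n-1-u-r)) := by rw [e]; ring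
      _ ≤ _ := h2
      _ = _ := by ring
  have t1 := step (n-k-6) (by omega)
  have t2 := step (n-k-6+1) (by omega)
  have t3 := step (n-k-6+1+1) (by omega)
  have t4 := step (n-k-6+1+1+1) (by omega)
  have t5 := step (n-k-6+1+1+1+1) (by omega)
  rw [show n-k-6+1+1+1+1+1 = n-k-1 by omega] at t5
  have t6 := ch_anti (n-1-u) (k-1) (n-k-6-(k-1)) (by omega)
  rw [show k-1+(n-k-6-(k-1)) = n-k-6 by omega] at t6
  have t7 : 5 * (n-1-u).choose (n-k-1) ≤ (n-1-u).choose (k-1) := by omega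
  have hpos : 0 < (n-1-u).choose (n-k-1) := Nat.choose_pos (by omega)
  have hS : γ * 5 ≤ S := by
    refine Nat.le_of_mul_le_mul_right (c := (n-1-u).choose (n-k-1)) ?_ hpos
    calc γ * 5 * (n-1-u).choose (n-k-1) = γ * (5 * (n-1-u).choose (n-k-1)) := by ring
      _ ≤ γ * (n-1-u).choose (k-1) := Nat.mul_le_mul_left _ t7
      _ ≤ _ := r
  have hS' : (γ:ℝ) * 5 ≤ S := by exact_mod_cast hS
  have p : (k:ℝ) * (k-2) + (n-1)*(n-k-2) ≤ 5 * ((k-1)*(k-2)) := by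
    have a1 : (n:ℝ) - 1 ≤ 12/5*k-1 := by linarith
    have a2 : (n:ℝ) - k - 2 ≤ 7/5*k-2 := by linarith
    have := mul_le_mul a1 a2 (by linarith) (by linarith)
    nlinarith
  have q1 := mul_le_mul_of_nonneg_right p hγ.le
  have q2 := mul_le_mul_of_nonneg_left hS' (show (0:ℝ) ≤ (k-1)*(k-2) by
    apply mul_nonneg <;> linarith)
  linarith

lemma poly4 (d k u : ℝ) (hk : 30 ≤ k) (hd : 5 ≤ d) (hd2 : 5 * d ≤ 2 * k) (hu : 2 * u ≤ k) :
    (d+1)*(2*k+d-1)*(k+d-2) ≤ (d-1)*(2*k-1-u)*((k+d-2)+d*(k+1-u)) := by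
  have h1 : 3/2*k-1 ≤ 2*k-1-u := by linarith
  have h2 : (k+d-2)+d*(k/2+1) ≤ (k+d-2)+d*(k+1-u) := by nlinarith
  have h3 : 2/3*(d+1) ≤ d-1 := by linarith
  have h4 : (2*k+d-1)*(k+d-2) ≤ (k-2/3)*((k+d-2)+d*(k/2+1)) := by
    have k0 : 0 ≤ k := by linarith
    have d0 : 0 ≤ d := by linarith
    have hdk : 30 * d * k ≤ d * k * k := by
      have := mul_le_mul_of_nonneg_left hk (mul_nonneg d0 k0)
      linarith
    have hdd : 5 * d * d ≤ 2 * d * k := by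
      have := mul_le_mul_of_nonneg_right hd2 d0
      linarith
    have hkk : 5 * k * k ≤ d * k * k := by
      have := mul_le_mul_of_nonneg_right hd (mul_nonneg k0 k0)
      linarith
    linarith [mul_nonneg d0 k0]
  calc (d+1)*(2*k+d-1)*(k+d-2) = (d+1)*((2*k+d-1)*(k+d-2)) := by ring
    _ ≤ (d+1)*((k-2/3)*((k+d-2)+d*(k/2+1))) := by
      apply mul_le_mul_of_nonneg_left h4; linarith
    _ = (2/3*(d+1))*(3/2*k-1)*((k+d-2)+d*(k/2+1)) := by ring
    _ ≤ (d-1)*(2*k-1-u)*((k+d-2)+d*(k+1-u)) := by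
      have p0 : 0 ≤ d * (k/2+1) := by apply mul_nonneg <;> linarith
      apply mul_le_mul _ h2
      · linarith
      · apply mul_nonneg <;> linarith
      · apply mul_le_mul h3 h1 <;> linarith

lemma small_n_c4 (n k S γ u : ℕ) (hk : 30 ≤ k) (hn : 2 * k + 5 ≤ n) (hn2 : 5 * n < 12 * k)
    (hu : u = k / 2)
    (K2 : ∀ y, n - k - 1 ≤ y → y ≤ n → γ ≤ y.choose (n-k-1) →
        γ * y.choose (k-1) ≤ S * y.choose (n-k-1))
    (hs : (k-1) * S < k * γ + (n-1) * (n-k-2).choose (k-2))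
    (hlt : γ < (n-3).choose (k-2)) (h : (n-1-u).choose (n-k-1) ≤ γ) : False := by
  have hs' := c4_aux n k S γ hk hn K2 hs hlt
  obtain ⟨d, rfl⟩ : ∃ d, n = 2 * k + d := ⟨n - 2*k, by omega⟩
  have hR : (2*k+d-k-2).choose (k-2) = (2*k+d-k-2).choose d := Nat.choose_symm_of_eq_add (by omega)
  have hA : (2*k+d-1-u).choose (2*k+d-k-1) = (2*k+d-1-u).choose (k-u) :=
    Nat.choose_symm_of_eq_add (by omega)
  rw [hR] at hs'
  rw [hA] at h
  have hm := ch_mono (2*k+d-1-u) (d+1) (k-u-(d+1)) (by omega)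
  rw [show d+1+(k-u-(d+1)) = k-u by omega] at hm
  have hγ : ((2*k+d-1-u).choose (d+1) : ℝ) ≤ γ := by exact_mod_cast hm.trans h
  have hk' : (30:ℝ) ≤ k := by exact_mod_cast hk
  have hd' : (5:ℝ) ≤ d := by exact_mod_cast (show 5 ≤ d by omega)
  have hd2' : 5 * (d:ℝ) ≤ 2 * k := by exact_mod_cast (show 5 * d ≤ 2 * k by omega)
  have hu' : 2 * (u:ℝ) ≤ k := by exact_mod_cast (show 2 * u ≤ k by omega)
  have cy := cst (show (2*k+d-1-u) + (u+1) = 2*k+d by omega)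
  have cN := cst (show (2*k+d-k-2) + (k+2) = 2*k+d by omega)
  have ct := cst (show (k+1-u) + u = k+1 by omega)
  push_cast at cy cN ct hs'
  have e1 : ((2*k+d-1-u).choose (d+1) : ℝ) * (d+1) = (2*k+d-1-u).choose d * (2*k-1-u) :=
    ch_up rfl (by omega) (by push_cast; ring) (by rw [cy]; ring)
  have hb := bern (2*k+d-k-2) (k+1-u) d (by omega)
  rw [show 2*k+d-k-2+(k+1-u) = 2*k+d-1-u by omega, cN, ct] at hb
  have p := poly4 d k u hk' hd' hd2' hu'
  set R : ℝ := ((2*k+d-k-2).choose d : ℝ)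
  have hR0 : 0 ≤ R := by positivity
  set Y : ℝ := ((2*k+d-1-u).choose d : ℝ)
  set Y1 : ℝ := ((2*k+d-1-u).choose (d+1) : ℝ)
  have q0 : Y1 * (d-1) < (2*k+d-1) * R := by
    have := mul_le_mul_of_nonneg_right hγ (show (0:ℝ) ≤ d-1 by linarith)
    linarith
  have q1 := mul_lt_mul_of_pos_right q0 (show (0:ℝ) < (d+1)*(k+d-2) by
    apply mul_pos <;> linarith)
  have q2 := mul_le_mul_of_nonneg_right p hR0
  have q3 := mul_le_mul_of_nonneg_left hb (show (0:ℝ) ≤ (d-1)*(2*k-1-u) by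
    apply mul_nonneg <;> linarith)
  have e2 : Y1 * (d-1) * ((d+1)*(k+d-2)) = (Y * (2*k-1-u)) * ((d-1)*(k+d-2)) := by
    rw [← e1]; ring
  linarith

theorem part2 (n k S γ : ℕ) (hk : 30 ≤ k) (hn : 2 * k + 5 ≤ n)
    (K1 : ∀ y, n - k - 1 ≤ y → y ≤ n → y.choose (n-k-1) ≤ γ → y.choose (k-1) ≤ S)
    (K2 : ∀ y, n - k - 1 ≤ y → y ≤ n → γ ≤ y.choose (n-k-1) →
        γ * y.choose (k-1) ≤ S * y.choose (n-k-1))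
    (hs : (k-1) * S < k * γ + (n-1) * (n-k-2).choose (k-2))
    (hc : (n-k-3).choose (k-3) < γ) (hc2 : (n-1-2*k) * (n-k-3).choose (k-3) ≤ k * γ)
    (hlt : γ < (n-3).choose (k-2)) : False := by
  rcases le_total (4 * k) n with h4 | h4
  · exact big_n n k S γ hk h4 K1 K2 hs hc hc2 hlt
  rcases Nat.lt_or_ge (5 * n) (12 * k) with h5 | h5
  · rcases le_total γ ((n-1-k/2).choose (n-k-1)) with h | h
    · exact small_n_c3 n k S γ _ hk hn h5 rfl K2 hs hc h
    · exact small_n_c4 n k S γ _ hk hn h5 rfl K2 hs hlt h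
  · rcases le_total γ ((n-7).choose (n-k-1)) with h | h
    · exact mid_n_c3 n k S γ hk hn h5 K2 hs hc h
    · exact mid_n_c4 n k S γ hk hn h5 h4 K2 hs hlt h

end HMdeg

namespace HMdeg

lemma binom3 (m : ℕ) (w : ℝ) (hw : 0 ≤ w) :
    1 + m * w + m * (m-1) / 2 * w^2 + m*(m-1)*(m-2)/6 * w^3 ≤ (1+w)^m := by
  induction m with
  | zero => simp
  | succ m ih =>
    have h3 : (0:ℝ) ≤ m*(m-1)*(m-2) := by
      rcases m with _ | _ | m
      · simp
      · simp
      · push_cast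
        have : (0:ℝ) ≤ m := by positivity
        rw [show ((m:ℝ)+1+1)*(m+1+1-1)*(m+1+1-2) = (m+2)*(m+1)*m by ring]
        positivity
    have := mul_le_mul_of_nonneg_right ih (show (0:ℝ) ≤ 1 + w by linarith)
    rw [pow_succ]
    refine le_trans ?_ this
    push_cast
    have h4 : 0 ≤ m*(m-1)*(m-2) * w^4 := by positivity
    linarith

/-- regime A, first inequality -/
lemma regA1 (n k g : ℝ) (hk : 30 ≤ k) (hn : 2*k+5 ≤ n) (hA : 3*n ≤ k^2) (hg0 : 0 ≤ g)
    (hg : g * ((k-2)*(k-3)/2*(k/(n-k-2))^2 + (k-2)*(k-3)*(k-4)/6*(k/(n-k-2))^3) ≤ 1) :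
    k^2*(n-1)*g < (n-2*k)*(n-k) := by
  obtain ⟨e, rfl⟩ : ∃ e, n = 2*k+e := ⟨n-2*k, by ring⟩
  have he : 5 ≤ e := by linarith
  have hN : 0 < 2*k+e-k-2 := by linarith
  set N := 2*k+e-k-2 with hNdef
  have h1 : g * ((k-2)*(k-3)*(3*N+(k-4)*k)*k^2) ≤ 6 * N^3 := by
    have e1 : (k-2)*(k-3)/2*(k/N)^2 + (k-2)*(k-3)*(k-4)/6*(k/N)^3 =
      ((k-2)*(k-3)*(3*N+(k-4)*k)*k^2) / (6*N^3) := by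
      field_simp
      ring
    rw [e1, ← mul_div_assoc, div_le_one (by positivity)] at hg
    exact hg
  have a1 : 2.52*(2*k+e) ≤ (k-2)*(k-3) := by nlinarith
  have a2 : 0.866*k^2 ≤ (k-4)*k := by nlinarith
  have a3 : (k+e)*N ≤ 0.42 * e * (3*N+(k-4)*k) := by
    have b1 : 5*k^2 ≤ e*k^2 := mul_le_mul_of_nonneg_right he (by positivity)
    have b2 : 30*(e*k) ≤ e*k^2 := by
      have := mul_le_mul_of_nonneg_left hk (show 0 ≤ e*k by positivity)
      linarith
    have b3 := mul_le_mul_of_nonneg_left a2 (show 0 ≤ e by linarith)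
    rw [hNdef]
    nlinarith
  have a4 : 6*(2*k+e-1)*((k+e)*N) ≤ e * ((k-2)*(k-3)*(3*N+(k-4)*k)) := by
    have c1 : 0 ≤ 3*N+(k-4)*k := by nlinarith
    calc 6*(2*k+e-1)*((k+e)*N) ≤ 6*(2*k+e)*(0.42 * e * (3*N+(k-4)*k)) := by
          apply mul_le_mul _ a3
          · apply mul_nonneg _ hN.le; linarith
          · linarith
          · linarith
      _ = (2.52*(2*k+e)) * (e * (3*N+(k-4)*k)) := by ring
      _ ≤ ((k-2)*(k-3)) * (e * (3*N+(k-4)*k)) := by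
          apply mul_le_mul_of_nonneg_right a1
          apply mul_nonneg _ c1; linarith
      _ = _ := by ring
  set P := (k-2)*(k-3)*(3*N+(k-4)*k) with hP
  have hPpos : 0 < P := by
    rw [hP]
    apply mul_pos
    · apply mul_pos <;> linarith
    · nlinarith
  have hn1 : 0 < 2*k+e-1 := by linarith
  have a5 : k^2*(2*k+e-1)*g*P ≤ 6*N^3*(2*k+e-1) := by
    have := mul_le_mul_of_nonneg_right h1 hn1.le
    linarith
  have a6 : 6*N^3*(2*k+e-1) < e*(k+e)*P := by
    have d1 : N < k + e := by linarith
    have d2 : 6*(2*k+e-1)*N*N^2 < 6*(2*k+e-1)*N*(k+e)^2 := by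
      apply mul_lt_mul_of_pos_left _ (by positivity)
      gcongr
    have d3 := mul_le_mul_of_nonneg_right a4 (show 0 ≤ k+e by linarith)
    linarith
  have a7 := a5.trans_lt a6
  have := lt_of_mul_lt_mul_right a7 hPpos.le
  linarith

lemma regA2 (n k : ℝ) (hk : 30 ≤ k) (hn : 2*k+5 ≤ n) (hA : 3*n ≤ k^2) :
    3*((n-k)/n) + (k-1)*(k-2)/((n-2*k)*(n-3)) ≤ k^2*(n-1)/(n*(n-k)) := by
  obtain ⟨e, rfl⟩ : ∃ e, n = 2*k+e := ⟨n-2*k, by ring⟩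
  have he : 5 ≤ e := by linarith
  have hn0 : 0 < 2*k+e := by linarith
  have hnk : 0 < k+e := by linarith
  have h1 : (k-1)*(k-2)/((2*k+e-2*k)*(2*k+e-3)) ≤ k^2/((2*k+e)*e) := by
    rw [show 2*k+e-2*k = e by ring, div_le_div_iff₀ (by apply mul_pos <;> linarith) (by positivity)]
    have : (k-1)*(k-2)*(2*k+e) ≤ k^2*(2*k+e-3) := by nlinarith
    nlinarith
  have h2 : 3*((2*k+e-k)/(2*k+e)) + k^2/((2*k+e)*e) ≤ k^2*(2*k+e-1)/((2*k+e)*(2*k+e-k)) := by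
    rw [show 2*k+e-k = k+e by ring]
    have : 3*((k+e)/(2*k+e)) + k^2/((2*k+e)*e) = (3*(k+e)*e+k^2)/((2*k+e)*e) := by
      field_simp
    rw [this, div_le_div_iff₀ (by positivity) (by positivity)]
    have key : (3*(k+e)*e+k^2)*(k+e) ≤ k^2*(2*k+e-1)*e := by
      have b1 : 5*k^2 ≤ e*k^2 := mul_le_mul_of_nonneg_right he (by positivity)
      have b2 : 30*(e*k) ≤ e*k^2 := by
        have := mul_le_mul_of_nonneg_left hk (show 0 ≤ e*k by positivity)
        linarith
      have b3 : 30*e^2 ≤ k*e^2 := mul_le_mul_of_nonneg_right hk (by positivity)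
      have b4 : 0 ≤ e*k := by positivity
      have b5 : 0 ≤ e^2 := by positivity
      have b6 : 0 ≤ k^2 := by positivity
      have c1 : (k+e)^2*e ≤ (2*k+e)*((2*k+e-1)*e-(k+e)) := by linarith
      have c0 : 0 ≤ (2*k+e-1)*e-(k+e) := by nlinarith
      have c2 := mul_le_mul_of_nonneg_right hA c0
      nlinarith
    calc (3*(k+e)*e+k^2)*((2*k+e)*(k+e)) = (3*(k+e)*e+k^2)*(k+e)*(2*k+e) := by ring
      _ ≤ k^2*(2*k+e-1)*e*(2*k+e) := by gcongr
      _ = _ := by ring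
  linarith

end HMdeg

namespace HMdeg

lemma QposA (q p s τ g x : ℝ) (hq : 0 ≤ q) (hs : 0 ≤ s) (hτ : 0 ≤ τ) (hG : (s-p)*g < q - p)
    (h3 : 3*q+τ ≤ s) (hx : x ≤ 1) :
    0 < q*x^2 - (s*x-(s-p)*(1-g))*(2-x) - τ*x*(1-x) := by
  have e : q*x^2 - (s*x-(s-p)*(1-g))*(2-x) - τ*x*(1-x) =
    (q-p-(s-p)*g) + (1-x)*((s-3*q-τ) + (q-p-(s-p)*g)) + (1-x)^2*(q+s+τ) := by ring
  rw [e]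
  have h1 : 0 < q-p-(s-p)*g := by linarith
  have h2 : 0 ≤ s-3*q-τ := by linarith
  have h4 : 0 ≤ 1-x := by linarith
  positivity

lemma quartB (s : ℝ) (hs : 0 < s) (hs2 : s ≤ 10/3) :
    0 < (116/15)*(0.9+s)*(1+(14/15)*s+0.42*s^2)*((14/15)+0.42*s)
      - (3.005*(1+(14/15)*s+0.42*s^2)-1)^2 := by
  have h4 : s^4 ≤ 100/9*s^2 := by
    have : s^2 ≤ 100/9 := by nlinarith
    have := mul_le_mul_of_nonneg_right this (sq_nonneg s)
    nlinarith
  have h2 : s^2 ≤ 10/3*s := by nlinarith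
  have h3 : 0 < s^3 := by positivity
  nlinarith

lemma QposB (q p s τ g x : ℝ) (hq : 0.9 ≤ q) (hp : 0 ≤ p) (hs : 0 < s) (hs2 : s ≤ 10/3)
    (hsp : 29/30*s ≤ s-p) (hτ0 : 0 ≤ τ) (hτ : τ ≤ s/200) (hg0 : 0 ≤ g)
    (hg : g*(1+(14/15)*s+0.42*s^2) ≤ 1) :
    0 < q*x^2 - (s*x-(s-p)*(1-g))*(2-x) - τ*x*(1-x) := by
  have hQ := quartB s hs hs2
  set T := 1+(14/15)*s+0.42*s^2 with hT
  have hT1 : 1 ≤ T := by rw [hT]; nlinarith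
  have hg1 : g ≤ 1 := by nlinarith
  obtain ⟨t, ht⟩ : ∃ t, t = 1 - g := ⟨_, rfl⟩
  rw [← ht]
  have ht0 : 0 ≤ t := by linarith
  have key : s*(2.005+t)^2 < (116/15)*(0.9+s)*t := by
    set u := g*T with hu
    have hu0 : 0 ≤ u := by positivity
    have hgu : g = u/T := by rw [hu]; field_simp
    have f1 : 0 < (116/15)*(0.9+s) - s*3.005^2 := by nlinarith
    have f0 : 0 < (116/15)*(0.9+s)*T*(T-1) - s*(3.005*T-1)^2 := by
      have : (116/15)*(0.9+s)*T*(T-1) - s*(3.005*T-1)^2 =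
        s * ((116/15)*(0.9+s)*T*((14/15)+0.42*s) - (3.005*T-1)^2) := by rw [hT]; ring
      rw [this]; positivity
    have id1 : T^2*((116/15)*(0.9+s)*t - s*(2.005+t)^2) =
       (1-u)*(T^2*((116/15)*(0.9+s) - s*3.005^2)) +
        u*((116/15)*(0.9+s)*T*(T-1) - s*(3.005*T-1)^2) + s*(1-u)*u := by
      rw [ht, hu]; ring
    have h1u : 0 ≤ 1-u := by linarith
    have pos : 0 < T^2*((116/15)*(0.9+s)*t - s*(2.005+t)^2) := by
      rw [id1]
      rcases eq_or_lt_of_le hu0 with h | h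
      · rw [← h]; simp; positivity
      · positivity
    have := (mul_pos_iff_of_pos_left (by positivity)).1 pos
    linarith
  set d := s-p with hd
  have hα : 0 < q+s+τ := by linarith
  have hβ : 2*s+d*t+τ ≤ s*(2.005+t) := by
    have : d*t ≤ s*t := mul_le_mul_of_nonneg_right (by linarith) ht0
    linarith
  have hd0 : 0 < d := by linarith
  have hβ0 : 0 ≤ 2*s+d*t+τ := by positivity
  have hβ2 : (2*s+d*t+τ)^2 ≤ s*(s*(2.005+t)^2) := by
    calc _ ≤ (s*(2.005+t))^2 := by gcongr
      _ = _ := by ring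
  have hk := mul_lt_mul_of_pos_left key hs
  have hε : s*((116/15)*(0.9+s)*t) ≤ 4*(q+s+τ)*(2*d*t) := by
    calc s*((116/15)*(0.9+s)*t) = 4*(0.9+s)*(2*(29/30*s)*t) := by ring
      _ ≤ _ := by
        apply mul_le_mul _ _ (by positivity) (by positivity)
        · linarith
        · gcongr
  have fin : 4*(q+s+τ)*(q*x^2 - (s*x-d*t)*(2-x) - τ*x*(1-x)) =
    (2*(q+s+τ)*x - (2*s+d*t+τ))^2 + (4*(q+s+τ)*(2*d*t) - (2*s+d*t+τ)^2) := by ring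
  have pos : 0 < 4*(q+s+τ)*(q*x^2 - (s*x-d*t)*(2-x) - τ*x*(1-x)) := by
    rw [fin]
    have := sq_nonneg (2*(q+s+τ)*x - (2*s+d*t+τ))
    linarith
  exact (mul_pos_iff_of_pos_left (by positivity)).1 pos

lemma Qpos (n k g x : ℝ) (hk : 30 ≤ k) (hn : 2*k+5 ≤ n) (hg0 : 0 ≤ g)
    (hg : g * (1 + (k-2)*(k/(n-k-2)) + (k-2)*(k-3)/2*(k/(n-k-2))^2
      + (k-2)*(k-3)*(k-4)/6*(k/(n-k-2))^3) ≤ 1) (hx : x ≤ 1) :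
    0 < ((n-k)/n)*x^2 - (k^2*(n-1)/(n*(n-k))*x-(k*(k-1)/(n-k))*(1-g))*(2-x)
      - ((k-1)*(k-2)/((n-2*k)*(n-3)))*x*(1-x) := by
  have hn0 : 0 < n := by linarith
  have hnk : 0 < n-k := by linarith
  have hk0 : 0 < k := by linarith
  have hw : 0 < n-k-2 := by linarith
  have h2k : 0 < n-2*k := by linarith
  have hn3 : 0 < n-3 := by linarith
  have hn1 : 0 < n-1 := by linarith
  have k1 : 0 < k-1 := by linarith
  have k2 : 0 < k-2 := by linarith
  have k3 : 0 < k-3 := by linarith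
  have k4 : 0 < k-4 := by linarith
  have esp : k*(k-1)/(n-k) = k^2*(n-1)/(n*(n-k)) - k/n := by
    field_simp; ring
  rw [esp]
  have hτ0 : 0 ≤ (k-1)*(k-2)/((n-2*k)*(n-3)) := by positivity
  have hs0 : 0 < k^2*(n-1)/(n*(n-k)) := by positivity
  rcases le_total (3*n) (k^2) with hA | hB
  · apply QposA _ _ _ _ _ _ (by positivity) hs0.le hτ0 _ (regA2 n k hk hn hA) hx
    have h1 : k^2*(n-1)*g < (n-2*k)*(n-k) := by
      apply regA1 n k g hk hn hA hg0
      refine le_trans (mul_le_mul_of_nonneg_left ?_ hg0) hg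
      have : 0 ≤ (k-2)*(k/(n-k-2)) := by positivity
      linarith
    have h2 : k^2*(n-1)/(n*(n-k))*g < (n-2*k)/n := by
      rw [div_mul_eq_mul_div, div_lt_div_iff₀ (by positivity) hn0]
      calc _ < (n-2*k)*(n-k)*n := by gcongr
        _ = _ := by ring
    have h3 : 0 ≤ k/n*g := by positivity
    have h4 : (n-k)/n - k/n = (n-2*k)/n := by field_simp; ring
    rw [h4]; linarith
  · have h10 : 10*k ≤ n := by nlinarith
    apply QposB _ _ _ _ _ _ _ (by positivity) hs0 _ _ hτ0 _ hg0 _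
    · rw [le_div_iff₀ hn0]; linarith
    · rw [div_le_div_iff₀ (by positivity) (by norm_num)]
      have : k^2*(n-1) ≤ 3*n*(n-1) := by gcongr
      nlinarith
    · rw [← esp, ← mul_div_assoc, div_le_div_iff₀ (by positivity) hnk]
      have : 29/30*(k^2*(n-1)) ≤ k*(k-1)*n := by
        have a : 29/30*k ≤ k-1 := by linarith
        calc 29/30*(k^2*(n-1)) = k*(29/30*k)*(n-1) := by ring
          _ ≤ k*(k-1)*n := by gcongr; linarith
      calc 29/30*(k^2*(n-1))*(n-k) ≤ k*(k-1)*n*(n-k) := by gcongr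
        _ = _ := by ring
    · rw [div_div, div_le_div_iff₀ (by positivity) (by positivity)]
      have a : n*(n-k)*200 ≤ (n-2*k)*(n-3)*(n-1) := by
        have a1 : n*(n-k)*200 ≤ n*n*200 := by gcongr; linarith
        have a0 : 0.9*n ≤ n-k := by linarith
        have c1 : (n-k) *8 ≤ (n-2*k)*9 := by linarith
        have c2 : n*225 ≤ (n-3)*(n-1) := by nlinarith
        nlinarith [mul_le_mul c1 c2 (by positivity) (by positivity)]
      have b : (k-1)*(k-2) ≤ k^2 := by nlinarith
      calc (k-1)*(k-2)*(n*(n-k)*200) ≤ k^2*((n-2*k)*(n-3)*(n-1)) := by gcongr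
        _ = _ := by ring
    · refine le_trans (mul_le_mul_of_nonneg_left ?_ hg0) hg
      set w := k/(n-k-2) with hwd
      have hw0 : 0 < w := by positivity
      set s := k^2*(n-1)/(n*(n-k)) with hsd
      have hW : 14/15*s ≤ (k-2)*w := by
        rw [hsd, hwd, ← mul_div_assoc, ← mul_div_assoc, div_le_div_iff₀ (by positivity) hw]
        have a : 14/15*k ≤ k-2 := by linarith
        have b : (n-1)*(n-k-2) ≤ n*(n-k) := by nlinarith
        calc 14/15*(k^2*(n-1))*(n-k-2) = (14/15*k)*k*((n-1)*(n-k-2)) := by ring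
          _ ≤ (k-2)*k*(n*(n-k)) := by gcongr
      have h2 : 0.42*s^2 ≤ (k-2)*(k-3)/2*w^2 := by
        have c : 27/56*(k-2) ≤ (k-3)/2 := by linarith
        calc 0.42*s^2 = 27/56*(14/15*s)^2 := by ring
          _ ≤ 27/56*((k-2)*w)^2 := by gcongr
          _ = (27/56*(k-2))*((k-2)*w^2) := by ring
          _ ≤ (k-3)/2*((k-2)*w^2) := by gcongr
          _ = _ := by ring
      have h3 : 0 ≤ (k-2)*(k-3)*(k-4)/6*w^3 := by positivity
      linarith

end HMdeg

namespace HMdeg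
open Finset

lemma core (n k E X a0 a1 V g : ℝ) (hk : 30 ≤ k) (hn : 2*k+5 ≤ n) (hE : 0 < E)
    (h0 : a0*(n*E/k) = X^2) (h1 : V = E*(n-k)/(n-1)*a1)
    (hV : V ≤ n*(k/n*X - (k-1)/(n-1)*E*(1-g))*(2*k/n*E - k/n*X))
    (hsp : (n-k)/k*a0 - a1 - (k-1)*(k-2)/((n-k-1)*(n-k-2))*(X-a0-a1) ≤ 0)
    (hQ : ∀ x, x ≤ 1 → 0 < ((n-k)/n)*x^2
      - (k^2*(n-1)/(n*(n-k))*x-(k*(k-1)/(n-k))*(1-g))*(2-x)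
      - ((k-1)*(k-2)/((n-2*k)*(n-3)))*x*(1-x)) (hX : X ≤ E) : False := by
  have hn0 : 0 < n := by linarith
  have hnk : 0 < n-k := by linarith
  have hk0 : 0 < k := by linarith
  have hw : 0 < n-k-2 := by linarith
  have hw1 : 0 < n-k-1 := by linarith
  have h2k : 0 < n-2*k := by linarith
  have hn3 : 0 < n-3 := by linarith
  have hn1 : 0 < n-1 := by linarith
  obtain ⟨x, rfl⟩ : ∃ x, X = x*E := ⟨X/E, by field_simp⟩
  obtain ⟨y, rfl⟩ : ∃ y, a1 = y*E := ⟨a1/E, by field_simp⟩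
  have hx : x ≤ 1 := by
    by_contra h
    push Not at h
    nlinarith
  have ha0 : a0 = k/n*x^2*E := by
    field_simp at h0 ⊢
    nlinarith
  subst ha0
  have q := hQ x hx
  have hy : y ≤ (k^2*(n-1)/(n*(n-k))*x-(k*(k-1)/(n-k))*(1-g))*(2-x) := by
    rw [h1] at hV
    have e1 : n*(k/n*(x*E) - (k-1)/(n-1)*E*(1-g))*(2*k/n*E - k/n*(x*E)) =
      (E*(n-k)/(n-1)*E) * ((k^2*(n-1)/(n*(n-k))*x-(k*(k-1)/(n-k))*(1-g))*(2-x)) := by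
      field_simp
    rw [e1, show E*(n-k)/(n-1)*(y*E) = (E*(n-k)/(n-1)*E)*y by ring] at hV
    exact le_of_mul_le_mul_left hV (by positivity)
  set D := (n-k-1)*(n-k-2) with hD
  have hD0 : 0 < D := by positivity
  have e2 : ((n-k)/k*(k/n*x^2*E) - y*E - (k-1)*(k-2)/D*(x*E-k/n*x^2*E-y*E)) * D =
     E*((n-2*k)*(n-3))*(((n-k)/n)*x^2 - y - ((k-1)*(k-2)/((n-2*k)*(n-3)))*x*(1-x)) := by
    obtain ⟨U, hU⟩ : ∃ U, U = n-2*k := ⟨_, rfl⟩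
    rw [← hU] at h2k ⊢
    field_simp
    rw [hD, hU]
    ring
  have h3 : ((n-k)/k*(k/n*x^2*E) - y*E - (k-1)*(k-2)/D*(x*E-k/n*x^2*E-y*E)) * D ≤ 0 :=
    mul_nonpos_of_nonpos_of_nonneg hsp hD0.le
  rw [e2] at h3
  have h4 : 0 < ((n-k)/n)*x^2 - y - ((k-1)*(k-2)/((n-2*k)*(n-3)))*x*(1-x) := by linarith
  have : 0 < E*((n-2*k)*(n-3))*(((n-k)/n)*x^2 - y - ((k-1)*(k-2)/((n-2*k)*(n-3)))*x*(1-x)) := by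
    positivity
  linarith

lemma gbound (n k : ℕ) (hk : 30 ≤ k) (hn : 2*k+5 ≤ n) (g : ℝ)
    (hg : g * (n-2).choose (k-2) = (n-k-2).choose (k-2)) :
    0 ≤ g ∧ g * (1 + ((k:ℝ)-2)*(k/(n-k-2)) + ((k:ℝ)-2)*(k-3)/2*(k/(n-k-2))^2
      + ((k:ℝ)-2)*(k-3)*(k-4)/6*(k/(n-k-2))^3) ≤ 1 := by
  have hC : (0:ℝ) < (n-2).choose (k-2) := by
    exact_mod_cast Nat.choose_pos (by omega)
  have hg0 : 0 ≤ g := by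
    by_contra h
    push Not at h
    have : g * (n-2).choose (k-2) < 0 := mul_neg_of_neg_of_pos h hC
    rw [hg] at this
    have : (0:ℝ) ≤ (n-k-2).choose (k-2) := by positivity
    linarith
  refine ⟨hg0, ?_⟩
  have hp := gpow (n-k-2) k (k-2)
  rw [show n-k-2+k = n-2 by omega] at hp
  have hp' : ((n-k-2).choose (k-2) : ℝ) * ((n-2 : ℕ) : ℝ)^(k-2) ≤
    ((n-2).choose (k-2) : ℝ) * ((n-k-2 : ℕ):ℝ)^(k-2) := by exact_mod_cast hp
  have c1 : ((n-2 : ℕ):ℝ) = n-2 := by push_cast [show 2 ≤ n by omega]; ring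
  have c2 : ((n-k-2 : ℕ):ℝ) = n-k-2 := by
    rw [cst (show n-k-2+(k+2) = n by omega)]; push_cast; ring
  have c3 : ((k-2 : ℕ):ℝ) = k-2 := by push_cast [show 2 ≤ k by omega]; ring
  have hN : (0:ℝ) < n-k-2 := by
    rw [← c2]; exact_mod_cast (show 0 < n-k-2 by omega)
  have hb := binom3 (k-2) ((k:ℝ)/(n-k-2)) (by positivity)
  rw [c3] at hb
  rw [← hg, c1, c2] at hp'
  have e : (n:ℝ)-2 = (1+(k:ℝ)/(n-k-2))*(n-k-2) := by field_simp; ring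
  rw [e, mul_pow] at hp'
  have h5 : g * (1+(k:ℝ)/(n-k-2))^(k-2) ≤ 1 := by
    have hpos : (0:ℝ) < (n-2).choose (k-2) * ((n:ℝ)-k-2)^(k-2) := by positivity
    refine le_of_mul_le_mul_right ?_ hpos
    rw [one_mul]
    refine le_trans (le_of_eq ?_) hp'
    ring
  refine le_trans ?_ h5
  apply mul_le_mul_of_nonneg_left _ hg0
  refine le_trans (le_of_eq ?_) hb
  ring

lemma varbound {n : ℕ} (d : Fin n → ℝ) (lo hi μ : ℝ) (hsum : ∑ i, d i = n * μ)
    (h1 : ∀ i, lo ≤ d i) (h2 : ∀ i, d i ≤ hi) :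
    ∑ i, (d i - μ)^2 ≤ n * (μ - lo) * (hi - μ) := by
  have : ∑ i, (d i - μ)^2 ≤ ∑ i, ((lo+hi-2*μ)*d i + (μ^2 - lo*hi)) := by
    apply sum_le_sum
    intro i _
    nlinarith [mul_nonneg (sub_nonneg.2 (h1 i)) (sub_nonneg.2 (h2 i))]
  refine this.trans (le_of_eq ?_)
  rw [sum_add_distrib, ← mul_sum, hsum]
  simp
  ring

lemma specF {n : ℕ} (k : ℕ) (hk : 3 ≤ k) (hn : 2 * k ≤ n) (F : Finset (Finset (Fin n)))
    (hF : ∀ A ∈ F, #A = k) (hint : ∀ A ∈ F, ∀ B ∈ F, (A ∩ B).Nonempty) :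
    ∃ a0 a1 : ℝ, a0 * (n.choose k : ℝ) = (#F : ℝ)^2 ∧
      ∑ i, ((dg F i : ℝ) - k * #F / n)^2 = ((n-2).choose (k-1) : ℝ) * a1 ∧
      ((n-k).choose k : ℝ) * a0 - ((n-k-1).choose (k-1) : ℝ) * a1
        - ((n-k-3).choose (k-3) : ℝ) * (#F - a0 - a1) ≤ 0 := by
  have hsub : F ⊆ P n k := fun A hA => by simpa [P] using hF A hA
  have hfi : (P n k).filter (fun A => A ∈ F) = F := by
    ext A; simp only [mem_filter]; exact ⟨fun h => h.2, fun h => ⟨hsub h, h⟩⟩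
  have hs : ∀ p : Finset (Fin n) → Prop, [DecidablePred p] →
      ∑ A ∈ P n k, (if p A then (if A ∈ F then (1:ℝ) else 0) else 0) = #(F.filter p) := by
    intro p _
    rw [← sum_filter, ← sum_filter, filter_filter]
    simp only [sum_const, nsmul_eq_mul, mul_one]
    congr 2
    ext A; simp only [mem_filter]; exact ⟨fun h => ⟨h.2.2, h.2.1⟩, fun h => ⟨hsub h.1, h.2, h.1⟩⟩
  obtain ⟨a0, a1, h0, h1, h2⟩ := spectral k hk hn (fun A => if A ∈ F then (1:ℝ) else 0) (by
    unfold Kb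
    apply sum_eq_zero; intro A _
    apply sum_eq_zero; intro B _
    by_cases hd : Disjoint A B
    · by_cases hA : A ∈ F
      · by_cases hB : B ∈ F
        · have := hint A hA B hB
          rw [disjoint_iff_inter_eq_empty.1 hd] at this
          simp at this
        · simp [hB]
      · simp [hA]
    · simp [hd])
  have w0 : Wt k (fun A => if A ∈ F then (1:ℝ) else 0) (∅ : Finset (Fin n)) = #F := by
    unfold Wt
    rw [hs]; simp
  have w1 : ∀ i : Fin n, Wt k (fun A => if A ∈ F then (1:ℝ) else 0) {i} = dg F i := by
    intro i
    unfold Wt dg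
    rw [hs]; simp
  have w2 : ip k (fun A : Finset (Fin n) => if A ∈ F then (1:ℝ) else 0) (fun A => if A ∈ F then (1:ℝ) else 0) = #F := by
    have := hs (fun A => A ∈ F)
    simp at this
    unfold ip
    simp
    exact_mod_cast congrArg card hfi
  rw [w0] at h0
  rw [w2] at h2
  simp only [w0, w1] at h1
  exact ⟨a0, a1, h0, h1, h2⟩

set_option maxHeartbeats 1600000 in
theorem part1 {n : ℕ} (k S γ : ℕ) (hk : 30 ≤ k) (hn : 2 * k + 5 ≤ n) (F : Finset (Finset (Fin n)))
    (hF : ∀ A ∈ F, #A = k) (hint : ∀ A ∈ F, ∀ B ∈ F, (A ∩ B).Nonempty)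
    (hd : ∀ i, (n-2).choose (k-2) < dg F i + (n-k-2).choose (k-2)) (v : Fin n)
    (hv : ∀ i, dg F i ≤ dg F v) (hvS : dg F v + S ≤ (n-1).choose (k-1))
    (K1 : ∀ y, n - k - 1 ≤ y → y ≤ n → y.choose (n-k-1) ≤ γ → y.choose (k-1) ≤ S)
    (hge : (n-3).choose (k-2) ≤ γ) : False := by
  have hEKR : #F ≤ (n-1).choose (k-1) := by
    apply Finset.erdos_ko_rado
    · intro A hA B hB hAB
      have := hint A hA B hB
      rw [disjoint_iff_inter_eq_empty.1 hAB] at this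
      simp at this
    · intro A hA; exact hF A hA
    · omega
  have hS := K1 (n-3) (by omega) (by omega) (by
    rw [← Nat.choose_symm (show n-k-1 ≤ n-3 by omega), show n-3-(n-k-1) = k-2 by omega]; exact hge)
  have e1 : (n-1).choose (k-1) = (n-2).choose (k-2) + (n-2).choose (k-1) := by
    rw [show n-1 = (n-2)+1 by omega, show k-1 = (k-2)+1 by omega, Nat.choose_succ_succ]
  have e2 : (n-2).choose (k-1) = (n-3).choose (k-2) + (n-3).choose (k-1) := by
    rw [show n-2 = (n-3)+1 by omega, show k-1 = (k-2)+1 by omega, Nat.choose_succ_succ]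
  have hM : dg F v ≤ (n-2).choose (k-2) + (n-3).choose (k-2) := by omega
  have hkR : (30:ℝ) ≤ k := by exact_mod_cast hk
  have hnR : 2*(k:ℝ)+5 ≤ n := by exact_mod_cast hn
  -- casts
  have cn1 : ((n-1 : ℕ):ℝ) = n-1 := by push_cast [show 1 ≤ n by omega]; ring
  have cn2 : ((n-2 : ℕ):ℝ) = n-2 := by push_cast [show 2 ≤ n by omega]; ring
  have ck1 : ((k-1 : ℕ):ℝ) = k-1 := by push_cast [show 1 ≤ k by omega]; ring
  have ck2 : ((k-2 : ℕ):ℝ) = k-2 := by push_cast [show 2 ≤ k by omega]; ring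
  have cnk : ((n-k : ℕ):ℝ) = n-k := by push_cast [show k ≤ n by omega]; ring
  have cnk1 : ((n-k-1 : ℕ):ℝ) = n-k-1 := by
    rw [cst (show n-k-1+(k+1) = n by omega)]; push_cast; ring
  have cnk2 : ((n-k-2 : ℕ):ℝ) = n-k-2 := by
    rw [cst (show n-k-2+(k+2) = n by omega)]; push_cast; ring
  have hn0 : (0:ℝ) < n := by linarith
  have hk0 : (0:ℝ) < k := by linarith
  have hn1 : (0:ℝ) < n-1 := by linarith
  have hn2 : (0:ℝ) < n-2 := by linarith
  have hnk1 : (0:ℝ) < n-k-1 := by linarith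
  have hnk2 : (0:ℝ) < n-k-2 := by linarith
  -- binomial identities
  have i1 : ((n-1).choose (k-1) : ℝ) * n = n.choose k * k :=
    ch_diag (by omega) (by omega) rfl rfl
  have i2 : ((n-2).choose (k-1) : ℝ) * (n-1) = (n-1).choose (k-1) * (n-k) :=
    ch_top (by omega) (by omega) cn1 (by rw [cn1, ck1]; ring)
  have i3 : ((n-2).choose (k-2) : ℝ) * (n-1) = (n-1).choose (k-1) * (k-1) :=
    ch_diag (by omega) (by omega) cn1 ck1
  have i4 : ((n-3).choose (k-2) : ℝ) * (n-2) = (n-2).choose (k-2) * (n-k) :=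
    ch_top (by omega) (by omega) cn2 (by rw [cn2, ck2]; ring)
  have i5 : ((n-k-1).choose (k-1) : ℝ) * (n-k) = (n-k).choose k * k :=
    ch_diag (by omega) (by omega) cnk rfl
  have i6 : ((n-k-2).choose (k-2) : ℝ) * (n-k-1) = (n-k-1).choose (k-1) * (k-1) :=
    ch_diag (by omega) (by omega) cnk1 ck1
  have i7 : ((n-k-3).choose (k-3) : ℝ) * (n-k-2) = (n-k-2).choose (k-2) * (k-2) :=
    ch_diag (by omega) (by omega) cnk2 ck2
  have hE : (0:ℝ) < (n-1).choose (k-1) := by exact_mod_cast Nat.choose_pos (by omega)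
  have hL : (0:ℝ) < (n-k-1).choose (k-1) := by exact_mod_cast Nat.choose_pos (by omega)
  have hC : (0:ℝ) < (n-2).choose (k-2) := by exact_mod_cast Nat.choose_pos (by omega)
  obtain ⟨g, hg⟩ : ∃ g : ℝ, g * (n-2).choose (k-2) = (n-k-2).choose (k-2) :=
    ⟨(n-k-2).choose (k-2) / (n-2).choose (k-2), by field_simp⟩
  obtain ⟨hg0, hgb⟩ := gbound n k hk hn g hg
  obtain ⟨a0, a1, h0, h1, h2⟩ := specF k (by omega) (by omega) F hF hint
  have hsum : ∑ i, (dg F i : ℝ) = n * (k * #F / n) := by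
    have := sum_dg F k hF
    rw [mul_div_cancel₀ _ hn0.ne']
    exact_mod_cast this
  set E : ℝ := ((n-1).choose (k-1) : ℝ) with hEd
  set L : ℝ := ((n-k-1).choose (k-1) : ℝ) with hLd
  have j1 : (n.choose k : ℝ) = n*E/k := by field_simp; linarith
  have j2 : ((n-2).choose (k-1) : ℝ) = E*(n-k)/(n-1) := by field_simp; linarith
  have j3 : ((n-2).choose (k-2) : ℝ) = (k-1)/(n-1)*E := by field_simp; linarith
  have j5 : ((n-k).choose k : ℝ) = L*((n-k)/k) := by field_simp; linarith
  have j6 : ((n-k-3).choose (k-3) : ℝ) = L*((k-1)*(k-2)/((n-k-1)*(n-k-2))) := by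
    have : ((n-k-2).choose (k-2) : ℝ) = L*(k-1)/(n-k-1) := by field_simp; linarith
    rw [this] at i7
    field_simp at i7 ⊢
    linarith
  have hhi : ∀ i, (dg F i : ℝ) ≤ 2*k/n*E := by
    intro i
    have a : (dg F i : ℝ) ≤ (n-2).choose (k-2) + (n-3).choose (k-2) := by
      exact_mod_cast (hv i).trans hM
    refine a.trans ?_
    have b : ((n-3).choose (k-2) : ℝ) = (n-2).choose (k-2) * ((n-k)/(n-2)) := by
      field_simp; linarith
    rw [b, j3]
    have c : ((k:ℝ)-1)/(n-1) ≤ k/n := by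
      rw [div_le_div_iff₀ hn1 hn0]; nlinarith
    have c' : 1 + ((n:ℝ)-k)/(n-2) ≤ 2 := by
      have : ((n:ℝ)-k)/(n-2) ≤ 1 := by rw [div_le_one hn2]; linarith
      linarith
    have c0 : 0 ≤ ((n:ℝ)-k)/(n-2) := div_nonneg (by linarith) hn2.le
    calc _ = ((k:ℝ)-1)/(n-1)*E*(1+((n:ℝ)-k)/(n-2)) := by ring
      _ ≤ k/n*E*2 := by gcongr
      _ = _ := by ring
  have hlo : ∀ i, ((k:ℝ)-1)/(n-1)*E*(1-g) ≤ dg F i := by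
    intro i
    have a : ((n-2).choose (k-2) : ℝ) ≤ dg F i + (n-k-2).choose (k-2) := by
      exact_mod_cast (hd i).le
    rw [← hg, j3] at a
    linarith
  have hV := varbound (fun i => (dg F i : ℝ)) _ _ _ hsum hlo hhi
  rw [h1] at hV
  refine core n k E #F a0 a1 _ g hkR hnR hE (by rw [← j1]; exact h0) rfl ?_ ?_
    (fun x hx => Qpos n k g x hkR hnR hg0 hgb hx) (by rw [hEd]; exact_mod_cast hEKR)
  · rw [← j2]
    refine hV.trans (le_of_eq ?_)
    ring
  · rw [j5, j6] at h2
    refine nonpos_of_mul_nonpos_right (a := L) ?_ hL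
    refine le_trans (le_of_eq ?_) h2
    ring

end HMdeg

theorem degree_HM (n k : ℕ) (hk : 30 ≤ k) (hn : 2 * k + 5 ≤ n)
    (F : Finset (Finset (Fin n)))
    (hcard : ∀ A ∈ F, A.card = k)
    (hint : ∀ A ∈ F, ∀ B ∈ F, (A ∩ B).Nonempty)
    (hnontriv : ¬ ∃ i : Fin n, ∀ A ∈ F, i ∈ A) :
    ∃ i : Fin n, ((F.filter (fun A => i ∈ A)).card : ℤ) ≤
      ((n - 2).choose (k - 2) : ℤ) - ((n - k - 2).choose (k - 2) : ℤ) := by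
  by_contra hcon
  push Not at hcon
  have hd : ∀ i, (n-2).choose (k-2) < HMdeg.dg F i + (n-k-2).choose (k-2) := by
    intro i
    have := hcon i
    unfold HMdeg.dg
    zify
    linarith
  obtain ⟨v, S, γ, hv, hvS, K1, K2, hs, hc, hc2⟩ :=
    HMdeg.combi k (by omega) hn F hcard hint hnontriv hd
  rcases Nat.lt_or_ge γ ((n-3).choose (k-2)) with h | h
  · exact HMdeg.part2 n k S γ hk hn K1 K2 hs hc hc2 h
  · exact HMdeg.part1 k S γ hk hn F hcard hint hd v hv hvS K1 h
end

section
/- Fix integers s, k ≥ 2 and u ≥ s+1, and let n = (u+s-1)(k-1) + s + k. Then any family G of k-element subsets of [n] with matching number ν(G) = s and covering number τ(G) ≥ s+1 satisfies |G| ≤ C(n, k) - C(n-s, k) - ((u-s-1)/u)·C(n-s-k, k-1). -/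
lemma fk_trans {β : Type*} [Fintype β] [DecidableEq β] (A B : Finset β) (h : A.card = B.card) :
    ∃ τ : Equiv.Perm β, A.map τ.toEmbedding = B := by
  let e : A ≃ B := Finset.equivOfCardEq h
  refine ⟨e.extendSubtype, ?_⟩
  apply Finset.eq_of_subset_of_card_le
  · intro x hx
    obtain ⟨a, ha, rfl⟩ := Finset.mem_map.1 hx
    exact e.extendSubtype_mem a ha
  · simp [h]

lemma fk_avg_univ {β : Type*} [Fintype β] [DecidableEq β] (N l : ℕ) (hN : 0 < N)
    (hc : Fintype.card β = N * l) (f : Finset β → ℤ) (M : ℤ)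
    (h : ∀ P : Fin N → Finset β, (∀ t, (P t).card = l) →
      (Pairwise fun a b => Disjoint (P a) (P b)) → ∑ t, f (P t) ≤ M * N) :
    ∑ A ∈ Finset.powersetCard l (Finset.univ : Finset β), f A
      ≤ M * ((Fintype.card β).choose l : ℤ) := by
  classical
  let e : β ≃ Fin N × Fin l := Fintype.equivOfCardEq (by simp [hc])
  let P0 : Fin N → Finset β := fun t => (Finset.univ : Finset (Fin l)).map
    ⟨fun j => e.symm (t, j), fun a b hab => by simpa using hab⟩
  have hP0c : ∀ t, (P0 t).card = l := by intro t; simp [P0]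
  have hP0d : Pairwise fun a b => Disjoint (P0 a) (P0 b) := by
    intro a b hab
    rw [Finset.disjoint_left]
    intro x hx hy
    simp only [P0, Finset.mem_map, Finset.mem_univ, true_and] at hx hy
    obtain ⟨i, rfl⟩ := hx
    obtain ⟨j, hj⟩ := hy
    have := e.symm.injective hj
    simp only [Prod.mk.injEq] at this
    exact hab this.1.symm
  let g : Finset β → ℤ := fun A => ∑ σ : Equiv.Perm β, f (A.map σ.toEmbedding)
  have hg : ∀ A B : Finset β, A.card = B.card → g A = g B := by
    intro A B hAB
    obtain ⟨τ, rfl⟩ := fk_trans A B hAB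
    simp only [g]
    symm
    refine Fintype.sum_equiv (Equiv.mulRight τ) _ _ ?_
    intro σ
    congr 1
    rw [Finset.map_map]
    rfl
  let K : ℤ := g (P0 ⟨0, hN⟩)
  have hK : ∀ A : Finset β, A.card = l → g A = K := fun A hA => hg _ _ (by rw [hA, hP0c])
  set S := ∑ A ∈ Finset.powersetCard l (Finset.univ : Finset β), f A with hS
  have h1 : ∑ A ∈ Finset.powersetCard l (Finset.univ : Finset β), g A
      = (Fintype.card β).choose l * K := by
    rw [Finset.sum_congr rfl (fun A hA => hK A (Finset.mem_powersetCard.1 hA).2)]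
    simp
  have h2 : ∑ A ∈ Finset.powersetCard l (Finset.univ : Finset β), g A
      = (Fintype.card (Equiv.Perm β) : ℤ) * S := by
    simp only [g]
    rw [Finset.sum_comm]
    have : ∀ σ : Equiv.Perm β, ∑ A ∈ Finset.powersetCard l (Finset.univ : Finset β),
        f (A.map σ.toEmbedding) = S := by
      intro σ
      rw [hS]
      refine Finset.sum_bij (fun A _ => A.map σ.toEmbedding) ?_ ?_ ?_ ?_
      · intro A hA; simpa using hA
      · intro A _ B _ hAB; exact Finset.map_injective _ hAB
      · intro B hB
        refine ⟨B.map σ.symm.toEmbedding, by simpa using hB, ?_⟩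
        rw [Finset.map_map]
        ext x; simp
      · intros; rfl
    rw [Finset.sum_congr rfl (fun σ _ => this σ)]
    simp
  have h3 : (N : ℤ) * K ≤ (Fintype.card (Equiv.Perm β) : ℤ) * (M * N) := by
    have : ∑ t : Fin N, g (P0 t) = N * K := by
      rw [Finset.sum_congr rfl (fun t _ => hK _ (hP0c t))]
      simp
    rw [← this]
    simp only [g]
    rw [Finset.sum_comm]
    calc _ ≤ ∑ σ : Equiv.Perm β, M * (N : ℤ) := by
          apply Finset.sum_le_sum
          intro σ _
          apply h
          · intro t; simp [hP0c]
          · intro a b hab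
            exact (Finset.disjoint_map _).2 (hP0d hab)
      _ = _ := by simp
  have hp : (0 : ℤ) < Fintype.card (Equiv.Perm β) := by exact_mod_cast Fintype.card_pos
  have hN' : (0 : ℤ) < N := by exact_mod_cast hN
  have hch : (0 : ℤ) ≤ (Fintype.card β).choose l := by positivity
  have h4 := h1.symm.trans h2
  have h5 : (Fintype.card (Equiv.Perm β) : ℤ) * N * S ≤
      (Fintype.card (Equiv.Perm β) : ℤ) * N * (M * (Fintype.card β).choose l) := by
    have := mul_le_mul_of_nonneg_left h3 hch
    calc _ = (N : ℤ) * (Fintype.card (Equiv.Perm β) * S) := by ring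
      _ = ((Fintype.card β).choose l : ℤ) * (N * K) := by rw [← h4]; ring
      _ ≤ _ := this
      _ = _ := by ring
  exact le_of_mul_le_mul_left h5 (by positivity)

lemma fk_avg {α : Type*} [DecidableEq α] (X : Finset α) (N l : ℕ) (hN : 0 < N)
    (hc : X.card = N * l) (f : Finset α → ℤ) (M : ℤ)
    (h : ∀ P : Fin N → Finset α, (∀ t, P t ⊆ X) → (∀ t, (P t).card = l) →
      (Pairwise fun a b => Disjoint (P a) (P b)) → ∑ t, f (P t) ≤ M * N) :
    ∑ A ∈ Finset.powersetCard l X, f A ≤ M * (X.card.choose l : ℤ) := by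
  have := fk_avg_univ (β := X) N l hN (by simpa using hc)
    (fun A => f (A.map (Function.Embedding.subtype _))) M (by
      intro P hP hd
      apply h (fun t => (P t).map (Function.Embedding.subtype _))
      · intro t x hx
        obtain ⟨a, _, rfl⟩ := Finset.mem_map.1 hx
        exact a.2
      · intro t; simp [hP]
      · intro a b hab
        exact (Finset.disjoint_map _).2 (hd hab))
  rw [Fintype.card_coe] at this
  refine le_trans (le_of_eq ?_) this
  have hX : X = (Finset.univ : Finset X).map (Function.Embedding.subtype _) := by
    ext x; simp
  conv_lhs => rw [hX, Finset.powersetCard_map]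
  rw [Finset.sum_map]
  rfl

lemma fk_hall {α ι κ : Type*} [DecidableEq α] [Fintype ι] [DecidableEq ι] [Fintype κ]
    [DecidableEq κ] (F : ι → Finset (Finset α))
    (hF : ∀ f : ι → Finset α, (∀ i, f i ∈ F i) → ¬ Pairwise fun a b => Disjoint (f a) (f b))
    (P : κ → Finset α) (hP : Pairwise fun a b => Disjoint (P a) (P b)) :
    ∃ I : Finset ι, (Finset.univ.filter (fun t => ∃ i ∈ I, P t ∈ F i)).card < I.card := by
  by_contra hcon
  push Not at hcon
  have := (Finset.all_card_le_biUnion_card_iff_exists_injective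
    (fun i => Finset.univ.filter (fun t : κ => P t ∈ F i))).1 (by
      intro I
      refine (hcon I).trans (Finset.card_le_card ?_)
      intro t ht
      simpa using ht)
  obtain ⟨f, hf, hf'⟩ := this
  refine hF (fun i => P (f i)) (fun i => by simpa using hf' i) ?_
  intro a b hab
  exact hP (fun h => hab (hf h))

lemma fk_count {α ι κ : Type*} [DecidableEq α] [Fintype ι] [DecidableEq ι] [Fintype κ]
    [DecidableEq κ] (F : ι → Finset (Finset α)) (P : κ → Finset α) (I : Finset ι) :
    ∑ t, ∑ i, (if P t ∈ F i then (1 : ℤ) else 0) ≤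
      I.card * ((Finset.univ.filter (fun t => ∃ i ∈ I, P t ∈ F i)).card : ℤ)
      + (Fintype.card ι - I.card) * Fintype.card κ := by
  rw [Finset.sum_comm, ← Finset.sum_add_sum_compl I]
  have h1 : ∑ i ∈ I, ∑ t, (if P t ∈ F i then (1 : ℤ) else 0) ≤
      ∑ i ∈ I, ((Finset.univ.filter (fun t => ∃ i ∈ I, P t ∈ F i)).card : ℤ) := by
    apply Finset.sum_le_sum
    intro i hi
    rw [Finset.sum_boole]
    norm_cast
    apply Finset.card_le_card
    intro t ht
    simp only [Finset.mem_filter, Finset.mem_univ, true_and] at ht ⊢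
    exact ⟨i, hi, ht⟩
  have h2 : ∑ i ∈ Iᶜ, ∑ t, (if P t ∈ F i then (1 : ℤ) else 0) ≤
      ∑ i ∈ Iᶜ, (Fintype.card κ : ℤ) := by
    apply Finset.sum_le_sum
    intro i hi
    rw [Finset.sum_boole]
    norm_cast
    exact Finset.card_le_univ _
  rw [Finset.sum_const, nsmul_eq_mul] at h1 h2
  rw [Finset.card_compl, Nat.cast_sub (Finset.card_le_univ _)] at h2
  linarith

lemma fk_bound1 {α ι : Type*} [DecidableEq α] [Fintype ι] [DecidableEq ι]
    (F : ι → Finset (Finset α)) (s u l : ℕ) (hu : s + 1 ≤ u) (hι : Fintype.card ι = s + 1)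
    (hF : ∀ f : ι → Finset α, (∀ i, f i ∈ F i) → ¬ Pairwise fun a b => Disjoint (f a) (f b))
    (X : Finset α) (hX : X.card = (u + s) * l) :
    ∑ A ∈ Finset.powersetCard l X, ((∑ i, (if A ∈ F i then (1 : ℤ) else 0))
      + (u - 1) * (if ∀ i, A ∈ F i then (1 : ℤ) else 0)) ≤ s * (X.card.choose l : ℤ) := by
  apply fk_avg X (u + s) l (by omega) hX
  intro P _ _ hP
  obtain ⟨I, hI⟩ := fk_hall F hF P hP
  have h1 := fk_count F P I
  rw [Finset.sum_add_distrib, ← Finset.mul_sum, Finset.sum_boole]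
  have hIpos : 0 < I.card := by omega
  obtain ⟨i0, hi0⟩ := Finset.card_pos.1 hIpos
  have h2 : (Finset.univ.filter (fun t => ∀ i, P t ∈ F i)).card ≤
      (Finset.univ.filter (fun t => ∃ i ∈ I, P t ∈ F i)).card := by
    apply Finset.card_le_card
    intro t ht
    simp only [Finset.mem_filter, Finset.mem_univ, true_and] at ht ⊢
    exact ⟨i0, hi0, ht i0⟩
  have h3 : I.card ≤ s + 1 := hι ▸ Finset.card_le_univ I
  rw [hι, Fintype.card_fin] at h1
  set p := I.card
  set q := (Finset.univ.filter (fun t => ∃ i ∈ I, P t ∈ F i)).card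
  set d := (Finset.univ.filter (fun t => ∀ i, P t ∈ F i)).card
  zify at h2 h3 hI hu hIpos
  push_cast at h1 ⊢
  have e1 : ((u : ℤ) - 1) * d ≤ (u - 1) * q := mul_le_mul_of_nonneg_left h2 (by linarith)
  have e2 : ((u : ℤ) - 1 + p) * q ≤ (u - 1 + p) * (p - 1) :=
    mul_le_mul_of_nonneg_left (by linarith) (by linarith)
  have e3 : 0 ≤ ((p : ℤ) - 1) * (s + 1 - p) := mul_nonneg (by linarith) (by linarith)
  nlinarith

lemma fk_bound2 {α ι : Type*} [DecidableEq α] [Fintype ι] [DecidableEq ι]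
    (F : ι → Finset (Finset α)) (s u l : ℕ) (hs : 2 ≤ s) (hu : s + 1 ≤ u)
    (hι : Fintype.card ι = s + 1)
    (hF : ∀ f : ι → Finset α, (∀ i, f i ∈ F i) → ¬ Pairwise fun a b => Disjoint (f a) (f b))
    (X : Finset α) (hX : X.card = (u + s - 1) * l) (B : Finset α) (hB : Disjoint X B)
    (hBF : ∀ i, B ∈ F i) :
    ∑ A ∈ Finset.powersetCard l X, (∑ i, (if A ∈ F i then (1 : ℤ) else 0))
       ≤ ((s : ℤ) - 1) * (X.card.choose l : ℤ) := by
  obtain ⟨N, hN⟩ : ∃ N : ℕ, u + s - 1 = N := ⟨_, rfl⟩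
  have hN2 : s + 1 ≤ N := by omega
  rw [hN] at hX
  apply fk_avg X N l (by omega) hX
  intro P hPX _ hP
  let Q : Option (Fin N) → Finset α := fun o => o.elim B P
  have hQ : Pairwise fun a b => Disjoint (Q a) (Q b) := by
    intro a b hab
    cases a with
    | none => cases b with
      | none => exact absurd rfl hab
      | some b => exact (Finset.disjoint_of_subset_left (hPX b) hB).symm
    | some a => cases b with
      | none => exact Finset.disjoint_of_subset_left (hPX a) hB
      | some b => exact hP (fun h => hab (by rw [h]))
  obtain ⟨I, hI⟩ := fk_hall F hF Q hQ
  have h1 := fk_count F P I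
  have hIpos : 0 < I.card := by omega
  obtain ⟨i0, hi0⟩ := Finset.card_pos.1 hIpos
  have h2 : (Finset.univ.filter (fun t => ∃ i ∈ I, P t ∈ F i)).card + 1 ≤
      (Finset.univ.filter (fun t => ∃ i ∈ I, Q t ∈ F i)).card := by
    rw [← Finset.card_insertNone]
    apply Finset.card_le_card
    intro t ht
    simp only [Finset.mem_filter, Finset.mem_univ, true_and] at ht ⊢
    cases t with
    | none => exact ⟨i0, hi0, hBF i0⟩
    | some t =>
      obtain ⟨i, hi, h⟩ : ∃ i ∈ I, P t ∈ F i := by simpa using ht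
      exact ⟨i, hi, h⟩
  have h3 : I.card ≤ s + 1 := hι ▸ Finset.card_le_univ I
  rw [hι, Fintype.card_fin] at h1
  set p := I.card
  set q := (Finset.univ.filter (fun t => ∃ i ∈ I, P t ∈ F i)).card
  have h4 : q + 2 ≤ p := by omega
  zify at h3 h4 hN2
  push_cast at h1 ⊢
  have e2 : (p : ℤ) * q ≤ p * (p - 2) :=
    mul_le_mul_of_nonneg_left (by linarith) (by linarith)
  have e3 : 0 ≤ ((p : ℤ) - 2) * (N - p) := mul_nonneg (by linarith) (by linarith)
  nlinarith

lemma fk_bound {α ι : Type*} [DecidableEq α] [Fintype ι] [DecidableEq ι]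
    (F : ι → Finset (Finset α)) (s u l : ℕ) (hs : 2 ≤ s) (hu : s + 1 ≤ u)
    (hι : Fintype.card ι = s + 1)
    (hF : ∀ f : ι → Finset α, (∀ i, f i ∈ F i) → ¬ Pairwise fun a b => Disjoint (f a) (f b))
    (X : Finset α) (hX : X.card = (u + s) * l) (hFX : ∀ i, F i ⊆ Finset.powersetCard l X)
    (B : Finset α) (hBF : ∀ i, B ∈ F i) :
    (u : ℤ) * (∑ i, ((F i).card : ℤ) +
      s * (((Finset.powersetCard l X).filter (fun A => ∀ i, A ∈ F i)).card : ℤ)) ≤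
      u * s * (((u + s) * l).choose l : ℤ) - (u - s - 1) * (((u + s - 1) * l).choose l : ℤ) := by
  have hne : Nonempty ι := Fintype.card_pos_iff.1 (by omega)
  obtain ⟨i0⟩ := hne
  have hBX := Finset.mem_powersetCard.1 (hFX i0 (hBF i0))
  have hX' : (X \ B).card = (u + s - 1) * l := by
    rw [Finset.card_sdiff_of_subset hBX.1, hX, hBX.2, Nat.sub_mul, one_mul]
  have b1 := fk_bound1 F s u l hu hι hF X hX
  have b2 := fk_bound2 F s u l hs hu hι hF (X \ B) hX' B Finset.sdiff_disjoint hBF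
  have hsum : ∑ A ∈ Finset.powersetCard l X, (∑ i, (if A ∈ F i then (1 : ℤ) else 0))
      = ∑ i, ((F i).card : ℤ) := by
    rw [Finset.sum_comm]
    apply Finset.sum_congr rfl
    intro i _
    rw [Finset.sum_boole]
    congr 2
    ext A
    simp only [Finset.mem_filter]
    exact ⟨fun h => h.2, fun h => ⟨hFX i h, h⟩⟩
  rw [Finset.sum_add_distrib, ← Finset.mul_sum, Finset.sum_boole, hsum] at b1
  have hsub : Finset.powersetCard l (X \ B) ⊆ Finset.powersetCard l X :=
    Finset.powersetCard_mono Finset.sdiff_subset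
  have b3 : ∑ A ∈ Finset.powersetCard l X, ((∑ i, (if A ∈ F i then (1 : ℤ) else 0))
      - (if ∀ i, A ∈ F i then (1 : ℤ) else 0)) ≤
      s * (X.card.choose l : ℤ) - ((X \ B).card.choose l : ℤ) := by
    rw [← Finset.sum_sdiff hsub]
    have c1 : ∑ A ∈ Finset.powersetCard l X \ Finset.powersetCard l (X \ B),
        ((∑ i, (if A ∈ F i then (1 : ℤ) else 0)) - (if ∀ i, A ∈ F i then (1 : ℤ) else 0)) ≤
        ∑ A ∈ Finset.powersetCard l X \ Finset.powersetCard l (X \ B), (s : ℤ) := by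
      apply Finset.sum_le_sum
      intro A _
      rw [Finset.sum_boole]
      have := Finset.card_le_univ (Finset.univ.filter (fun i => A ∈ F i))
      rw [hι] at this
      split_ifs with hA
      · zify at this
        linarith
      · push Not at hA
        obtain ⟨i, hi⟩ := hA
        have : (Finset.univ.filter (fun i => A ∈ F i)).card < Fintype.card ι := by
          apply Finset.card_lt_univ_of_notMem (x := i)
          simpa using hi
        rw [hι] at this
        have h' : (Finset.univ.filter (fun i => A ∈ F i)).card ≤ s := by omega
        zify at h'
        simpa using h'
    have c2 : ∑ A ∈ Finset.powersetCard l (X \ B),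
        ((∑ i, (if A ∈ F i then (1 : ℤ) else 0)) - (if ∀ i, A ∈ F i then (1 : ℤ) else 0)) ≤
        ∑ A ∈ Finset.powersetCard l (X \ B), (∑ i, (if A ∈ F i then (1 : ℤ) else 0)) := by
      apply Finset.sum_le_sum
      intro A _
      split_ifs <;> simp
    rw [Finset.sum_const, nsmul_eq_mul, Finset.card_sdiff_of_subset hsub,
      Nat.cast_sub (Finset.card_le_card hsub), Finset.card_powersetCard,
      Finset.card_powersetCard] at c1
    linarith
  rw [Finset.sum_sub_distrib, Finset.sum_boole, hsum] at b3
  rw [hX'] at b3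
  rw [hX] at b1 b3
  zify at hu
  have e1 := mul_le_mul_of_nonneg_left b1 (show (0 : ℤ) ≤ s + 1 by positivity)
  have e2 := mul_le_mul_of_nonneg_left b3 (show (0 : ℤ) ≤ u - s - 1 by linarith)
  linarith

/-- No `s + 1` pairwise disjoint members. -/
def FkNM {α : Type*} (s : ℕ) (G : Finset (Finset α)) : Prop :=
  ∀ f : Fin (s + 1) → Finset α, (∀ i, f i ∈ G) → ¬ Pairwise fun a b => Disjoint (f a) (f b)

lemma fk_double {α : Type*} [DecidableEq α] (X : Finset α) (k : ℕ) (hk : 1 ≤ k)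
    (F : Finset (Finset α)) (hFX : F ⊆ Finset.powersetCard k X) :
    F.card * k ≤ F.shadow.card * (X.card - (k - 1)) := by
  apply Finset.card_mul_le_card_mul (fun A B => B ⊆ A)
  · intro A hA
    obtain ⟨hAX, hAk⟩ := Finset.mem_powersetCard.1 (hFX hA)
    have : A.card = (A.image (fun a => A.erase a)).card := by
      rw [Finset.card_image_of_injOn]
      exact Finset.erase_injOn A
    rw [← hAk, this]
    apply Finset.card_le_card
    intro B hB
    obtain ⟨a, ha, rfl⟩ := Finset.mem_image.1 hB
    simp only [Finset.bipartiteAbove, Finset.mem_filter]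
    exact ⟨Finset.mem_shadow_iff.2 ⟨A, hA, a, ha, rfl⟩, Finset.erase_subset _ _⟩
  · intro B hB
    obtain ⟨A, hA, a, ha, rfl⟩ := Finset.mem_shadow_iff.1 hB
    obtain ⟨hAX, hAk⟩ := Finset.mem_powersetCard.1 (hFX hA)
    have hBc : (A.erase a).card = k - 1 := by rw [Finset.card_erase_of_mem ha, hAk]
    have hBX : A.erase a ⊆ X := (Finset.erase_subset _ _).trans hAX
    rw [← hBc, ← Finset.card_sdiff_of_subset hBX]
    refine le_trans (Finset.card_le_card ?_)
      (Finset.card_image_le (f := fun x => insert x (A.erase a)) (s := X \ A.erase a))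
    intro C hC
    simp only [Finset.bipartiteBelow, Finset.mem_filter] at hC
    obtain ⟨hCF, hC⟩ := hC
    obtain ⟨hCX, hCk⟩ := Finset.mem_powersetCard.1 (hFX hCF)
    have : (C \ A.erase a).card = 1 := by
      rw [Finset.card_sdiff_of_subset hC, hBc, hCk]; omega
    obtain ⟨x, hx⟩ := Finset.card_eq_one.1 this
    have hx' : x ∈ C \ A.erase a := by rw [hx]; simp
    rw [Finset.mem_sdiff] at hx'
    refine Finset.mem_image.2 ⟨x, Finset.mem_sdiff.2 ⟨hCX hx'.1, hx'.2⟩, ?_⟩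
    rw [Finset.insert_eq, ← hx, Finset.sdiff_union_of_subset hC]

lemma fk_nm_fun {α : Type*} [DecidableEq α] (s : ℕ) (U : Finset α) (h : s + 1 ≤ U.card) :
    ∃ g : Fin (s + 1) → α, Function.Injective g ∧ ∀ i, g i ∈ U := by
  obtain ⟨V, hV, hVc⟩ := Finset.exists_subset_card_eq h
  refine ⟨fun i => ((V.equivFinOfCardEq hVc).symm i : α), ?_, ?_⟩
  · intro a b hab
    exact (V.equivFinOfCardEq hVc).symm.injective (Subtype.ext hab)
  · intro i; exact hV (Subtype.prop _)

lemma fk_shadow {α : Type*} [LinearOrder α] (s : ℕ) (X : Finset α) :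
    ∀ (k : ℕ) (_ : 1 ≤ k) (F : Finset (Finset α)) (_ : F ⊆ Finset.powersetCard k X)
    (_ : ∀ A ∈ F, ∀ y ∈ A, ∀ x ∈ X, x ∉ A → x < y → insert x (A.erase y) ∈ F)
    (_ : FkNM s F), F.card ≤ s * F.shadow.card := by
  induction X using Finset.induction_on_max with
  | empty =>
    intro k hk F hFX _ _
    have : F = ∅ := by
      apply Finset.eq_empty_of_forall_notMem
      intro A hA
      obtain ⟨hAX, hAk⟩ := Finset.mem_powersetCard.1 (hFX hA)
      rw [Finset.subset_empty.1 hAX] at hAk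
      simp at hAk
      omega
    simp [this]
  | insert a Y hY ih =>
    intro k hk F hFX hsh hNM
    have haY : a ∉ Y := fun h => lt_irrefl _ (hY a h)
    by_cases hsmall : (insert a Y).card < (s + 1) * k
    · have h1 := fk_double (insert a Y) k hk F hFX
      have h2 : (insert a Y).card - (k - 1) ≤ s * k := by
        rw [add_mul, one_mul] at hsmall; omega
      have h3 : F.card * k ≤ (s * F.shadow.card) * k := by
        refine h1.trans ((Nat.mul_le_mul_left _ h2).trans (le_of_eq (by ring)))
      exact Nat.le_of_mul_le_mul_right h3 hk
    · push Not at hsmall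
      by_cases hk1 : k = 1
      · subst hk1
        rcases F.eq_empty_or_nonempty with rfl | ⟨A, hA⟩
        · simp
        · have hsc : 1 ≤ F.shadow.card := by
            obtain ⟨hAX, hAk⟩ := Finset.mem_powersetCard.1 (hFX hA)
            obtain ⟨x, hx⟩ := Finset.card_eq_one.1 hAk
            exact Finset.card_pos.2 ⟨_, Finset.mem_shadow_iff.2 ⟨A, hA, x, by simp [hx], rfl⟩⟩
          have hFs : F.card ≤ s := by
            by_contra hcon
            obtain ⟨g, hg, hgF⟩ := fk_nm_fun s F (by omega)
            refine hNM g hgF ?_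
            intro i j hij
            obtain ⟨x, hx⟩ := Finset.card_eq_one.1 (Finset.mem_powersetCard.1 (hFX (hgF i))).2
            obtain ⟨y, hy⟩ := Finset.card_eq_one.1 (Finset.mem_powersetCard.1 (hFX (hgF j))).2
            have := hg.ne hij
            show Disjoint (g i) (g j)
            rw [hx, hy] at this ⊢
            simpa using this
          nlinarith
      · have hNM0 : FkNM s (F.nonMemberSubfamily a) := by
          intro f hf
          exact hNM f (fun i => (Finset.mem_nonMemberSubfamily.1 (hf i)).1)
        have hX1 : F.memberSubfamily a ⊆ Finset.powersetCard (k - 1) Y := by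
          intro A hA
          rw [Finset.mem_memberSubfamily] at hA
          obtain ⟨hAX, hAk⟩ := Finset.mem_powersetCard.1 (hFX hA.1)
          rw [Finset.card_insert_of_notMem hA.2] at hAk
          refine Finset.mem_powersetCard.2 ⟨?_, by omega⟩
          intro x hx
          have := hAX (Finset.mem_insert_of_mem hx)
          rcases Finset.mem_insert.1 this with rfl | h
          · exact absurd hx hA.2
          · exact h
        have hX0 : F.nonMemberSubfamily a ⊆ Finset.powersetCard k Y := by
          intro A hA
          rw [Finset.mem_nonMemberSubfamily] at hA
          obtain ⟨hAX, hAk⟩ := Finset.mem_powersetCard.1 (hFX hA.1)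
          refine Finset.mem_powersetCard.2 ⟨?_, hAk⟩
          intro x hx
          rcases Finset.mem_insert.1 (hAX hx) with rfl | h
          · exact absurd hx hA.2
          · exact h
        have hNM1 : FkNM s (F.memberSubfamily a) := by
          intro f hf hd
          let U := Finset.univ.biUnion f
          have hU : U.card ≤ (s + 1) * (k - 1) := by
            refine Finset.card_biUnion_le.trans ?_
            rw [Finset.sum_congr rfl (fun i _ => (Finset.mem_powersetCard.1 (hX1 (hf i))).2)]
            simp
          obtain ⟨g, hg, hgU⟩ := fk_nm_fun s (insert a Y \ U) (by
            have := Finset.le_card_sdiff U (insert a Y)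
            have h2 : (s + 1) * k = (s + 1) * (k - 1) + (s + 1) := by
              obtain ⟨k', rfl⟩ : ∃ k', k = k' + 1 := ⟨k - 1, by omega⟩
              simp; ring
            omega)
          have hgf : ∀ i j, g i ∉ f j := by
            intro i j h
            exact (Finset.mem_sdiff.1 (hgU i)).2
              (Finset.mem_biUnion.2 ⟨j, Finset.mem_univ _, h⟩)
          refine hNM (fun i => insert (g i) (f i)) ?_ ?_
          · intro i
            have hfi := Finset.mem_memberSubfamily.1 (hf i)
            rcases Finset.mem_insert.1 (Finset.mem_sdiff.1 (hgU i)).1 with h | h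
            · rw [h]; exact hfi.1
            · have := hsh _ hfi.1 a (Finset.mem_insert_self _ _) (g i)
                (Finset.mem_insert_of_mem h) (by
                  rw [Finset.mem_insert, not_or]
                  exact ⟨(hY _ h).ne, hgf i i⟩) (hY _ h)
              rwa [Finset.erase_insert hfi.2] at this
          · intro i j hij
            show Disjoint (insert (g i) (f i)) (insert (g j) (f j))
            rw [Finset.disjoint_insert_left, Finset.disjoint_insert_right, Finset.mem_insert,
              not_or]
            exact ⟨⟨hg.ne hij, hgf i j⟩, hgf j i, hd hij⟩
        have i0 := ih k hk _ hX0 (by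
          intro A hA y hy x hx hxA hxy
          rw [Finset.mem_nonMemberSubfamily] at hA ⊢
          refine ⟨hsh A hA.1 y hy x (Finset.mem_insert_of_mem hx) hxA hxy, ?_⟩
          intro h
          rcases Finset.mem_insert.1 h with rfl | h
          · exact haY hx
          · exact hA.2 (Finset.mem_of_mem_erase h)) hNM0
        have i1 := ih (k - 1) (by omega) _ hX1 (by
          intro A hA y hy x hx hxA hxy
          rw [Finset.mem_memberSubfamily] at hA ⊢
          have hxa : x ≠ a := (hY x hx).ne
          have hya : y ≠ a := fun h => hA.2 (h ▸ hy)
          have := hsh _ hA.1 y (Finset.mem_insert_of_mem hy) x (Finset.mem_insert_of_mem hx)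
            (by simp [hxa, hxA]) hxy
          constructor
          · convert this using 1
            ext z
            simp only [Finset.mem_insert, Finset.mem_erase]
            grind
          · simp only [Finset.mem_insert, Finset.mem_erase]
            grind) hNM1
        have j0 : (F.nonMemberSubfamily a).shadow ⊆ F.shadow.nonMemberSubfamily a := by
          intro B hB
          obtain ⟨A, hA, x, hx, rfl⟩ := Finset.mem_shadow_iff.1 hB
          rw [Finset.mem_nonMemberSubfamily] at hA ⊢
          exact ⟨Finset.mem_shadow_iff.2 ⟨A, hA.1, x, hx, rfl⟩,
            fun h => hA.2 (Finset.mem_of_mem_erase h)⟩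
        have j1 : (F.memberSubfamily a).shadow ⊆ F.shadow.memberSubfamily a := by
          intro B hB
          obtain ⟨A, hA, x, hx, rfl⟩ := Finset.mem_shadow_iff.1 hB
          rw [Finset.mem_memberSubfamily] at hA ⊢
          refine ⟨Finset.mem_shadow_iff.2 ⟨_, hA.1, x, Finset.mem_insert_of_mem hx, ?_⟩,
            fun h => hA.2 (Finset.mem_of_mem_erase h)⟩
          rw [Finset.erase_insert_of_ne]
          rintro rfl
          exact hA.2 hx
        have c1 := Finset.card_memberSubfamily_add_card_nonMemberSubfamily a F
        have c2 := Finset.card_memberSubfamily_add_card_nonMemberSubfamily a F.shadow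
        have d0 := Finset.card_le_card j0
        have d1 := Finset.card_le_card j1
        rw [← c1, ← c2]
        nlinarith

/-- Exchange the elements `x` and `y`. -/
def fkSw {n : ℕ} (x y : Fin n) (A : Finset (Fin n)) : Finset (Fin n) :=
  A.map (Equiv.swap x y).toEmbedding

lemma fk_mem_sw {n : ℕ} (x y z : Fin n) (A : Finset (Fin n)) :
    z ∈ fkSw x y A ↔ Equiv.swap x y z ∈ A := by
  simp only [fkSw, Finset.mem_map, Equiv.coe_toEmbedding]
  constructor
  · rintro ⟨a, ha, rfl⟩; simpa using ha
  · intro h; exact ⟨_, h, by simp⟩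

lemma fk_sw_sw {n : ℕ} (x y : Fin n) (A : Finset (Fin n)) : fkSw x y (fkSw x y A) = A := by
  ext z; simp [fk_mem_sw]

lemma fk_sw_eq {n : ℕ} (x y : Fin n) (A : Finset (Fin n)) (hy : y ∈ A) (hx : x ∉ A) :
    fkSw x y A = insert x (A.erase y) := by
  ext z
  rw [fk_mem_sw, Equiv.swap_apply_def]
  simp only [Finset.mem_insert, Finset.mem_erase]
  grind

lemma fk_sw_self {n : ℕ} (x y : Fin n) (A : Finset (Fin n)) (hy : y ∉ A) (hx : x ∉ A) :
    fkSw x y A = A := by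
  ext z
  rw [fk_mem_sw, Equiv.swap_apply_def]
  grind

/-- The shift of a single member of `G`. -/
def fkPhi {n : ℕ} (x y : Fin n) (G : Finset (Finset (Fin n))) (A : Finset (Fin n)) :
    Finset (Fin n) :=
  if y ∈ A ∧ x ∉ A ∧ fkSw x y A ∉ G then fkSw x y A else A

/-- The shifted family. -/
def fkShift {n : ℕ} (x y : Fin n) (G : Finset (Finset (Fin n))) : Finset (Finset (Fin n)) :=
  G.image (fkPhi x y G)

lemma fk_phi_inj {n : ℕ} (x y : Fin n) (G : Finset (Finset (Fin n))) :
    Set.InjOn (fkPhi x y G) G := by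
  intro A hA B hB hAB
  simp only [Finset.mem_coe] at hA hB
  unfold fkPhi at hAB
  split_ifs at hAB with h1 h2 h2
  · rw [← fk_sw_sw x y A, hAB, fk_sw_sw]
  · rw [hAB] at h1; exact absurd hB h1.2.2
  · rw [← hAB] at h2; exact absurd hA h2.2.2
  · exact hAB

lemma fk_shift_card {n : ℕ} (x y : Fin n) (G : Finset (Finset (Fin n))) :
    (fkShift x y G).card = G.card :=
  Finset.card_image_of_injOn (fk_phi_inj x y G)

lemma fk_shift_sized {n k : ℕ} (x y : Fin n) (G : Finset (Finset (Fin n)))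
    (h : ∀ A ∈ G, A.card = k) : ∀ A ∈ fkShift x y G, A.card = k := by
  intro A hA
  obtain ⟨B, hB, rfl⟩ := Finset.mem_image.1 hA
  unfold fkPhi
  split_ifs
  · simp [fkSw, h B hB]
  · exact h B hB

/-- weight of a set. -/
def fkW {n : ℕ} (A : Finset (Fin n)) : ℕ := ∑ a ∈ A, (a : ℕ)

lemma fk_sw_weight {n : ℕ} (x y : Fin n) (hxy : x < y) (A : Finset (Fin n)) (hy : y ∈ A)
    (hx : x ∉ A) : fkW (fkSw x y A) < fkW A := by
  rw [fk_sw_eq x y A hy hx, fkW, fkW, Finset.sum_insert (by simp [hx]),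
    ← Finset.add_sum_erase A _ hy]
  have : (x : ℕ) < y := hxy
  omega

lemma fk_shift_weight {n : ℕ} (x y : Fin n) (hxy : x < y) (G : Finset (Finset (Fin n)))
    (A : Finset (Fin n)) (hA : A ∈ G) (hy : y ∈ A) (hx : x ∉ A) (hsw : fkSw x y A ∉ G) :
    ∑ B ∈ fkShift x y G, fkW B < ∑ B ∈ G, fkW B := by
  rw [fkShift, Finset.sum_image (fk_phi_inj x y G)]
  apply Finset.sum_lt_sum
  · intro B hB
    unfold fkPhi
    split_ifs with h
    · exact (fk_sw_weight x y hxy B h.1 h.2.1).le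
    · exact le_rfl
  · refine ⟨A, hA, ?_⟩
    unfold fkPhi
    rw [if_pos ⟨hy, hx, hsw⟩]
    exact fk_sw_weight x y hxy A hy hx

lemma fk_shift_nm {n s : ℕ} (x y : Fin n) (G : Finset (Finset (Fin n)))
    (h : FkNM s G) : FkNM s (fkShift x y G) := by
  intro f hf hd
  by_cases hall : ∀ i, f i ∈ G
  · exact h f hall hd
  push Not at hall
  obtain ⟨i0, hi0⟩ := hall
  have key : ∀ i, f i ∉ G → x ∈ f i ∧ fkSw x y (f i) ∈ G := by
    intro i hi
    obtain ⟨B, hB, hBf⟩ := Finset.mem_image.1 (hf i)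
    unfold fkPhi at hBf
    split_ifs at hBf with hc
    · rw [← hBf, fk_sw_sw]
      refine ⟨?_, hB⟩
      rw [fk_mem_sw]; simpa using hc.1
    · exact absurd (hBf ▸ hB) hi
  have key2 : ∀ i, y ∈ f i → x ∉ f i → fkSw x y (f i) ∈ G := by
    intro i hyi hxi
    obtain ⟨B, hB, hBf⟩ := Finset.mem_image.1 (hf i)
    unfold fkPhi at hBf
    split_ifs at hBf with hc
    · exfalso; apply hxi
      rw [← hBf, fk_mem_sw]; simpa using hc.1
    · rw [hBf] at hc hB
      by_contra hcon
      exact hc ⟨hyi, hxi, hcon⟩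
  refine h (fun i => fkSw x y (f i)) ?_ ?_
  · intro i
    by_cases hi : i = i0
    · subst hi; exact (key i hi0).2
    · have hxi : x ∉ f i := by
        intro hx
        exact (Finset.disjoint_left.1 (hd hi)) hx (key i0 hi0).1
      have hiG : f i ∈ G := by
        by_contra hcon; exact hxi (key i hcon).1
      by_cases hyi : y ∈ f i
      · exact key2 i hyi hxi
      · show fkSw x y (f i) ∈ G
        rwa [fk_sw_self x y _ hyi hxi]
  · intro a b hab
    exact (Finset.disjoint_map _).2 (hd hab)

lemma fk_shift_cover {n : ℕ} (x y : Fin n) (G : Finset (Finset (Fin n)))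
    (S : Finset (Fin n)) (hS : ∀ A ∈ fkShift x y G, (S ∩ A).Nonempty) :
    ∀ A ∈ G, ((insert y S) ∩ A).Nonempty := by
  intro A hA
  by_cases hy : y ∈ A
  · exact ⟨y, by simp [hy]⟩
  · have := hS _ (Finset.mem_image_of_mem _ hA)
    unfold fkPhi at this
    rw [if_neg (fun h => hy h.1)] at this
    obtain ⟨z, hz⟩ := this
    refine ⟨z, ?_⟩
    simp only [Finset.mem_inter, Finset.mem_insert] at hz ⊢
    exact ⟨Or.inr hz.1, hz.2⟩

/-- Choose a family of minimal weight in a shift-closed class. -/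
lemma fk_min {n : ℕ} (C : Finset (Finset (Fin n)) → Prop) (G : Finset (Finset (Fin n)))
    (hG : C G) : ∃ H, C H ∧ ∀ x y, x < y → C (fkShift x y H) →
      ∀ A ∈ H, y ∈ A → x ∉ A → insert x (A.erase y) ∈ H := by
  classical
  obtain ⟨H, hH, hmin⟩ := Finset.exists_min_image
    (Finset.univ.filter C) (fun H => ∑ B ∈ H, fkW B) ⟨G, by simpa using hG⟩
  refine ⟨H, by simpa using hH, ?_⟩
  intro x y hxy hC A hA hy hx
  rw [← fk_sw_eq x y A hy hx]
  by_contra hcon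
  have h1 := fk_shift_weight x y hxy H A hA hy hx hcon
  have h2 := hmin (fkShift x y H) (by simpa using hC)
  omega

lemma fk_init {n : ℕ} (X : Finset (Fin n)) (F : Finset (Finset (Fin n))) (hne : F.Nonempty)
    (hsh : ∀ A ∈ F, ∀ y ∈ A, ∀ x ∈ X, x ∉ A → x < y → insert x (A.erase y) ∈ F) :
    ∃ A ∈ F, ∀ y ∈ A, ∀ x ∈ X, x ∉ A → y < x := by
  obtain ⟨A, hA, hmin⟩ := Finset.exists_min_image F fkW hne
  refine ⟨A, hA, ?_⟩
  intro y hy x hx hxA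
  by_contra hcon
  have hxy : x < y := lt_of_le_of_ne (not_lt.1 hcon) (fun h => hxA (h ▸ hy))
  have h1 := hmin _ (hsh A hA y hy x hx hxA hxy)
  have h2 := fk_sw_weight x y hxy A hy hxA
  rw [fk_sw_eq x y A hy hxA] at h2
  omega

lemma fk_init_unique {n : ℕ} (X A B : Finset (Fin n)) (hA : A ⊆ X) (hB : B ⊆ X)
    (hc : A.card = B.card) (h1 : ∀ y ∈ A, ∀ x ∈ X, x ∉ A → y < x)
    (h2 : ∀ y ∈ B, ∀ x ∈ X, x ∉ B → y < x) : A = B := by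
  by_contra hne
  have n1 : ¬ A ⊆ B := fun h => hne (Finset.eq_of_subset_of_card_le h hc.ge)
  have n2 : ¬ B ⊆ A := fun h => hne (Finset.eq_of_subset_of_card_le h hc.le).symm
  obtain ⟨y, hy, hy'⟩ := Finset.not_subset.1 n1
  obtain ⟨x, hx, hx'⟩ := Finset.not_subset.1 n2
  exact lt_asymm (h1 y hy x (hB hx) hx') (h2 x hx y (hA hy) hy')

lemma fk_total {n s l : ℕ} (G : Finset (Finset (Fin n))) (hcard : ∀ A ∈ G, A.card = l + 1)
    (T : Finset (Fin n)) (hT : T.card = s + 1) (m : ℕ) (hm : Tᶜ.card = m) :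
    G.card + (m.choose (l + 1) + (s + 1) * m.choose l) ≤ n.choose (l + 1) +
      ((G.filter (fun A => Disjoint A T)).card +
      ∑ i : T, ((Finset.powersetCard l Tᶜ).filter (fun A => insert (i : Fin n) A ∈ G)).card) := by
  classical
  let Z0 := Finset.powersetCard (l + 1) Tᶜ
  let Z : T → Finset (Finset (Fin n)) := fun i =>
    (Finset.powersetCard l Tᶜ).image (fun A => insert (i : Fin n) A)
  have hnot : ∀ (i : T) (A : Finset (Fin n)), A ⊆ Tᶜ → (i : Fin n) ∉ A := by
    intro i A hA h
    exact (Finset.mem_compl.1 (hA h)) i.2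
  have hZc : ∀ i, (Z i).card = m.choose l := by
    intro i
    rw [Finset.card_image_of_injOn, Finset.card_powersetCard, hm]
    intro A hA B hB hAB
    have hA' := hnot i A (Finset.mem_powersetCard.1 hA).1
    have hB' := hnot i B (Finset.mem_powersetCard.1 hB).1
    have := congrArg (fun C => Finset.erase C (i : Fin n)) hAB
    simpa [Finset.erase_insert hA', Finset.erase_insert hB'] using this
  let W := Z0 ∪ Finset.univ.biUnion Z
  have hW : W.card = m.choose (l + 1) + (s + 1) * m.choose l := by
    rw [Finset.card_union_of_disjoint, Finset.card_biUnion, Finset.card_powersetCard, hm]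
    · simp [hZc, hT]
    · intro i _ j _ hij
      show Disjoint (Z i) (Z j)
      rw [Finset.disjoint_left]
      intro C hC hC'
      obtain ⟨A, hA, rfl⟩ := Finset.mem_image.1 hC
      obtain ⟨B, hB, hAB⟩ := Finset.mem_image.1 hC'
      have h1 : (i : Fin n) ∈ insert (j : Fin n) B := by
        rw [hAB]; exact Finset.mem_insert_self _ _
      rcases Finset.mem_insert.1 h1 with h | h
      · exact hij (Subtype.ext h)
      · exact hnot i B (Finset.mem_powersetCard.1 hB).1 h
    · rw [Finset.disjoint_left]
      intro C hC hC'
      obtain ⟨i, _, hi⟩ := Finset.mem_biUnion.1 hC'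
      obtain ⟨A, hA, rfl⟩ := Finset.mem_image.1 hi
      exact hnot i _ (Finset.mem_powersetCard.1 hC).1 (Finset.mem_insert_self _ _)
  have hGW : (G ∩ W).card ≤ (G.filter (fun A => Disjoint A T)).card +
      ∑ i : T, ((Finset.powersetCard l Tᶜ).filter
        (fun A => insert (i : Fin n) A ∈ G)).card := by
    have hsub : G ∩ W ⊆ (G.filter (fun A => Disjoint A T)) ∪
        Finset.univ.biUnion (fun i : T => ((Finset.powersetCard l Tᶜ).filter
          (fun A => insert (i : Fin n) A ∈ G)).image (fun A => insert (i : Fin n) A)) := by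
      intro C hC
      obtain ⟨hCG, hCW⟩ := Finset.mem_inter.1 hC
      rcases Finset.mem_union.1 hCW with h | h
      · apply Finset.mem_union_left
        rw [Finset.mem_filter]
        refine ⟨hCG, ?_⟩
        rw [← Finset.subset_compl_iff_disjoint_right]
        exact (Finset.mem_powersetCard.1 h).1
      · apply Finset.mem_union_right
        obtain ⟨i, _, hi⟩ := Finset.mem_biUnion.1 h
        obtain ⟨A, hA, rfl⟩ := Finset.mem_image.1 hi
        refine Finset.mem_biUnion.2 ⟨i, Finset.mem_univ _, Finset.mem_image.2 ⟨A, ?_, rfl⟩⟩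
        exact Finset.mem_filter.2 ⟨hA, hCG⟩
    refine (Finset.card_le_card hsub).trans ((Finset.card_union_le _ _).trans ?_)
    apply Nat.add_le_add_left
    refine Finset.card_biUnion_le.trans (Finset.sum_le_sum ?_)
    intro i _
    exact Finset.card_image_le
  have hU : (G ∪ W).card ≤ n.choose (l + 1) := by
    have : G ∪ W ⊆ Finset.powersetCard (l + 1) Finset.univ := by
      intro C hC
      refine Finset.mem_powersetCard.2 ⟨Finset.subset_univ _, ?_⟩
      rcases Finset.mem_union.1 hC with h | h
      · exact hcard C h
      rcases Finset.mem_union.1 h with h | h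
      · exact (Finset.mem_powersetCard.1 h).2
      · obtain ⟨i, _, hi⟩ := Finset.mem_biUnion.1 h
        obtain ⟨A, hA, rfl⟩ := Finset.mem_image.1 hi
        rw [Finset.card_insert_of_notMem (hnot i A (Finset.mem_powersetCard.1 hA).1),
          (Finset.mem_powersetCard.1 hA).2]
    simpa using Finset.card_le_card this
  have := Finset.card_union_add_card_inter G W
  omega

lemma fk_core (s l u n : ℕ) (hs : 2 ≤ s) (hu : s + 1 ≤ u)
    (hn : n = (u + s) * l + (s + 1))
    (G : Finset (Finset (Fin n))) (hcard : ∀ A ∈ G, A.card = l + 1) (hNM : FkNM s G)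
    (T : Finset (Fin n)) (hT : T.card = s + 1)
    (hst : ∀ x y, x < y → x ∉ T → y ∉ T → ∀ A ∈ G, y ∈ A → x ∉ A → insert x (A.erase y) ∈ G)
    (hne : ∀ i ∈ T, ∃ A ∈ G, A ∩ T = {i})
    (hE : ∀ A ∈ G, Disjoint A T → ∀ a ∈ A, ∀ i ∈ T, insert i (A.erase a) ∈ G) :
    (u : ℤ) * G.card ≤ u * (n.choose (l + 1)) - u * (((u + s) * l + 1).choose (l + 1))
      - (u - s - 1) * (((u + s - 1) * l).choose l) := by
  classical
  have hm : Tᶜ.card = (u + s) * l := by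
    rw [Finset.card_compl, hT, Fintype.card_fin]; omega
  have htot := fk_total (s := s) G hcard T hT _ hm
  let F : T → Finset (Finset (Fin n)) := fun i =>
    (Finset.powersetCard l Tᶜ).filter (fun A => insert (i : Fin n) A ∈ G)
  have hFm : ∀ i A, A ∈ F i ↔ (A ⊆ Tᶜ ∧ A.card = l) ∧ insert (i : Fin n) A ∈ G := by
    intro i A; simp only [F, Finset.mem_filter, Finset.mem_powersetCard]
  have hF0sub : G.filter (fun A => Disjoint A T) ⊆ Finset.powersetCard (l + 1) Tᶜ := by
    intro A hA
    obtain ⟨hA, hd⟩ := Finset.mem_filter.1 hA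
    exact Finset.mem_powersetCard.2
      ⟨(Finset.subset_compl_iff_disjoint_right).2 hd, hcard A hA⟩
  have hshadow : (G.filter (fun A => Disjoint A T)).card ≤
      s * (G.filter (fun A => Disjoint A T)).shadow.card := by
    apply fk_shadow s Tᶜ (l + 1) (by omega) _ hF0sub
    · intro A hA y hy x hx hxA hxy
      obtain ⟨hA, hd⟩ := Finset.mem_filter.1 hA
      have hxT := Finset.mem_compl.1 hx
      refine Finset.mem_filter.2 ⟨hst x y hxy hxT (Finset.disjoint_left.1 hd hy) A hA hy hxA, ?_⟩
      rw [Finset.disjoint_insert_left]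
      exact ⟨hxT, Finset.disjoint_of_subset_left (Finset.erase_subset _ _) hd⟩
    · intro f hf
      exact hNM f (fun i => (Finset.mem_filter.1 (hf i)).1)
  have hshsub : (G.filter (fun A => Disjoint A T)).shadow ⊆
      (Finset.powersetCard l Tᶜ).filter (fun A => ∀ i, A ∈ F i) := by
    intro B hB
    obtain ⟨A, hA, a, ha, rfl⟩ := Finset.mem_shadow_iff.1 hB
    obtain ⟨hAT, hAc⟩ := Finset.mem_powersetCard.1 (hF0sub hA)
    obtain ⟨hA, hd⟩ := Finset.mem_filter.1 hA
    have h1 : A.erase a ⊆ Tᶜ := (Finset.erase_subset _ _).trans hAT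
    have h2 : (A.erase a).card = l := by rw [Finset.card_erase_of_mem ha, hAc]; omega
    refine Finset.mem_filter.2 ⟨Finset.mem_powersetCard.2 ⟨h1, h2⟩, fun i => ?_⟩
    exact (hFm i _).2 ⟨⟨h1, h2⟩, hE A hA hd a ha i i.2⟩
  have hsx := hshadow.trans (Nat.mul_le_mul_left s (Finset.card_le_card hshsub))
  have hFsh : ∀ i, ∀ A ∈ F i, ∀ y ∈ A, ∀ x ∈ Tᶜ, x ∉ A → x < y →
      insert x (A.erase y) ∈ F i := by
    intro i A hA y hy x hx hxA hxy
    obtain ⟨⟨hAT, hAc⟩, hAG⟩ := (hFm i A).1 hA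
    have hxT := Finset.mem_compl.1 hx
    have hyT := Finset.mem_compl.1 (hAT hy)
    have hxi : x ≠ i := fun h => hxT (h ▸ i.2)
    have hyi : (i : Fin n) ≠ y := fun h => hyT (h ▸ i.2)
    refine (hFm i _).2 ⟨⟨?_, ?_⟩, ?_⟩
    · exact Finset.insert_subset hx ((Finset.erase_subset _ _).trans hAT)
    · rw [Finset.card_insert_of_notMem (fun h => hxA (Finset.mem_of_mem_erase h)),
        Finset.card_erase_of_mem hy]
      have := Finset.card_pos.2 ⟨y, hy⟩
      omega
    · have := hst x y hxy hxT hyT _ hAG (Finset.mem_insert_of_mem hy) (by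
        rw [Finset.mem_insert, not_or]; exact ⟨hxi, hxA⟩)
      rwa [Finset.erase_insert_of_ne hyi, Finset.insert_comm] at this
  have hFne : ∀ i, (F i).Nonempty := by
    intro i
    obtain ⟨A, hA, hAT⟩ := hne i i.2
    have hiA : (i : Fin n) ∈ A := by
      have : (i : Fin n) ∈ A ∩ T := by rw [hAT]; simp
      exact (Finset.mem_inter.1 this).1
    refine ⟨A.erase i, (hFm i _).2 ⟨⟨?_, ?_⟩, ?_⟩⟩
    · intro z hz
      rw [Finset.mem_compl]
      intro hzT
      have : z ∈ A ∩ T := Finset.mem_inter.2 ⟨Finset.mem_of_mem_erase hz, hzT⟩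
      rw [hAT, Finset.mem_singleton] at this
      exact Finset.ne_of_mem_erase hz this
    · rw [Finset.card_erase_of_mem hiA, hcard A hA]; omega
    · rwa [Finset.insert_erase hiA]
  have hB : ∃ B, ∀ i, B ∈ F i := by
    have hTne : T.Nonempty := Finset.card_pos.1 (by omega)
    obtain ⟨i0, hi0⟩ := hTne
    choose A hAF hA using fun i => fk_init Tᶜ (F i) (hFne i) (hFsh i)
    refine ⟨A ⟨i0, hi0⟩, fun i => ?_⟩
    have e1 := ((hFm _ _).1 (hAF i)).1
    have e2 := ((hFm _ _).1 (hAF ⟨i0, hi0⟩)).1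
    rw [fk_init_unique Tᶜ (A ⟨i0, hi0⟩) (A i) e2.1 e1.1 (by rw [e1.2, e2.2]) (hA _) (hA _)]
    exact hAF i
  obtain ⟨B, hB⟩ := hB
  have hcross : ∀ f : T → Finset (Fin n), (∀ i, f i ∈ F i) →
      ¬ Pairwise fun a b => Disjoint (f a) (f b) := by
    intro f hf hd
    let e : Fin (s + 1) ≃ T := (T.equivFinOfCardEq hT).symm
    refine hNM (fun j => insert ((e j : T) : Fin n) (f (e j)))
      (fun j => ((hFm _ _).1 (hf (e j))).2) ?_
    intro a b hab
    have hab' : e a ≠ e b := e.injective.ne hab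
    show Disjoint (insert ((e a : T) : Fin n) (f (e a))) (insert ((e b : T) : Fin n) (f (e b)))
    have ha := ((hFm _ _).1 (hf (e a))).1.1
    have hb := ((hFm _ _).1 (hf (e b))).1.1
    rw [Finset.disjoint_insert_left, Finset.disjoint_insert_right, Finset.mem_insert, not_or]
    refine ⟨⟨fun h => hab' (Subtype.ext h), fun h => ?_⟩, fun h => ?_, hd hab'⟩
    · exact Finset.mem_compl.1 (hb h) (e a).2
    · exact Finset.mem_compl.1 (ha h) (e b).2
  have hb := fk_bound F s u l hs hu (by simpa using hT) hcross Tᶜ hm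
    (fun i => Finset.filter_subset _ _) B hB
  rw [Nat.choose_succ_succ]
  change _ ≤ _ + (_ + ∑ i : T, (F i).card) at htot
  zify at htot hsx
  push_cast
  have hu0 : (0 : ℤ) ≤ u := by positivity
  have e1 := mul_le_mul_of_nonneg_left htot hu0
  have e2 := mul_le_mul_of_nonneg_left hsx hu0
  linarith

/-- Theorem 10 (Frankl–Kupavskii stability theorem): fix integers `s, k ≥ 2` and
`u ≥ s + 1`, and let `n = (u+s-1)(k-1) + s + k`. Then any family `G` of
`k`-subsets of `[n]` with matching number `ν(G) = s` and covering number
`τ(G) ≥ s + 1` satisfies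
`|G| ≤ C(n,k) - C(n-s,k) - ((u-s-1)/u)·C(n-s-k, k-1)`. -/
theorem FK_stability (s k u n : ℕ) (hs : 2 ≤ s) (hk : 2 ≤ k) (hu : s + 1 ≤ u)
    (hn : n = (u + s - 1) * (k - 1) + s + k)
    (G : Finset (Finset (Fin n)))
    (hcard : ∀ A ∈ G, A.card = k)
    (hmatch_le : ∀ M ⊆ G, (∀ A ∈ M, ∀ B ∈ M, A ≠ B → Disjoint A B) → M.card ≤ s)
    (hmatch_eq : ∃ M ⊆ G, (∀ A ∈ M, ∀ B ∈ M, A ≠ B → Disjoint A B) ∧ M.card = s)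
    (hcover : ∀ S : Finset (Fin n), (∀ A ∈ G, (S ∩ A).Nonempty) → s + 1 ≤ S.card) :
    (G.card : ℝ) ≤ (n.choose k : ℝ) - ((n - s).choose k : ℝ) -
      ((u : ℝ) - (s : ℝ) - 1) / (u : ℝ) * ((n - s - k).choose (k - 1) : ℝ) := by
  classical
  obtain ⟨l, rfl⟩ : ∃ l, k = l + 1 := ⟨k - 1, by omega⟩
  have hn' : n = (u + s) * l + (s + 1) := by
    obtain ⟨v, hv⟩ : ∃ v, u + s = v + 1 := ⟨u + s - 1, by omega⟩
    rw [hv] at hn ⊢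
    simp only [Nat.add_sub_cancel] at hn
    rw [hn]; ring
  have hns : n - s = (u + s) * l + 1 := by omega
  have hnsk : n - s - (l + 1) = (u + s - 1) * l := by
    simp only [Nat.add_sub_cancel] at hn
    omega
  have hNM : FkNM s G := by
    intro f hf hd
    have hinj : Function.Injective f := by
      intro a b hab
      by_contra hne
      have h1 := hd hne
      simp only [hab, disjoint_self, Finset.bot_eq_empty] at h1
      have h2 := hcard _ (hf b)
      rw [h1] at h2
      simp at h2
    have := hmatch_le (Finset.univ.image f) (by
      intro A hA
      obtain ⟨i, _, rfl⟩ := Finset.mem_image.1 hA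
      exact hf i) (by
      intro A hA B hB hAB
      obtain ⟨i, _, rfl⟩ := Finset.mem_image.1 hA
      obtain ⟨j, _, rfl⟩ := Finset.mem_image.1 hB
      exact hd (fun h => hAB (by rw [h])))
    rw [Finset.card_image_of_injective _ hinj] at this
    simp at this
  have main : (u : ℤ) * G.card ≤ u * (n.choose (l + 1)) - u * (((u + s) * l + 1).choose (l + 1))
      - (u - s - 1) * (((u + s - 1) * l).choose l) := by
    obtain ⟨H, ⟨hHc, hHk, hHNM, hHcov⟩, hHsh⟩ := fk_min (fun H => H.card = G.card ∧
      (∀ A ∈ H, A.card = l + 1) ∧ FkNM s H ∧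
      ∀ S : Finset (Fin n), (∀ A ∈ H, (S ∩ A).Nonempty) → s + 1 ≤ S.card) G
      ⟨rfl, hcard, hNM, hcover⟩
    by_cases hT : ∃ T : Finset (Fin n), T.card ≤ s + 1 ∧ ∀ A ∈ H, (T ∩ A).Nonempty
    · obtain ⟨T, hTc, hT⟩ := hT
      have hTc : T.card = s + 1 := le_antisymm hTc (hHcov T hT)
      have hHne : ∀ i ∈ T, ∃ A ∈ H, A ∩ T = {i} := by
        intro i hi
        by_contra hcon
        push Not at hcon
        have := hHcov (T.erase i) (by
          intro A hA
          by_contra hem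
          rw [Finset.not_nonempty_iff_eq_empty] at hem
          apply hcon A hA
          obtain ⟨z, hz⟩ := hT A hA
          have hsub : A ∩ T ⊆ {i} := by
            intro w hw
            rw [Finset.mem_inter] at hw
            rw [Finset.mem_singleton]
            by_contra hwi
            have : w ∈ T.erase i ∩ A :=
              Finset.mem_inter.2 ⟨Finset.mem_erase.2 ⟨hwi, hw.2⟩, hw.1⟩
            rw [hem] at this
            simp at this
          rw [Finset.inter_comm] at hz
          have hzi := Finset.mem_singleton.1 (hsub hz)
          apply Finset.Subset.antisymm hsub
          rw [Finset.singleton_subset_iff, ← hzi]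
          exact hz)
        rw [Finset.card_erase_of_mem hi] at this
        omega
      obtain ⟨K, ⟨hKc, hKk, hKNM, hKT, hKne⟩, hKsh⟩ := fk_min (fun K => K.card = G.card ∧
        (∀ A ∈ K, A.card = l + 1) ∧ FkNM s K ∧ (∀ A ∈ K, (A ∩ T).Nonempty) ∧
        ∀ i ∈ T, ∃ A ∈ K, A ∩ T = {i}) H
        ⟨hHc, hHk, hHNM, fun A hA => by rw [Finset.inter_comm]; exact hT A hA, hHne⟩
      rw [← hKc]
      refine fk_core s l u n hs hu hn' K hKk hKNM T hTc ?_ hKne ?_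
      · intro x y hxy hx hy
        have hphi : ∀ A, fkPhi x y K A ∩ T = A ∩ T := by
          intro A
          unfold fkPhi
          split_ifs with h
          · rw [fk_sw_eq x y A h.1 h.2.1]
            ext z
            simp only [Finset.mem_inter, Finset.mem_insert, Finset.mem_erase]
            grind
          · rfl
        refine hKsh x y hxy ⟨by rw [fk_shift_card, hKc], fk_shift_sized x y K hKk,
          fk_shift_nm x y K hKNM, ?_, ?_⟩
        · intro A hA
          obtain ⟨B, hB, rfl⟩ := Finset.mem_image.1 hA
          rw [hphi]; exact hKT B hB
        · intro i hi
          obtain ⟨A, hA, hAT⟩ := hKne i hi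
          exact ⟨_, Finset.mem_image_of_mem _ hA, by rw [hphi, hAT]⟩
      · intro A hA hd
        exfalso
        exact (hKT A hA).ne_empty (Finset.disjoint_iff_inter_eq_empty.1 hd)
    · push Not at hT
      have hst : ∀ x y, x < y → ∀ A ∈ H, y ∈ A → x ∉ A → insert x (A.erase y) ∈ H := by
        intro x y hxy
        refine hHsh x y hxy ⟨by rw [fk_shift_card, hHc], fk_shift_sized x y H hHk,
          fk_shift_nm x y H hHNM, ?_⟩
        intro S hS
        by_contra hcon
        obtain ⟨A, hA, hAe⟩ := hT (insert y S) ((Finset.card_insert_le _ _).trans (by omega))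
        have := fk_shift_cover x y H S hS A hA
        rw [hAe] at this
        simp at this
      let T : Finset (Fin n) := Finset.univ.filter (fun i => (i : ℕ) < s + 1)
      have hTm : ∀ i, i ∈ T ↔ (i : ℕ) < s + 1 := by intro i; simp [T]
      have hTc : T.card = s + 1 := by
        have : T.card = (Finset.range (s + 1)).card := by
          apply Finset.card_bij (fun (i : Fin n) _ => (i : ℕ))
          · intro i hi; simpa using (hTm i).1 hi
          · intro i _ j _ h; exact Fin.ext h
          · intro b hb
            rw [Finset.mem_range] at hb
            exact ⟨⟨b, by omega⟩, (hTm _).2 hb, rfl⟩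
        rw [this, Finset.card_range]
      have hE : ∀ A ∈ H, Disjoint A T → ∀ a ∈ A, ∀ i ∈ T, insert i (A.erase a) ∈ H := by
        intro A hA hd a ha i hi
        have haT := Finset.disjoint_left.1 hd ha
        have hiA := Finset.disjoint_right.1 hd hi
        rw [hTm] at haT hi
        exact hst i a (Fin.lt_def.2 (by omega)) A hA ha hiA
      rw [← hHc]
      refine fk_core s l u n hs hu hn' H hHk hHNM T hTc
        (fun x y hxy _ _ => hst x y hxy) ?_ hE
      intro i hi
      obtain ⟨A, hA, hAe⟩ := hT T hTc.le
      have hd : Disjoint A T := by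
        rw [Finset.disjoint_iff_inter_eq_empty, Finset.inter_comm]; exact hAe
      obtain ⟨a, ha⟩ : A.Nonempty := Finset.card_pos.1 (by rw [hHk A hA]; omega)
      refine ⟨_, hE A hA hd a ha i hi, ?_⟩
      ext z
      have := fun h : z ∈ A => Finset.disjoint_left.1 hd h
      simp only [Finset.mem_inter, Finset.mem_insert, Finset.mem_erase, Finset.mem_singleton]
      grind
  rw [hnsk, hns, Nat.add_sub_cancel]
  have hu0 : (0 : ℝ) < u := by
    have : 0 < u := by omega
    exact_mod_cast this
  have mainR : (u : ℝ) * G.card ≤ u * (n.choose (l + 1)) -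
      u * (((u + s) * l + 1).choose (l + 1))
      - (u - s - 1) * (((u + s - 1) * l).choose l) := by exact_mod_cast main
  refine le_of_mul_le_mul_left (mainR.trans (le_of_eq ?_)) hu0
  field_simp
end
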